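/- arXiv:0903.4637 — 4 statements merged into one kernel-verified Lean document; each statement's English description precedes it below -/
import Mathlib

section
/- Let C be a convex body in E^d that is symmetric about the origin (C = −C), and let n ≥ 1. Suppose C is sliced by n−1 hyperplane cuts H_i = {x : ⟨x, u_i⟩ = t_i} (i = 1, ..., n−1, with each u_i a unit vector), the pieces being the sets C ∩ ⋂_{i} {x : ε_i(⟨x,u_i⟩ − t_i) ≥ 0} over all choices of signs ε ∈ {+1,−1}^{n−1}. Then there exists a choice of signs ε and a translation vector v such that v + (1/n)·C is contained in the corresponding piece. -/
open scoped RealInnerProductSpace Pointwise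

namespace BallPlank

open Matrix

variable {ι : Type*} [Fintype ι] [DecidableEq ι]

/-- contractions of Euclidean space, as matrices -/
def Contr (U : Matrix ι ι ℝ) : Prop := ∀ x : ι → ℝ, (U *ᵥ x) ⬝ᵥ (U *ᵥ x) ≤ x ⬝ᵥ x

theorem dot_nonneg (x : ι → ℝ) : 0 ≤ x ⬝ᵥ x :=
  Finset.sum_nonneg fun i _ => mul_self_nonneg (x i)

theorem contr_transpose {U : Matrix ι ι ℝ} (hU : Contr U) : Contr Uᵀ := by
  intro y
  have h1 := hU (Uᵀ *ᵥ y)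
  have h2 := dot_nonneg (U *ᵥ (Uᵀ *ᵥ y) - y)
  have h3 : (U *ᵥ (Uᵀ *ᵥ y)) ⬝ᵥ y = (Uᵀ *ᵥ y) ⬝ᵥ (Uᵀ *ᵥ y) := by
    rw [dotProduct_comm, dotProduct_mulVec, ← mulVec_transpose]
  simp only [sub_dotProduct, dotProduct_sub] at h2
  rw [dotProduct_comm y, h3] at h2
  linarith

theorem exists_bound (M : Matrix ι ι ℝ) :
    ∃ c : ℝ, 0 ≤ c ∧ ∀ x : ι → ℝ, (M *ᵥ x) ⬝ᵥ (M *ᵥ x) ≤ c * (x ⬝ᵥ x) := by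
  refine ⟨∑ i, ∑ j, M i j ^ 2, by positivity, fun x => ?_⟩
  rw [Finset.sum_mul]
  refine Finset.sum_le_sum fun i _ => ?_
  have := Finset.sum_mul_sq_le_sq_mul_sq Finset.univ (M i) x
  simp only [mulVec, dotProduct]
  calc _ = (∑ j, M i j * x j) ^ 2 := by ring
    _ ≤ _ := this
    _ = _ := by simp only [pow_two]

theorem entry_bound {U : Matrix ι ι ℝ} (hU : Contr U) (i j : ι) : U i j ∈ Set.Icc (-1 : ℝ) 1 := by
  have h := hU (Pi.single j 1)
  rw [mulVec_single_one] at h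
  have h1 : (Pi.single j 1 : ι → ℝ) ⬝ᵥ Pi.single j 1 = 1 := by simp
  rw [h1] at h
  have h2 : U i j * U i j ≤ U.col j ⬝ᵥ U.col j :=
    Finset.single_le_sum (f := fun i => U.col j i * U.col j i)
      (fun i _ => mul_self_nonneg _) (Finset.mem_univ i)
  constructor <;> nlinarith

theorem isCompact_contr : IsCompact {U : Matrix ι ι ℝ | Contr U} := by
  have hc : IsCompact (Set.pi Set.univ fun _ : ι => Set.pi Set.univ fun _ : ι => Set.Icc (-1 : ℝ) 1) :=
    isCompact_univ_pi fun _ => isCompact_univ_pi fun _ => isCompact_Icc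
  refine IsCompact.of_isClosed_subset hc ?_ ?_
  · simp only [Contr, Set.ofPred_forall]
    refine isClosed_iInter fun x => isClosed_le ?_ continuous_const
    have : Continuous fun U : Matrix ι ι ℝ => U *ᵥ x :=
      Continuous.matrix_mulVec continuous_id continuous_const
    exact this.dotProduct this
  · intro U hU i _ j _
    exact entry_bound hU i j

theorem contr_convex {U V : Matrix ι ι ℝ} (hU : Contr U) (hV : Contr V) {s : ℝ}
    (h0 : 0 ≤ s) (h1 : s ≤ 1) : Contr ((1 - s) • U + s • V) := by
  intro x
  have h2 := dot_nonneg (U *ᵥ x - V *ᵥ x)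
  have hu := hU x
  have hv := hV x
  simp only [add_mulVec, smul_mulVec, sub_dotProduct, dotProduct_sub, add_dotProduct,
    dotProduct_add, smul_dotProduct, dotProduct_smul, smul_eq_mul] at *
  rw [dotProduct_comm (V *ᵥ x) (U *ᵥ x)] at *
  nlinarith [mul_nonneg h0 (sub_nonneg.2 h1), mul_nonneg (mul_nonneg h0 (sub_nonneg.2 h1)) h2,
    mul_le_mul_of_nonneg_left hu (sub_nonneg.2 h1), mul_le_mul_of_nonneg_left hv h0]

/-- first-order optimality for a product -/
theorem first_order {r : ι → ℝ}
    (h : ∀ s : ℝ, 0 < s → s ≤ 1 → (∀ i, 0 < 1 + s * r i) → ∏ i, (1 + s * r i) ≤ 1) :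
    ∑ i, r i ≤ 0 := by
  have hpos : ∀ᶠ s in nhdsWithin (0 : ℝ) (Set.Ioi 0), ∀ i, 0 < 1 + s * r i := by
    rw [Filter.eventually_all]
    intro i
    have : Filter.Tendsto (fun s : ℝ => 1 + s * r i) (nhdsWithin 0 (Set.Ioi 0)) (nhds (1 + 0 * r i)) :=
      (Continuous.tendsto (by fun_prop) 0).mono_left nhdsWithin_le_nhds
    exact this.eventually (lt_mem_nhds (by simp))
  have hlim : Filter.Tendsto (fun s : ℝ => ∑ i, r i / (1 + s * r i)) (nhdsWithin 0 (Set.Ioi 0))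
      (nhds (∑ i, r i / (1 + 0 * r i))) := by
    refine Filter.Tendsto.mono_left ?_ nhdsWithin_le_nhds
    refine tendsto_finsetSum _ fun i _ => ?_
    refine Filter.Tendsto.div tendsto_const_nhds (Continuous.tendsto (by fun_prop) 0) (by simp)
  simp only [zero_mul, add_zero, div_one] at hlim
  refine le_of_tendsto hlim ?_
  filter_upwards [hpos, self_mem_nhdsWithin,
    nhdsWithin_le_nhds (gt_mem_nhds (show (0 : ℝ) < 1 by norm_num))] with s hs hs0 hs1
  have hs0 : 0 < s := hs0
  have h1 := h s hs0 (le_of_lt hs1) hs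
  have h2 : Real.log (∏ i, (1 + s * r i)) ≤ 0 :=
    Real.log_nonpos (Finset.prod_nonneg fun i _ => (hs i).le) h1
  rw [Real.log_prod (fun i _ => (hs i).ne')] at h2
  have h3 : s * ∑ i, r i / (1 + s * r i) ≤ 0 := by
    rw [Finset.mul_sum]
    refine le_trans (Finset.sum_le_sum fun i _ => ?_) h2
    have := Real.one_sub_inv_le_log_of_pos (hs i)
    refine le_trans (le_of_eq ?_) this
    have := (hs i).ne'
    field_simp
    ring
  by_contra hcon
  push Not at hcon
  nlinarith [mul_pos hs0 hcon]

theorem exists_opt (A : Matrix ι ι ℝ) (hA : ∀ i, A i i = 1) :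
    ∃ (U : Matrix ι ι ℝ) (θ : ι → ℝ), Contr U ∧ (∀ i, 0 < θ i) ∧
      (∀ i, θ i * (A * U) i i = 1) ∧
      ∀ V, Contr V → (diagonal θ * A * V).trace ≤ (Fintype.card ι : ℝ) := by
  have hcl : IsClosed {U : Matrix ι ι ℝ | ∀ i, 0 ≤ (A * U) i i} := by
    simp only [Set.ofPred_forall]
    refine isClosed_iInter fun i => isClosed_le continuous_const ?_
    exact (Continuous.matrix_mul continuous_const continuous_id).matrix_elem i i
  have hK := isCompact_contr (ι := ι) |>.inter_right hcl
  have h1 : (1 : Matrix ι ι ℝ) ∈ {U : Matrix ι ι ℝ | Contr U} ∩ {U | ∀ i, 0 ≤ (A * U) i i} :=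
    ⟨fun x => by simp, fun i => by simp [hA]⟩
  obtain ⟨U, ⟨hUc, hU0⟩, hmax⟩ := hK.exists_isMaxOn ⟨1, h1⟩
    (f := fun U => ∏ i, (A * U) i i)
    (continuous_finsetProd _ fun i _ =>
      (Continuous.matrix_mul continuous_const continuous_id).matrix_elem i i).continuousOn
  have hge : 1 ≤ ∏ i, (A * U) i i := by
    have := hmax h1
    simpa [hA] using this
  have hpos : ∀ i, 0 < (A * U) i i := by
    intro i
    refine lt_of_le_of_ne (hU0 i) fun h => ?_
    rw [Finset.prod_eq_zero (f := fun i => (A * U) i i) (Finset.mem_univ i) h.symm] at hge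
    linarith
  refine ⟨U, fun i => ((A * U) i i)⁻¹, hUc, fun i => inv_pos.2 (hpos i),
    fun i => inv_mul_cancel₀ (hpos i).ne', fun V hV => ?_⟩
  have key := first_order (r := fun i => ((A * U) i i)⁻¹ * (A * V) i i - 1) ?_
  · simp only [Finset.sum_sub_distrib, Finset.sum_const, Finset.card_univ, nsmul_eq_mul, mul_one] at key
    rw [Matrix.mul_assoc]
    simp only [trace, diag, diagonal_mul]
    linarith
  · intro s hs hs1 hr
    have hW := contr_convex hUc hV hs.le hs1
    have he : ∀ i, (A * ((1 - s) • U + s • V)) i i =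
        (A * U) i i * (1 + s * (((A * U) i i)⁻¹ * (A * V) i i - 1)) := by
      intro i
      have := (hpos i).ne'
      simp only [Matrix.mul_add, Matrix.mul_smul, Matrix.add_apply, Matrix.smul_apply, smul_eq_mul]
      field_simp
      ring
    have hm := hmax (show _ ∈ _ from ⟨hW, fun i => by
      rw [he i]; exact (mul_pos (hpos i) (hr i)).le⟩)
    simp only [Set.mem_ofPred_eq, he, Finset.prod_mul_distrib] at hm
    by_contra hcon
    push Not at hcon
    nlinarith

theorem perturb {B U G : Matrix ι ι ℝ} {m c : ℝ} (hc : 0 ≤ c)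
    (hopt : ∀ V, Contr V → (B * V).trace ≤ m) (hU : (B * U).trace = m)
    (hG : ∀ (τ : ℝ) (x : ι → ℝ), 0 < τ →
      ((U + τ • G) *ᵥ x) ⬝ᵥ ((U + τ • G) *ᵥ x) ≤ (1 + c * τ ^ 2) * (x ⬝ᵥ x)) :
    (B * G).trace ≤ 0 := by
  have h : ∀ τ : ℝ, 0 < τ → (B * G).trace ≤ m * c * τ := by
    intro τ hτ
    have hk : 0 < 1 + c * τ ^ 2 := by positivity
    have hV : Contr ((1 + c * τ ^ 2)⁻¹ • (U + τ • G)) := by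
      intro x
      rw [smul_mulVec, smul_dotProduct, dotProduct_smul, smul_eq_mul, smul_eq_mul]
      have := hG τ x hτ
      have hx := dot_nonneg x
      rw [← mul_assoc, ← mul_inv, inv_mul_le_iff₀ (by positivity)]
      refine this.trans (mul_le_mul_of_nonneg_right ?_ hx)
      nlinarith [mul_nonneg hc (sq_nonneg τ)]
    have := hopt _ hV
    rw [Matrix.mul_smul, trace_smul, Matrix.mul_add, trace_add, Matrix.mul_smul, trace_smul, hU,
      smul_eq_mul, smul_eq_mul, inv_mul_le_iff₀ hk] at this
    have h2 : τ * (B * G).trace ≤ τ * (m * c * τ) := by linarith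
    exact le_of_mul_le_mul_left h2 hτ
  have hlim : Filter.Tendsto (fun τ : ℝ => m * c * τ) (nhdsWithin 0 (Set.Ioi 0)) (nhds (m * c * 0)) :=
    (Continuous.tendsto (by fun_prop) 0).mono_left nhdsWithin_le_nhds
  rw [mul_zero] at hlim
  refine ge_of_tendsto hlim ?_
  filter_upwards [self_mem_nhdsWithin] with τ hτ using h τ hτ

theorem opt_symm {B U : Matrix ι ι ℝ} {m : ℝ} (hUc : Contr U)
    (hopt : ∀ V, Contr V → (B * V).trace ≤ m) (hU : (B * U).trace = m) :
    (B * U).IsSymm := by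
  have key : ∀ i j, (B * U) j i ≤ (B * U) i j := by
    intro i j
    set X : Matrix ι ι ℝ := single i j 1 - single j i 1 with hX
    obtain ⟨c, hc, hcb⟩ := exists_bound X
    have hXT : ∀ x, x ⬝ᵥ (X *ᵥ x) = 0 := by
      intro x
      have : x ⬝ᵥ (X *ᵥ x) = - (x ⬝ᵥ (X *ᵥ x)) := by
        conv_lhs => rw [dotProduct_mulVec, ← mulVec_transpose, dotProduct_comm]
        rw [← dotProduct_neg, ← neg_mulVec]
        congr 2
        simp [hX, transpose_single]
      linarith
    have := perturb (B := B) (U := U) (G := U * X) hc hopt hU ?_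
    · rw [← Matrix.mul_assoc, hX, Matrix.mul_sub, trace_sub, trace_mul_single, trace_mul_single] at this
      simp at this
      linarith
    · intro τ x _
      have e : (U + τ • (U * X)) *ᵥ x = U *ᵥ (x + τ • (X *ᵥ x)) := by
        simp [add_mulVec, mulVec_add, smul_mulVec, mulVec_smul, mulVec_mulVec]
      rw [e]
      refine (hUc _).trans ?_
      simp only [add_dotProduct, dotProduct_add, smul_dotProduct, dotProduct_smul, smul_eq_mul]
      rw [dotProduct_comm (X *ᵥ x) x, hXT]
      nlinarith [hcb x, mul_le_mul_of_nonneg_left (hcb x) (sq_nonneg τ)]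
  ext i j
  exact le_antisymm (key i j) (key j i)

theorem opt_sum {A U : Matrix ι ι ℝ} {θ : ι → ℝ} (hA : ∀ i, A i i = 1) (hUc : Contr U)
    (h1 : ∀ i, θ i * (A * U) i i = 1)
    (hopt : ∀ V, Contr V → (diagonal θ * A * V).trace ≤ (Fintype.card ι : ℝ)) :
    ∑ i, θ i ^ 2 ≤ Fintype.card ι := by
  set D : Matrix ι ι ℝ := diagonal θ with hD
  set G : Matrix ι ι ℝ := (2 : ℝ) • D - U * (D * D) - U with hGdef
  have hU : (D * A * U).trace = Fintype.card ι := by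
    rw [Matrix.mul_assoc]
    simp [trace, diag, hD, diagonal_mul, h1]
  obtain ⟨c1, hc1, hb1⟩ := exists_bound (D * D)
  obtain ⟨c2, hc2, hb2⟩ := exists_bound G
  have hp := perturb (G := G) (add_nonneg hc1 hc2) hopt hU ?_
  · have e1 : (D * A * D).trace = ∑ i, θ i ^ 2 := by
      simp [trace, diag, hD, diagonal_mul, mul_diagonal, hA, pow_two]
    have e2 : (D * A * (U * (D * D))).trace = ∑ i, θ i ^ 2 := by
      rw [← Matrix.mul_assoc, Matrix.mul_assoc D A U, hD, diagonal_mul_diagonal]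
      simp [trace, diag, diagonal_mul, mul_diagonal, h1, pow_two]
    rw [hGdef, Matrix.mul_sub, Matrix.mul_sub, trace_sub, trace_sub, Matrix.mul_smul, trace_smul,
      e1, e2, hU, smul_eq_mul] at hp
    linarith
  · intro τ x hτ
    set y := U *ᵥ x with hy
    set z := Uᵀ *ᵥ y with hz
    have hyx := hUc x
    have hzy := contr_transpose hUc y
    have hzx : z ⬝ᵥ x = y ⬝ᵥ y := by
      rw [hz, mulVec_transpose, ← dotProduct_mulVec]
    have hDx : x ⬝ᵥ ((D * D) *ᵥ x) = (D *ᵥ x) ⬝ᵥ (D *ᵥ x) := by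
      rw [← mulVec_mulVec, dotProduct_mulVec, ← mulVec_transpose, hD, diagonal_transpose]
    have hyG : y ⬝ᵥ (G *ᵥ x) = 2 * (y ⬝ᵥ (D *ᵥ x)) - z ⬝ᵥ ((D * D) *ᵥ x) - y ⬝ᵥ y := by
      rw [hGdef, sub_mulVec, sub_mulVec, smul_mulVec, dotProduct_sub, dotProduct_sub,
        dotProduct_smul, smul_eq_mul, ← mulVec_mulVec, dotProduct_mulVec y U, ← mulVec_transpose]
    have e : (U + τ • G) *ᵥ x = y + τ • (G *ᵥ x) := by
      rw [add_mulVec, smul_mulVec]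
    have s1 := dot_nonneg (y - D *ᵥ x)
    have s2 := dot_nonneg ((x - z) - τ • ((D * D) *ᵥ x))
    have b1 := mul_le_mul_of_nonneg_left (hb1 x) (sq_nonneg τ)
    have b2 := mul_le_mul_of_nonneg_left (hb2 x) (sq_nonneg τ)
    rw [e]
    simp only [sub_dotProduct, dotProduct_sub, add_dotProduct, dotProduct_add, smul_dotProduct,
      dotProduct_smul, smul_eq_mul] at s1 s2 ⊢
    rw [dotProduct_comm (G *ᵥ x) y, hyG]
    rw [dotProduct_comm (D *ᵥ x) y] at s1
    rw [dotProduct_comm x z, hzx, dotProduct_comm ((D * D) *ᵥ x) x,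
      dotProduct_comm ((D * D) *ᵥ x) z, hDx] at s2
    rw [← hy] at hyx
    rw [← hz] at hzy
    have s1' := mul_le_mul_of_nonneg_left s1 hτ.le
    nlinarith

theorem bang {H : Matrix ι ι ℝ} (hH : H.IsSymm) (s μ : ι → ℝ) (hs : ∀ i, 0 < s i) :
    ∃ ε : ι → ℝ, (∀ i, ε i ^ 2 = 1) ∧
      ∀ i, H i i * s i ≤ |(H *ᵥ (fun j => ε j * s j)) i - μ i| := by
  let w : (ι → Bool) → ι → ℝ := fun b j => (if b j then 1 else -1) * s j
  obtain ⟨b, -, hb⟩ := Finset.exists_max_image (Finset.univ : Finset (ι → Bool))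
    (fun b => w b ⬝ᵥ (H *ᵥ w b) - 2 * (w b ⬝ᵥ μ)) Finset.univ_nonempty
  refine ⟨fun j => if b j then 1 else -1, fun i => by dsimp only; split_ifs <;> norm_num, fun i => ?_⟩
  have h := hb (Function.update b i (!b i)) (Finset.mem_univ _)
  obtain ⟨e, he, hew⟩ : ∃ e : ℝ, e ^ 2 = 1 ∧ e = if b i then 1 else -1 :=
    ⟨_, by split_ifs <;> norm_num, rfl⟩
  have hw : w (Function.update b i (!b i)) = w b + (-(2 * e * s i)) • Pi.single i 1 := by
    ext j
    by_cases hj : j = i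
    · subst hj
      simp only [w, hew]
      cases hbj : b j <;> simp [hbj] <;> ring
    · simp [w, hj]
  have hsym : w b ⬝ᵥ (H *ᵥ Pi.single i 1) = (H *ᵥ w b) i := by
    rw [dotProduct_mulVec, ← mulVec_transpose, hH.eq]
    simp
  have hii : (Pi.single i 1 : ι → ℝ) ⬝ᵥ (H *ᵥ Pi.single i 1) = H i i := by
    simp
  have hwi : (Pi.single i 1 : ι → ℝ) ⬝ᵥ (H *ᵥ w b) = (H *ᵥ w b) i := by simp
  have hmu : (Pi.single i 1 : ι → ℝ) ⬝ᵥ μ = μ i := by simp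
  simp only [hw, mulVec_add, mulVec_smul, add_dotProduct, dotProduct_add, smul_dotProduct,
    dotProduct_smul, smul_eq_mul, hsym, hii, hwi, hmu] at h
  change H i i * s i ≤ |(H *ᵥ w b) i - μ i|
  have h2 : s i * (H i i * s i) ≤ s i * (e * ((H *ᵥ w b) i - μ i)) := by
    have h4 : e ^ 2 * (s i ^ 2 * H i i) = s i ^ 2 * H i i := by rw [he, one_mul]
    nlinarith
  have h3 := le_of_mul_le_mul_left h2 (hs i)
  refine h3.trans ((le_abs_self _).trans ?_)
  rw [abs_mul]
  have : |e| = 1 := by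
    rw [← sq_eq_sq₀ (abs_nonneg e) zero_le_one, sq_abs, he]; norm_num
  rw [this, one_mul]

theorem matrix_plank (A : Matrix ι ι ℝ) (hA : ∀ i, A i i = 1) (m : ι → ℝ) :
    ∃ l : ι → ℝ, ∑ i, |l i| ≤ Fintype.card ι ∧ ∀ i, 1 ≤ |(A *ᵥ l) i - m i| := by
  obtain ⟨U, θ, hUc, hθ, h1, hopt⟩ := exists_opt A hA
  have hU : (diagonal θ * A * U).trace = Fintype.card ι := by
    rw [Matrix.mul_assoc]
    simp [trace, diag, diagonal_mul, h1]
  have hsum := opt_sum hA hUc h1 hopt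
  have hsymm := opt_symm hUc hopt hU
  obtain ⟨ε, hε, hb⟩ := bang hsymm θ (fun i => θ i * m i) hθ
  refine ⟨U *ᵥ (fun j => ε j * θ j), ?_, fun i => ?_⟩
  · set l := U *ᵥ (fun j => ε j * θ j) with hl
    have h2 : ∑ i, l i ^ 2 ≤ Fintype.card ι := by
      have := hUc (fun j => ε j * θ j)
      rw [← hl] at this
      refine le_trans (le_of_eq ?_) (this.trans (le_trans (le_of_eq ?_) hsum))
      · simp [dotProduct, pow_two]
      · simp only [dotProduct]
        refine Finset.sum_congr rfl fun i _ => ?_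
        linear_combination (θ i) ^ 2 * hε i
    have h3 := sq_sum_le_card_mul_sum_sq (s := Finset.univ) (f := fun i => |l i|)
    simp only [sq_abs, Finset.card_univ] at h3
    have h4 : (0 : ℝ) ≤ Fintype.card ι := Nat.cast_nonneg _
    refine abs_le_of_sq_le_sq' ?_ h4 |>.2
    nlinarith
  · have h2 := hb i
    rw [Matrix.mul_assoc, ← mulVec_mulVec, ← mulVec_mulVec, mulVec_diagonal, diagonal_mul, h1 i,
      one_mul, ← mul_sub, abs_mul, abs_of_pos (hθ i), ] at h2
    exact le_of_mul_le_mul_left (by simpa using h2) (hθ i)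

end BallPlank

/-- **Ball's plank theorem** (slicing form). If an origin-symmetric convex body `C` in `ℝ^d`
is sliced by `n - 1` hyperplane cuts, then one of the resulting pieces contains a
translate of `(1/n) • C`. -/
theorem ball_plank_theorem {d n : ℕ} (hn : 1 ≤ n)
    (C : Set (EuclideanSpace ℝ (Fin d)))
    (hC : IsCompact C) (hCconv : Convex ℝ C) (hCint : (interior C).Nonempty)
    (hsymm : C = -C)
    (u : Fin (n - 1) → EuclideanSpace ℝ (Fin d)) (hu : ∀ i, ‖u i‖ = 1)
    (t : Fin (n - 1) → ℝ) :
    ∃ (ε : Fin (n - 1) → ℝ) (v : EuclideanSpace ℝ (Fin d)),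
      (∀ i, ε i = 1 ∨ ε i = -1) ∧
      (fun x => v + x) '' ((1 / (n : ℝ)) • C) ⊆
        C ∩ ⋂ i, {x | 0 ≤ ε i * (⟪x, u i⟫ - t i)} := by
  have hneg : ∀ x ∈ C, -x ∈ C := fun x hx => by
    rw [hsymm]; simpa using hx
  obtain ⟨p, hp⟩ := hCint
  have hpC := interior_subset hp
  have h0 : (0 : EuclideanSpace ℝ (Fin d)) ∈ C := by
    have := hCconv hpC (hneg p hpC) (show (0 : ℝ) ≤ 1 / 2 by norm_num)
      (show (0 : ℝ) ≤ 1 / 2 by norm_num) (by norm_num)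
    simpa using this
  have hmax : ∀ i, ∃ x ∈ C, ∀ y ∈ C, ⟪y, u i⟫ ≤ ⟪x, u i⟫ := by
    intro i
    obtain ⟨x, hx, hm⟩ := hC.exists_isMaxOn ⟨p, hpC⟩ (f := fun y => ⟪y, u i⟫)
      (by fun_prop)
    exact ⟨x, hx, fun y hy => hm hy⟩
  choose x hxC hxm using hmax
  have habs : ∀ i, ∀ y ∈ C, |⟪y, u i⟫| ≤ ⟪x i, u i⟫ := by
    intro i y hy
    have h1 := hxm i y hy
    have h2 := hxm i _ (hneg y hy)
    rw [inner_neg_left] at h2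
    exact abs_le.2 ⟨by linarith, h1⟩
  have hpos : ∀ i, 0 < ⟪x i, u i⟫ := by
    intro i
    have hcont : Filter.Tendsto (fun s : ℝ => p + s • u i) (nhdsWithin 0 (Set.Ioi 0)) (nhds (p + (0 : ℝ) • u i)) :=
      (Continuous.tendsto (by fun_prop) 0).mono_left nhdsWithin_le_nhds
    rw [zero_smul, add_zero] at hcont
    obtain ⟨s, hsC, hs0⟩ := ((hcont.eventually (mem_interior_iff_mem_nhds.1 hp)).and
      self_mem_nhdsWithin).exists
    have hs0 : 0 < s := hs0
    have h1 := hxm i _ hsC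
    rw [inner_add_left, inner_smul_left, real_inner_self_eq_norm_sq, hu i] at h1
    have h2 := hxm i _ (hneg p hpC)
    rw [inner_neg_left] at h2
    simp at h1
    linarith
  have hn0 : (0 : ℝ) < n := by exact_mod_cast hn
  obtain ⟨l, hl1, hl⟩ := BallPlank.matrix_plank
    (Matrix.of fun k j => ⟪x j, u k⟫ / ⟪x k, u k⟫) (fun i => by simp [(hpos i).ne'])
    (fun k => n * t k / ⟪x k, u k⟫)
  have hl1' : ∑ i, |l i| ≤ (n : ℝ) - 1 := by
    simpa [Nat.cast_sub hn] using hl1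
  set v : EuclideanSpace ℝ (Fin d) := ∑ j, (l j / n) • x j with hv
  have hvk : ∀ k, ⟪x k, u k⟫ / n ≤ |⟪v, u k⟫ - t k| := by
    intro k
    have h := hl k
    have e : (Matrix.mulVec (Matrix.of fun k j => ⟪x j, u k⟫ / ⟪x k, u k⟫) l) k
        - n * t k / ⟪x k, u k⟫ = (n / ⟪x k, u k⟫) * (⟪v, u k⟫ - t k) := by
      rw [hv, sum_inner, mul_sub, Finset.mul_sum]
      simp only [Matrix.mulVec, dotProduct, Matrix.of_apply, inner_smul_left]
      congr 1
      · refine Finset.sum_congr rfl fun j _ => ?_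
        simp
        field_simp
      · ring
    rw [e, abs_mul, abs_of_pos (div_pos hn0 (hpos k))] at h
    have := hpos k
    rw [div_mul_eq_mul_div, le_div_iff₀ this, one_mul] at h
    rw [div_le_iff₀ hn0]
    linarith
  refine ⟨fun k => if 0 ≤ ⟪v, u k⟫ - t k then 1 else -1, v, fun i => by
    dsimp only; split_ifs <;> simp, ?_⟩
  rintro _ ⟨_, ⟨c, hc, rfl⟩, rfl⟩
  refine ⟨?_, ?_⟩
  · have hsx : ∀ j, ∃ y ∈ C, l j • x j = |l j| • y := by
      intro j
      rcases le_total 0 (l j) with h | h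
      · exact ⟨x j, hxC j, by rw [abs_of_nonneg h]⟩
      · exact ⟨-x j, hneg _ (hxC j), by rw [abs_of_nonpos h]; simp⟩
    choose y hyC hy using hsx
    have hmem := hCconv.sum_mem (t := (Finset.univ : Finset (Option (Option (Fin (n - 1))))))
      (w := fun o => match o with
        | none => 1 / (n : ℝ)
        | some none => 1 - 1 / (n : ℝ) - ∑ j, |l j| / (n : ℝ)
        | some (some j) => |l j| / (n : ℝ))
      (z := fun o => match o with
        | none => c
        | some none => 0
        | some (some j) => y j) ?_ ?_ ?_
    · simp only [Fintype.sum_option, smul_zero, zero_add] at hmem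
      convert hmem using 1
      change v + (1 / (n : ℝ)) • c = _
      rw [add_comm v, hv]
      refine congrArg _ ?_
      refine Finset.sum_congr rfl fun j _ => ?_
      rw [div_eq_inv_mul, mul_smul, hy, smul_smul, div_eq_inv_mul]
    · rintro (_ | _ | j) _
      · positivity
      · have : ∑ j, |l j| / (n : ℝ) ≤ (n - 1) / n := by
          rw [← Finset.sum_div]; gcongr
        rw [sub_div, div_self hn0.ne'] at this
        simpa using this
      · positivity
    · simp only [Fintype.sum_option]
      ring
    · rintro (_ | _ | j) _
      · exact hc
      · exact h0
      · exact hyC j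
  · rw [Set.mem_iInter]
    intro k
    have h1 := hvk k
    have h2 := abs_le.1 (habs k c hc)
    have e : ⟪v + (1 / (n : ℝ)) • c, u k⟫ = ⟪v, u k⟫ + ⟪c, u k⟫ / n := by
      rw [inner_add_left, inner_smul_left]
      simp
      ring
    have h3 : ⟪c, u k⟫ / n ≤ ⟪x k, u k⟫ / n := by gcongr; exact h2.2
    have h4 : -(⟪x k, u k⟫ / n) ≤ ⟪c, u k⟫ / n := by
      rw [← neg_div]; gcongr; exact h2.1
    simp only [Set.mem_ofPred_eq]
    rw [e]
    split_ifs with hs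
    · rw [abs_of_nonneg hs] at h1
      linarith
    · rw [abs_of_neg (not_le.1 hs)] at h1
      linarith
end

section
/- There is an absolute constant c > 0 with the following property: for every d ≥ 1, every convex body K in E^d, and all hyperplanes H_1, ..., H_N in E^d such that K ∩ ℤ^d ⊆ H_1 ∪ ... ∪ H_N, one has N ≥ c · w(K, ℤ^d)/d − d, where w(K, ℤ^d) is the lattice width of K. -/
open scoped RealInnerProductSpace

/-- The lattice width of a set `K ⊆ ℝ^d` with respect to the integer lattice `ℤ^d`:
the infimum over nonzero integer vectors `y` of the width of `K` in direction `y`. -/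
noncomputable def latticeWidth {d : ℕ} (K : Set (EuclideanSpace ℝ (Fin d))) : ℝ :=
  sInf {w : ℝ | ∃ y : EuclideanSpace ℝ (Fin d), y ≠ 0 ∧ (∀ i, ∃ z : ℤ, y i = (z : ℝ)) ∧
    w = sSup ((fun x => ⟪x, y⟫) '' K) - sInf ((fun x => ⟪x, y⟫) '' K)}

namespace Talata
open MvPolynomial MeasureTheory

/-- evaluation of a polynomial at a Euclidean vector -/
noncomputable def ev {d : ℕ} (Q : MvPolynomial (Fin d) ℝ) (x : EuclideanSpace ℝ (Fin d)) : ℝ :=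
  MvPolynomial.eval (fun i => x i) Q

/-- positive part of `1 - |x|^2` -/
noncomputable def wp {d : ℕ} (x : EuclideanSpace ℝ (Fin d)) : ℝ := max 0 (1 - ‖x‖ ^ 2)

/-- the polynomial `1 - |X|^2` -/
noncomputable def WW (d : ℕ) : MvPolynomial (Fin d) ℝ := 1 - ∑ i, X i * X i

section basic
variable {d : ℕ}

lemma ev_add (P Q : MvPolynomial (Fin d) ℝ) (x) : ev (P + Q) x = ev P x + ev Q x := by simp [ev]
lemma ev_sub (P Q : MvPolynomial (Fin d) ℝ) (x) : ev (P - Q) x = ev P x - ev Q x := by simp [ev]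
lemma ev_mul (P Q : MvPolynomial (Fin d) ℝ) (x) : ev (P * Q) x = ev P x * ev Q x := by simp [ev]
lemma ev_C (a : ℝ) (x : EuclideanSpace ℝ (Fin d)) : ev (C a) x = a := by simp [ev]
lemma ev_X (i : Fin d) (x : EuclideanSpace ℝ (Fin d)) : ev (X i) x = x i := by simp [ev]
lemma ev_sum {ι : Type*} (s : Finset ι) (f : ι → MvPolynomial (Fin d) ℝ) (x) :
    ev (∑ i ∈ s, f i) x = ∑ i ∈ s, ev (f i) x := by simp [ev]
lemma ev_smul (a : ℝ) (Q : MvPolynomial (Fin d) ℝ) (x) : ev (a • Q) x = a * ev Q x := by simp [ev]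

lemma ev_WW (x : EuclideanSpace ℝ (Fin d)) : ev (WW d) x = 1 - ‖x‖ ^ 2 := by
  rw [EuclideanSpace.norm_sq_eq]
  simp [ev, WW, pow_two]

lemma continuous_ev (Q : MvPolynomial (Fin d) ℝ) : Continuous (ev Q) := by
  unfold ev
  exact (MvPolynomial.continuous_eval Q).comp (by fun_prop)

lemma continuous_wp : Continuous (wp (d := d)) := by
  unfold wp; fun_prop

lemma wp_nonneg (x : EuclideanSpace ℝ (Fin d)) : 0 ≤ wp x := le_max_left _ _

lemma wp_eq_zero {x : EuclideanSpace ℝ (Fin d)} (h : 1 ≤ ‖x‖) : wp x = 0 := by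
  unfold wp; apply max_eq_left; nlinarith

lemma wp_eq {x : EuclideanSpace ℝ (Fin d)} (h : ‖x‖ ≤ 1) : wp x = 1 - ‖x‖ ^ 2 := by
  unfold wp; apply max_eq_right; nlinarith [norm_nonneg x]

lemma wp_pos {x : EuclideanSpace ℝ (Fin d)} (h : ‖x‖ < 1) : 0 < wp x := by
  rw [wp_eq h.le]; nlinarith [norm_nonneg x]

lemma hasCompactSupport_of_ball {F : Type*} [Zero F] {f : EuclideanSpace ℝ (Fin d) → F}
    (h : ∀ x, 1 ≤ ‖x‖ → f x = 0) : HasCompactSupport f := by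
  apply HasCompactSupport.intro (isCompact_closedBall (0 : EuclideanSpace ℝ (Fin d)) 1)
  intro x hx
  apply h
  simp only [Metric.mem_closedBall, dist_zero_right, not_le] at hx
  exact hx.le

lemma integrable_of_ball {f : EuclideanSpace ℝ (Fin d) → ℝ} (hc : Continuous f)
    (h : ∀ x, 1 ≤ ‖x‖ → f x = 0) : Integrable f :=
  hc.integrable_of_hasCompactSupport (hasCompactSupport_of_ball h)

lemma integrable_wev (k : ℕ) (hk : 1 ≤ k) (Q : MvPolynomial (Fin d) ℝ) :
    Integrable (fun x => wp x ^ k * ev Q x) := by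
  apply integrable_of_ball ((continuous_wp.pow k).mul (continuous_ev Q))
  intro x hx
  show wp x ^ k * ev Q x = 0
  rw [wp_eq_zero hx, zero_pow (by omega), zero_mul]

/-- the weighted integral functional -/
noncomputable def II (k : ℕ) (Q : MvPolynomial (Fin d) ℝ) : ℝ := ∫ x, wp x ^ k * ev Q x

lemma II_add {k : ℕ} (hk : 1 ≤ k) (P Q : MvPolynomial (Fin d) ℝ) :
    II k (P + Q) = II k P + II k Q := by
  unfold II
  rw [← integral_add (integrable_wev k hk P) (integrable_wev k hk Q)]
  congr 1; ext x; rw [ev_add]; ring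

lemma II_smul (k : ℕ) (a : ℝ) (Q : MvPolynomial (Fin d) ℝ) :
    II k (a • Q) = a * II k Q := by
  unfold II
  rw [← integral_const_mul]
  congr 1; ext x; rw [ev_smul]; ring

lemma II_C_mul (k : ℕ) (a : ℝ) (Q : MvPolynomial (Fin d) ℝ) :
    II k (C a * Q) = a * II k Q := by
  rw [← II_smul, MvPolynomial.smul_eq_C_mul]

lemma II_zero (k : ℕ) : II k (0 : MvPolynomial (Fin d) ℝ) = 0 := by
  have := II_smul k 0 (0 : MvPolynomial (Fin d) ℝ)
  simpa using this

lemma II_neg (k : ℕ) (Q : MvPolynomial (Fin d) ℝ) : II k (-Q) = - II k Q := by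
  have := II_smul k (-1) Q
  simpa using this

lemma II_sub {k : ℕ} (hk : 1 ≤ k) (P Q : MvPolynomial (Fin d) ℝ) :
    II k (P - Q) = II k P - II k Q := by
  rw [sub_eq_add_neg, II_add hk, II_neg]; ring

lemma II_sum {k : ℕ} (hk : 1 ≤ k) {ι : Type*} (s : Finset ι) (f : ι → MvPolynomial (Fin d) ℝ) :
    II k (∑ i ∈ s, f i) = ∑ i ∈ s, II k (f i) := by
  classical
  induction s using Finset.induction_on with
  | empty => simp [II_zero]
  | insert a s ha ih => rw [Finset.sum_insert ha, Finset.sum_insert ha, II_add hk, ih]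

lemma wp_mul (k : ℕ) (hk : 1 ≤ k) (x : EuclideanSpace ℝ (Fin d)) :
    wp x ^ k * (1 - ‖x‖ ^ 2) = wp x ^ (k + 1) := by
  rcases le_total 1 ‖x‖ with h | h
  · rw [wp_eq_zero h, zero_pow (by omega), zero_pow (by omega), zero_mul]
  · rw [pow_succ (wp x)]; congr 1; rw [wp_eq h]

lemma II_WW {k : ℕ} (hk : 1 ≤ k) (Q : MvPolynomial (Fin d) ℝ) : II k (WW d * Q) = II (k + 1) Q := by
  unfold II
  congr 1; ext x
  rw [ev_mul, ev_WW, ← mul_assoc, wp_mul k hk]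

lemma II_mono {k : ℕ} (hk : 1 ≤ k) {P Q : MvPolynomial (Fin d) ℝ}
    (h : ∀ x, ‖x‖ ≤ 1 → ev P x ≤ ev Q x) : II k P ≤ II k Q := by
  apply integral_mono (integrable_wev k hk P) (integrable_wev k hk Q)
  intro x
  show wp x ^ k * ev P x ≤ wp x ^ k * ev Q x
  rcases le_total 1 ‖x‖ with h1 | h1
  · rw [wp_eq_zero h1, zero_pow (by omega), zero_mul, zero_mul]
  · exact mul_le_mul_of_nonneg_left (h x h1) (pow_nonneg (wp_nonneg x) k)

lemma II_nonneg {k : ℕ} (hk : 1 ≤ k) {Q : MvPolynomial (Fin d) ℝ}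
    (h : ∀ x, ‖x‖ ≤ 1 → 0 ≤ ev Q x) : 0 ≤ II k Q := by
  rw [← II_zero (d := d) k]
  apply II_mono hk
  intro x hx
  have := h x hx
  simpa [ev] using this

lemma eq_zero_of_ev_ball {Q : MvPolynomial (Fin d) ℝ} (h : ∀ x, ‖x‖ < 1 → ev Q x = 0) : Q = 0 := by
  have hnear : ∀ᶠ x in nhds (0 : Fin d → ℝ), eval x Q = 0 := by
    have h1 : ∀ᶠ x in nhds (0 : Fin d → ℝ), ‖WithLp.toLp 2 x‖ < 1 := by
      have hc : Continuous (fun x : Fin d → ℝ => ‖(WithLp.toLp 2 x : EuclideanSpace ℝ (Fin d))‖) := by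
        fun_prop
      have := (hc.tendsto 0).eventually_lt_const (u := (1 : ℝ)) (by
        have : (WithLp.toLp 2 (0 : Fin d → ℝ) : EuclideanSpace ℝ (Fin d)) = 0 := rfl
        rw [this, norm_zero]; exact one_pos)
      exact this
    filter_upwards [h1] with x hx
    exact h _ hx
  rw [nhds_pi, Filter.eventually_iff] at hnear
  obtain ⟨I, hI, t, ht, hsub⟩ := Filter.mem_pi.mp hnear
  apply MvPolynomial.funext_set t
  · intro i
    exact infinite_of_mem_nhds _ (ht i)
  · intro x hx
    rw [map_zero]
    apply hsub
    intro i _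
    exact hx i (Set.mem_univ i)

lemma eq_zero_of_II {k : ℕ} (hk : 1 ≤ k) {Q : MvPolynomial (Fin d) ℝ} (h : II k (Q * Q) = 0) :
    Q = 0 := by
  have hnn : 0 ≤ fun x => wp x ^ k * ev (Q * Q) x := by
    intro x
    have : ev (Q * Q) x = ev Q x * ev Q x := ev_mul _ _ _
    show 0 ≤ wp x ^ k * ev (Q * Q) x
    rw [this]
    exact mul_nonneg (pow_nonneg (wp_nonneg x) k) (mul_self_nonneg _)
  have hc : Continuous (fun x => wp x ^ k * ev (Q * Q) x) :=
    (continuous_wp.pow k).mul (continuous_ev _)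
  have h0 := (Continuous.ae_eq_iff_eq volume hc continuous_zero).mp
    ((integral_eq_zero_iff_of_nonneg hnn (integrable_wev k hk _)).mp h)
  apply eq_zero_of_ev_ball
  intro x hx
  have h1 := congrFun h0 x
  simp only [Pi.zero_apply, ev_mul] at h1
  have := pow_pos (wp_pos hx) k
  rcases mul_eq_zero.mp h1 with h2 | h2
  · exact absurd h2 this.ne'
  · exact mul_self_eq_zero.mp h2

lemma hasDerivAt_max_pow (k : ℕ) (hk : 1 ≤ k) (t : ℝ) :
    HasDerivAt (fun s : ℝ => (max 0 s) ^ (k + 1)) ((k + 1 : ℝ) * (max 0 t) ^ k) t := by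
  rcases lt_trichotomy t 0 with h | h | h
  · have : (fun s : ℝ => (max 0 s) ^ (k + 1)) =ᶠ[nhds t] fun _ => 0 := by
      filter_upwards [gt_mem_nhds h] with s hs
      rw [max_eq_left hs.le, zero_pow (by omega)]
    rw [max_eq_left h.le, zero_pow (by omega), mul_zero]
    exact (hasDerivAt_const t (0 : ℝ)).congr_of_eventuallyEq this
  · subst h
    rw [max_self, zero_pow (by omega), mul_zero, hasDerivAt_iff_isLittleO]
    have h2 : (fun s : ℝ => (max 0 s) ^ (k + 1)) =O[nhds 0] fun s : ℝ => s ^ (k + 1) := by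
      apply Asymptotics.IsBigO.of_bound 1
      filter_upwards with s
      rw [one_mul, norm_pow, norm_pow]
      apply pow_le_pow_left₀ (norm_nonneg _)
      rcases le_total 0 s with h | h
      · rw [max_eq_right h]
      · rw [max_eq_left h]; simp
    have h3 : (fun s : ℝ => s ^ (k + 1)) =o[nhds 0] fun s : ℝ => s :=
      Asymptotics.isLittleO_pow_id (by omega)
    have := h2.trans_isLittleO h3
    simpa using this
  · have : (fun s : ℝ => (max 0 s) ^ (k + 1)) =ᶠ[nhds t] fun s => s ^ (k + 1) := by
      filter_upwards [lt_mem_nhds h] with s hs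
      rw [max_eq_right hs.le]
    rw [max_eq_right h.le]
    have h4 := hasDerivAt_pow (k + 1) t
    simp only [Nat.cast_add, Nat.cast_one, Nat.add_sub_cancel] at h4
    exact h4.congr_of_eventuallyEq this

lemma hasFDerivAt_wp_pow (k : ℕ) (hk : 1 ≤ k) (x : EuclideanSpace ℝ (Fin d)) :
    HasFDerivAt (fun x : EuclideanSpace ℝ (Fin d) => wp x ^ (k + 1))
      ((-(2 * (k + 1 : ℝ)) * wp x ^ k) • innerSL ℝ x) x := by
  have h1 : HasFDerivAt (fun x : EuclideanSpace ℝ (Fin d) => 1 - ‖x‖ ^ 2)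
      (-(2 • innerSL ℝ x)) x := by
    exact ((hasStrictFDerivAt_norm_sq x).hasFDerivAt).const_sub 1
  have := (hasDerivAt_max_pow k hk (1 - ‖x‖ ^ 2)).comp_hasFDerivAt x h1
  refine this.congr_fderiv ?_
  ext v
  simp [wp]; ring

lemma hasFDerivAt_ev (Q : MvPolynomial (Fin d) ℝ) (x : EuclideanSpace ℝ (Fin d)) :
    HasFDerivAt (ev Q) (∑ i, ev (pderiv i Q) x • (EuclideanSpace.proj i : EuclideanSpace ℝ (Fin d) →L[ℝ] ℝ)) x := by
  induction Q using MvPolynomial.induction_on with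
  | C a =>
    have : ev (C a : MvPolynomial (Fin d) ℝ) = fun _ => a := by ext x; exact ev_C a x
    rw [this]
    refine (hasFDerivAt_const a x).congr_fderiv ?_
    ext v; simp [ev]
  | add P Q hP hQ =>
    have : ev (P + Q) = ev P + ev Q := by ext x; simp [ev]
    rw [this]
    refine (hP.add hQ).congr_fderiv ?_
    simp [ev, add_smul, Finset.sum_add_distrib]
  | mul_X P j hP =>
    have : ev (P * X j) = fun x => ev P x * x j := by ext x; simp [ev]
    rw [this]
    have hj : HasFDerivAt (fun x : EuclideanSpace ℝ (Fin d) => x j)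
      (EuclideanSpace.proj j : EuclideanSpace ℝ (Fin d) →L[ℝ] ℝ) x :=
      (EuclideanSpace.proj j : EuclideanSpace ℝ (Fin d) →L[ℝ] ℝ).hasFDerivAt
    refine (hP.mul hj).congr_fderiv ?_
    ext v
    simp [ev, Derivation.leibniz, pderiv_X, Pi.single_apply, add_mul, Finset.sum_add_distrib,
      Finset.mul_sum, apply_ite]
    apply Finset.sum_congr rfl
    intro i _
    ring

lemma II_parts {k : ℕ} (hk : 1 ≤ k) (i : Fin d) (Q : MvPolynomial (Fin d) ℝ) :
    II (k + 1) (pderiv i Q) = 2 * (k + 1 : ℝ) * II k (X i * Q) := by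
  let e : EuclideanSpace ℝ (Fin d) := EuclideanSpace.single i 1
  have hQ : ∀ x, fderiv ℝ (ev Q) x e = ev (pderiv i Q) x := by
    intro x
    rw [(hasFDerivAt_ev Q x).fderiv]
    simp [e]
  have hw : ∀ x : EuclideanSpace ℝ (Fin d), fderiv ℝ (fun x : EuclideanSpace ℝ (Fin d) => wp x ^ (k + 1)) x e =
      -(2 * (k + 1 : ℝ)) * wp x ^ k * x i := by
    intro x
    rw [(hasFDerivAt_wp_pow k hk x).fderiv]
    simp [e, EuclideanSpace.inner_single_right]
  have key := integral_mul_fderiv_eq_neg_fderiv_mul_of_integrable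
    (μ := (volume : Measure (EuclideanSpace ℝ (Fin d))))
    (f := fun x : EuclideanSpace ℝ (Fin d) => wp x ^ (k + 1)) (g := ev Q) (v := e)
    ?_ ?_ (integrable_wev (k + 1) (by omega) Q)
    (fun x _ => (hasFDerivAt_wp_pow k hk x).differentiableAt)
    (fun x _ => (hasFDerivAt_ev Q x).differentiableAt)
  · simp_rw [hQ, hw] at key
    unfold II
    rw [key, ← integral_const_mul, ← integral_neg]
    congr 1; ext x
    rw [ev_mul, ev_X]; ring
  · simp_rw [hw]
    have := (integrable_wev k hk (X i * Q)).const_mul (-(2 * (k + 1 : ℝ)))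
    convert this using 2 with x
    rw [ev_mul, ev_X]; ring
  · simp_rw [hQ]
    exact integrable_wev (k + 1) (by omega) _

end basic
end Talata

namespace Talata
open MvPolynomial MeasureTheory

section bern
variable {d : ℕ}

/-- Euler operator -/
noncomputable def Eu : MvPolynomial (Fin d) ℝ →ₗ[ℝ] MvPolynomial (Fin d) ℝ :=
  ∑ i, (LinearMap.mulLeft ℝ (X i)).comp (pderiv i).toLinearMap

/-- Laplacian -/
noncomputable def Lap : MvPolynomial (Fin d) ℝ →ₗ[ℝ] MvPolynomial (Fin d) ℝ :=
  ∑ i, (pderiv i).toLinearMap.comp (pderiv i).toLinearMap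

lemma Eu_apply (Q : MvPolynomial (Fin d) ℝ) : Eu Q = ∑ i, X i * pderiv i Q := by
  simp [Eu, LinearMap.sum_apply]

lemma Lap_apply (Q : MvPolynomial (Fin d) ℝ) : Lap Q = ∑ i, pderiv i (pderiv i Q) := by
  simp [Lap, LinearMap.sum_apply]

/-- the ball operator -/
noncomputable def DD (k : ℕ) : MvPolynomial (Fin d) ℝ →ₗ[ℝ] MvPolynomial (Fin d) ℝ :=
  Lap - Eu.comp Eu - (2 * k + d : ℝ) • Eu

lemma DD_apply (k : ℕ) (Q : MvPolynomial (Fin d) ℝ) :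
    DD k Q = Lap Q - Eu (Eu Q) - (2 * k + d : ℝ) • Eu Q := by
  simp [DD]

/-- polynomials of degree less than `n` -/
noncomputable def VV (d n : ℕ) : Submodule ℝ (MvPolynomial (Fin d) ℝ) :=
  restrictSupport ℝ {s | s.degree < n}

instance (n : ℕ) : Module.Finite ℝ (VV d n) := by
  have : Finite {s : Fin d →₀ ℕ | s.degree < n} := (Finsupp.finite_of_degree_lt n).to_subtype
  exact Module.Finite.of_basis (basisRestrictSupport ℝ {s : Fin d →₀ ℕ | s.degree < n})

lemma VV_mono {m n : ℕ} (h : m ≤ n) : VV d m ≤ VV d n :=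
  restrictSupport_mono ℝ (fun _ hs => lt_of_lt_of_le hs h)

lemma Eu_monomial (s : Fin d →₀ ℕ) : Eu (monomial s (1 : ℝ)) = (s.degree : ℝ) • monomial s (1 : ℝ) := by
  rw [Eu_apply, (isHomogeneous_monomial (1 : ℝ) rfl).sum_X_mul_pderiv]
  rw [Nat.cast_smul_eq_nsmul]

lemma Lap_monomial (s : Fin d →₀ ℕ) : Lap (monomial s (1 : ℝ)) ∈ VV d s.degree := by
  rw [Lap_apply]
  apply Submodule.sum_mem
  intro i _
  rw [pderiv_monomial, pderiv_monomial]
  unfold VV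
  rw [monomial_mem_restrictSupport]
  by_cases h : s i = 0
  · right; simp [h]
  · left
    show (s - Finsupp.single i 1 - Finsupp.single i 1).degree < s.degree
    have h1 : s - Finsupp.single i 1 + Finsupp.single i 1 = s := by
      apply tsub_add_cancel_of_le
      rw [Finsupp.single_le_iff]; omega
    have h2 : (s - Finsupp.single i 1).degree + 1 = s.degree := by
      conv_rhs => rw [← h1]
      rw [map_add, Finsupp.degree_single]
    have h3 : (s - Finsupp.single i 1 - Finsupp.single i 1).degree ≤ (s - Finsupp.single i 1).degree :=
      Finsupp.degree_mono tsub_le_self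
    omega

/-- eigenvalue -/
noncomputable def lam (d k n : ℕ) : ℝ := n * (n + 2 * k + d)

lemma DD_monomial (k : ℕ) (s : Fin d →₀ ℕ) :
    DD k (monomial s (1 : ℝ)) + lam d k s.degree • monomial s (1 : ℝ) ∈ VV d s.degree := by
  have : DD k (monomial s (1 : ℝ)) + lam d k s.degree • monomial s (1 : ℝ) = Lap (monomial s (1:ℝ)) := by
    rw [DD_apply, Eu_monomial, map_smul, Eu_monomial, smul_smul, smul_smul, sub_sub, ← add_smul,
      sub_add, ← sub_smul]
    have : ((s.degree : ℝ) * s.degree + (2 * k + d) * s.degree - lam d k s.degree) = 0 := by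
      unfold lam; ring
    rw [this, zero_smul, sub_zero]
  rw [this]
  exact Lap_monomial s

lemma DD_top (k n : ℕ) {Q : MvPolynomial (Fin d) ℝ} (hQ : Q ∈ VV d (n + 1)) :
    DD k Q + lam d k n • Q ∈ VV d n := by
  have : VV d (n + 1) ≤ (VV d n).comap (DD k + lam d k n • LinearMap.id) := by
    conv_lhs => rw [VV, restrictSupport_eq_span]
    rw [Submodule.span_le]
    rintro _ ⟨s, hs, rfl⟩
    have hs' : s.degree < n + 1 := hs
    simp only [SetLike.mem_coe, Submodule.mem_comap, LinearMap.add_apply, LinearMap.smul_apply,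
      LinearMap.id_apply]
    rcases Nat.lt_succ_iff_lt_or_eq.mp hs' with h | h
    · have h1 : monomial s (1 : ℝ) ∈ VV d n := by
        unfold VV; rw [monomial_mem_restrictSupport]; left; exact h
      have h2 : DD k (monomial s (1 : ℝ)) = (DD k (monomial s (1 : ℝ)) + lam d k s.degree • monomial s (1 : ℝ))
        - lam d k s.degree • monomial s (1 : ℝ) := by abel
      rw [h2]
      exact Submodule.add_mem _ (Submodule.sub_mem _ (VV_mono h.le (DD_monomial k s))
        (Submodule.smul_mem _ _ h1)) (Submodule.smul_mem _ _ h1)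
    · rw [← h]; exact DD_monomial k s
  exact this hQ

lemma DD_mem (k n : ℕ) {Q : MvPolynomial (Fin d) ℝ} (hQ : Q ∈ VV d n) : DD k Q ∈ VV d n := by
  have h1 := VV_mono (Nat.le_succ n) hQ
  have h2 := DD_top k n h1
  have := Submodule.sub_mem _ h2 (Submodule.smul_mem _ (lam d k n) hQ)
  simpa using this

/-- gradient product -/
noncomputable def GG (P Q : MvPolynomial (Fin d) ℝ) : MvPolynomial (Fin d) ℝ :=
  ∑ i, pderiv i P * pderiv i Q

lemma DD_parts {k : ℕ} (hk : 2 ≤ k) (P Q : MvPolynomial (Fin d) ℝ) :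
    II k (Q * DD k P) = - II k (GG P Q - Eu P * Eu Q) := by
  obtain ⟨m, rfl⟩ : ∃ m, k = m + 1 := ⟨k - 1, by omega⟩
  have hm : 1 ≤ m := by omega
  have hp : ∀ i, II (m + 1) (pderiv i (Q * (pderiv i P - X i * Eu P))) =
    2 * (m + 1 : ℝ) * II m (X i * (Q * (pderiv i P - X i * Eu P))) := fun i => II_parts hm i _
  have hs := Finset.sum_congr rfl (fun i (_ : i ∈ Finset.univ) => hp i)
  rw [← II_sum (by omega), ← Finset.mul_sum, ← II_sum hm] at hs
  have e1 : ∑ i, X i * (Q * (pderiv i P - X i * Eu P)) = WW d * (Q * Eu P) := by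
    have : ∀ i : Fin d, X i * (Q * (pderiv i P - X i * Eu P)) =
      Q * (X i * pderiv i P) - (X i * X i) * (Q * Eu P) := fun i => by ring
    simp_rw [this]
    rw [Finset.sum_sub_distrib, ← Finset.mul_sum, ← Finset.sum_mul, ← Eu_apply, WW]
    ring
  have e2 : ∑ i, pderiv i (Q * (pderiv i P - X i * Eu P)) =
      GG P Q - Eu P * Eu Q + Q * (Lap P - (d : ℝ) • Eu P - Eu (Eu P)) := by
    have : ∀ i : Fin d, pderiv i (Q * (pderiv i P - X i * Eu P)) =
      pderiv i P * pderiv i Q - Eu P * (X i * pderiv i Q) +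
        Q * (pderiv i (pderiv i P)) - Q * Eu P - Q * (X i * pderiv i (Eu P)) := by
      intro i
      simp only [Derivation.leibniz, map_sub, pderiv_X_self, smul_eq_mul]
      ring
    simp_rw [this]
    simp only [Finset.sum_sub_distrib, Finset.sum_add_distrib, ← Finset.mul_sum]
    rw [← Eu_apply, ← Eu_apply, ← Lap_apply, GG]
    simp only [Finset.sum_const, Finset.card_univ, Fintype.card_fin]
    rw [← Nat.cast_smul_eq_nsmul ℝ, MvPolynomial.smul_eq_C_mul]
    ring
  rw [e1, e2, II_WW hm] at hs
  have e3 : Q * DD (m + 1) P = Q * (Lap P - (d : ℝ) • Eu P - Eu (Eu P)) - (2 * (m + 1 : ℝ)) • (Q * Eu P) := by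
    rw [DD_apply]
    simp only [MvPolynomial.smul_eq_C_mul, map_add, Nat.cast_add, Nat.cast_one]
    ring
  rw [e3, II_sub (by omega), II_smul, ← hs, II_add (by omega)]
  ring

lemma DD_symm {k : ℕ} (hk : 2 ≤ k) (P Q : MvPolynomial (Fin d) ℝ) :
    II k (Q * DD k P) = II k (P * DD k Q) := by
  rw [DD_parts hk, DD_parts hk]
  congr 3
  · unfold GG; apply Finset.sum_congr rfl; intros; ring
  · ring

lemma exists_proj {k : ℕ} (hk : 1 ≤ k) (n : ℕ) (Q : MvPolynomial (Fin d) ℝ) :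
    ∃ R ∈ VV d n, ∀ S ∈ VV d n, II k ((Q - R) * S) = 0 := by
  let bil : VV d n →ₗ[ℝ] Module.Dual ℝ (VV d n) :=
    LinearMap.mk₂ ℝ (fun (P S : VV d n) => II k ((P : MvPolynomial (Fin d) ℝ) * (S : MvPolynomial (Fin d) ℝ)))
      (by intro a b c; simp only [Submodule.coe_add, add_mul]; exact II_add hk _ _)
      (by intro a b c; simp only [Submodule.coe_smul, smul_mul_assoc]; exact II_smul _ _ _)
      (by intro a b c; simp only [Submodule.coe_add, mul_add]; exact II_add hk _ _)
      (by intro a b c; simp only [Submodule.coe_smul, mul_smul_comm]; exact II_smul _ _ _)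
  have hinj : Function.Injective bil := by
    rw [injective_iff_map_eq_zero]
    intro P hP
    have : bil P P = 0 := by rw [hP]; rfl
    exact Subtype.ext (eq_zero_of_II hk this)
  have hsurj := (LinearMap.injective_iff_surjective_of_finrank_eq_finrank
    (Subspace.dual_finrank_eq (K := ℝ) (V := VV d n)).symm).mp hinj
  let f : Module.Dual ℝ (VV d n) :=
    { toFun := fun S => II k (Q * (S : MvPolynomial (Fin d) ℝ))
      map_add' := by intro a b; simp only [Submodule.coe_add, mul_add]; exact II_add hk _ _
      map_smul' := by intro a b; simp only [Submodule.coe_smul, mul_smul_comm]; exact II_smul _ _ _ }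
  obtain ⟨R, hR⟩ := hsurj f
  refine ⟨R, R.2, fun S hS => ?_⟩
  have := congrArg (fun g : Module.Dual ℝ (VV d n) => g ⟨S, hS⟩) hR
  have h2 : II k ((R : MvPolynomial (Fin d) ℝ) * S) = II k (Q * S) := this
  rw [sub_mul, II_sub hk, h2, sub_self]

lemma bern_aux {k : ℕ} (hk : 2 ≤ k) (L : ℝ) (n : ℕ) :
    (∀ m < n, lam d k m ≤ L) → ∀ Q ∈ VV d n, - II k (Q * DD k Q) ≤ L * II k (Q * Q) := by
  have hk1 : 1 ≤ k := by omega
  induction n with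
  | zero =>
    intro _ Q hQ
    have : Q = 0 := by
      have h1 : (Q.support : Set _) ⊆ {s : Fin d →₀ ℕ | s.degree < 0} := hQ
      rw [← MvPolynomial.support_eq_empty]
      ext s
      constructor
      · intro hs; exact absurd (h1 hs) (by simp)
      · intro hs; simp at hs
    subst this
    simp [II_zero]
  | succ n ih =>
    intro hL Q hQ
    obtain ⟨R, hR, horth⟩ := exists_proj hk1 n Q
    have hT : Q - R ∈ VV d (n + 1) := Submodule.sub_mem _ hQ (VV_mono (Nat.le_succ n) hR)
    set T := Q - R with hTdef
    have hQe : Q = R + T := by rw [hTdef]; abel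
    have hS := DD_top k n hT
    set S := DD k T + lam d k n • T with hSdef
    have hDT : DD k T = S - lam d k n • T := by rw [hSdef]; abel
    have h1 : II k (T * DD k R) = 0 := horth _ (DD_mem k n hR)
    have h2 : II k (R * DD k T) = 0 := by rw [DD_symm hk]; exact h1
    have h3 : II k (T * DD k T) = - (lam d k n * II k (T * T)) := by
      rw [hDT, mul_sub, II_sub hk1, horth S hS, mul_smul_comm, II_smul]; ring
    have h4 : II k (T * R) = 0 := horth R hR
    have e1 : Q * DD k Q = R * DD k R + R * DD k T + (T * DD k R + T * DD k T) := by
      rw [hQe, map_add]; ring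
    have e2 : Q * Q = R * R + (T * R + T * R) + T * T := by rw [hQe]; ring
    have h5 := ih (fun m hm => hL m (by omega)) R hR
    have h6 : 0 ≤ II k (T * T) := II_nonneg hk1 (fun x _ => by rw [ev_mul]; exact mul_self_nonneg _)
    have h7 := hL n (by omega)
    rw [e1, e2, II_add hk1, II_add hk1, II_add hk1, II_add hk1, II_add hk1, II_add hk1, h1, h2, h3, h4]
    nlinarith [mul_le_mul_of_nonneg_right h7 h6]

lemma mem_VV {Q : MvPolynomial (Fin d) ℝ} {n : ℕ} (h : Q.totalDegree ≤ n) : Q ∈ VV d (n + 1) := by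
  show (Q.support : Set _) ⊆ {s : Fin d →₀ ℕ | s.degree < n + 1}
  intro s hs
  have : s.degree ≤ Q.totalDegree := by
    have := MvPolynomial.le_totalDegree hs
    exact this
  exact Nat.lt_succ_of_le (this.trans h)

lemma ev_Eu (Q : MvPolynomial (Fin d) ℝ) (x) : ev (Eu Q) x = ∑ i, x i * ev (pderiv i Q) x := by
  rw [Eu_apply, ev_sum]; simp [ev_mul, ev_X]

lemma ev_GG (Q : MvPolynomial (Fin d) ℝ) (x) : ev (GG Q Q) x = ∑ i, ev (pderiv i Q) x ^ 2 := by
  rw [GG, ev_sum]; simp [ev_mul, pow_two]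

lemma ev_Eu_sq (Q : MvPolynomial (Fin d) ℝ) (x) :
    ev (Eu Q) x ^ 2 ≤ ‖x‖ ^ 2 * ev (GG Q Q) x := by
  rw [ev_Eu, ev_GG, EuclideanSpace.norm_sq_eq]
  simp only [Real.norm_eq_abs, sq_abs]
  exact Finset.sum_mul_sq_le_sq_mul_sq _ _ _

/-- weighted Bernstein inequality on the ball -/
lemma bern {k n : ℕ} (hk : 2 ≤ k) {Q : MvPolynomial (Fin d) ℝ} (h : Q.totalDegree ≤ n) :
    II (k + 1) (GG Q Q) ≤ lam d k n * II k (Q * Q) := by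
  have h1 := bern_aux hk (lam d k n) (n + 1) (by
    intro m hm
    have : (m : ℝ) ≤ n := by exact_mod_cast Nat.lt_succ_iff.mp hm
    unfold lam
    gcongr) Q (mem_VV h)
  rw [DD_parts hk, neg_neg] at h1
  refine le_trans ?_ h1
  rw [← II_WW (by omega)]
  apply II_mono (by omega)
  intro x _
  rw [ev_mul, ev_WW, ev_sub, ev_mul]
  nlinarith [ev_Eu_sq Q x]

end bern
end Talata

namespace Talata
open MvPolynomial MeasureTheory

section rayleigh
variable {d : ℕ}

lemma II_sq_nonneg {k : ℕ} (hk : 1 ≤ k) (Q : MvPolynomial (Fin d) ℝ) : 0 ≤ II k (Q * Q) :=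
  II_nonneg hk (fun x _ => by rw [ev_mul]; exact mul_self_nonneg _)

lemma lam_le {k n : ℕ} (h : n + d ≤ k) : lam d k n ≤ 3 * (k : ℝ) ^ 2 := by
  unfold lam
  have h1 : (n : ℝ) + d ≤ k := by exact_mod_cast h
  have h2 : (0 : ℝ) ≤ d := Nat.cast_nonneg d
  have h3 : (0 : ℝ) ≤ n := Nat.cast_nonneg n
  nlinarith

lemma J_step {m n : ℕ} (hm : 1 ≤ m) (hn : n + d ≤ m + 1) {Q : MvPolynomial (Fin d) ℝ}
    (h : Q.totalDegree ≤ n) : II m (Q * Q) ≤ 6 * II (m + 1) (Q * Q) := by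
  have hp : ∀ i, II (m + 1) (pderiv i (X i * (Q * Q))) =
    2 * (m + 1 : ℝ) * II m (X i * (X i * (Q * Q))) := fun i => II_parts hm i _
  have hs := Finset.sum_congr rfl (fun i (_ : i ∈ Finset.univ) => hp i)
  rw [← II_sum (by omega), ← Finset.mul_sum, ← II_sum hm] at hs
  have e1 : ∑ i : Fin d, X i * (X i * (Q * Q)) = Q * Q - WW d * (Q * Q) := by
    simp_rw [← mul_assoc (X _) (X _)]
    rw [← Finset.sum_mul, WW]; ring
  have e2 : ∑ i, pderiv i (X i * (Q * Q)) = (d : ℝ) • (Q * Q) + (2 : ℝ) • (Q * Eu Q) := by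
    have : ∀ i : Fin d, pderiv i (X i * (Q * Q)) = Q * Q + C 2 * (Q * (X i * pderiv i Q)) := by
      intro i
      simp only [Derivation.leibniz, pderiv_X_self, smul_eq_mul]
      have : (C 2 : MvPolynomial (Fin d) ℝ) = 2 := rfl
      rw [this]
      ring
    simp_rw [this]
    simp only [Finset.sum_add_distrib, ← Finset.mul_sum]
    rw [← Eu_apply]
    simp only [Finset.sum_const, Finset.card_univ, Fintype.card_fin]
    rw [← Nat.cast_smul_eq_nsmul ℝ, MvPolynomial.smul_eq_C_mul, MvPolynomial.smul_eq_C_mul,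
      MvPolynomial.smul_eq_C_mul]
    ring
  rw [e1, e2, II_sub hm, II_WW hm, II_add (by omega), II_smul, II_smul] at hs
  have ha : (0 : ℝ) < (m : ℝ) + 1 := by positivity
  -- AM-GM
  have h2 : 2 * II (m + 1) (Q * Eu Q) ≤
      (m + 1 : ℝ) * II m (Q * Q) + (1 / (m + 1 : ℝ)) * II (m + 1 + 1) (GG Q Q) := by
    rw [← II_WW hm, ← II_WW (by omega : 1 ≤ m + 1), ← II_WW hm, ← II_smul, ← II_smul, ← II_smul,
      ← II_add hm]
    apply II_mono hm
    intro x hx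
    simp only [ev_smul, ev_add, ev_mul, ev_WW]
    have hq := ev_Eu_sq Q x
    have hx2 : ‖x‖ ^ 2 ≤ 1 := by nlinarith [norm_nonneg x]
    have hg : 0 ≤ ev (GG Q Q) x := by rw [ev_GG]; positivity
    have hq' : ev (Eu Q) x ^ 2 ≤ ev (GG Q Q) x := by nlinarith
    set w := 1 - ‖x‖ ^ 2
    have h3 : w ^ 2 * ev (Eu Q) x ^ 2 ≤ w ^ 2 * ev (GG Q Q) x :=
      mul_le_mul_of_nonneg_left hq' (sq_nonneg w)
    have h4 : 1 / (m + 1 : ℝ) * (w ^ 2 * ev (Eu Q) x ^ 2) ≤ 1 / (m + 1 : ℝ) * (w * (w * ev (GG Q Q) x)) := by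
      apply mul_le_mul_of_nonneg_left _ (by positivity)
      linarith
    have h5 : 2 * (w * (ev Q x * ev (Eu Q) x)) ≤ (m + 1 : ℝ) * (ev Q x * ev Q x) +
        1 / (m + 1 : ℝ) * (w ^ 2 * ev (Eu Q) x ^ 2) := by
      have : 0 ≤ (1 / (m + 1 : ℝ)) * ((m + 1 : ℝ) * ev Q x - w * ev (Eu Q) x) ^ 2 := by positivity
      have e : (1 / (m + 1 : ℝ)) * ((m + 1 : ℝ) * ev Q x - w * ev (Eu Q) x) ^ 2 =
        (m + 1 : ℝ) * (ev Q x * ev Q x) + 1 / (m + 1 : ℝ) * (w ^ 2 * ev (Eu Q) x ^ 2) -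
          2 * (w * (ev Q x * ev (Eu Q) x)) := by field_simp; ring
      linarith
    linarith
  have h6 := bern (k := m + 1) (by omega) h
  have h7 : lam d (m + 1) n ≤ 3 * ((m : ℝ) + 1) ^ 2 := by
    have := lam_le (d := d) hn
    push_cast at this; exact this
  have hJ : 0 ≤ II (m + 1) (Q * Q) := II_sq_nonneg (by omega) Q
  have h8 : (1 / (m + 1 : ℝ)) * II (m + 1 + 1) (GG Q Q) ≤ 3 * ((m : ℝ) + 1) * II (m + 1) (Q * Q) := by
    have : II (m + 1 + 1) (GG Q Q) ≤ 3 * ((m : ℝ) + 1) ^ 2 * II (m + 1) (Q * Q) :=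
      h6.trans (mul_le_mul_of_nonneg_right h7 hJ)
    rw [one_div, inv_mul_le_iff₀ ha]
    linarith
  have hd : (d : ℝ) ≤ (m : ℝ) + 1 := by
    have : d ≤ m + 1 := by omega
    exact_mod_cast this
  have h9 : (d : ℝ) * II (m + 1) (Q * Q) ≤ ((m : ℝ) + 1) * II (m + 1) (Q * Q) :=
    mul_le_mul_of_nonneg_right hd hJ
  have h10 : ((m : ℝ) + 1) * II m (Q * Q) ≤ ((m : ℝ) + 1) * (6 * II (m + 1) (Q * Q)) := by
    linarith
  exact le_of_mul_le_mul_left h10 ha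

/-- the polynomial factor of the `i`-th derivative of `Q * wp^k` -/
noncomputable def dQ (k : ℕ) (i : Fin d) (Q : MvPolynomial (Fin d) ℝ) : MvPolynomial (Fin d) ℝ :=
  WW d * pderiv i Q - C (2 * (k : ℝ)) * (X i * Q)

/-- Rayleigh quotient bound; here `k = p + 2`. -/
lemma rayleigh {p n : ℕ} (hn : n + d ≤ 2 * p + 3) {Q : MvPolynomial (Fin d) ℝ}
    (h : Q.totalDegree ≤ n) :
    ∑ i, II (2 * p + 2) (dQ (p + 2) i Q * dQ (p + 2) i Q) ≤
      432 * ((p : ℝ) + 2) ^ 2 * II (2 * p + 4) (Q * Q) := by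
  rw [← II_sum (by omega)]
  have h1 : II (2 * p + 2) (∑ i, dQ (p + 2) i Q * dQ (p + 2) i Q) ≤
      2 * II (2 * p + 4) (GG Q Q) + 8 * ((p : ℝ) + 2) ^ 2 * II (2 * p + 2) (Q * Q) := by
    rw [← II_WW (by omega : 1 ≤ 2 * p + 3), ← II_WW (by omega : 1 ≤ 2 * p + 2), ← II_smul, ← II_smul,
      ← II_add (by omega)]
    apply II_mono (by omega)
    intro x hx
    simp only [ev_smul, ev_add, ev_mul, ev_WW, ev_sum, dQ, ev_sub, ev_C, ev_X]
    rw [ev_GG]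
    have hx2 : ∑ i, x i ^ 2 ≤ 1 := by
      have : ‖x‖ ^ 2 ≤ 1 := by nlinarith [norm_nonneg x]
      rw [EuclideanSpace.norm_sq_eq] at this
      simpa using this
    set w := 1 - ‖x‖ ^ 2
    have h2 : ∀ i : Fin d, (w * ev (pderiv i Q) x - 2 * ((p + 2 : ℕ) : ℝ) * (x i * ev Q x)) *
        (w * ev (pderiv i Q) x - 2 * ((p + 2 : ℕ) : ℝ) * (x i * ev Q x)) ≤
        2 * w ^ 2 * ev (pderiv i Q) x ^ 2 + 8 * ((p : ℝ) + 2) ^ 2 * ev Q x ^ 2 * x i ^ 2 := by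
      intro i
      push_cast
      nlinarith [sq_nonneg (w * ev (pderiv i Q) x + 2 * ((p : ℝ) + 2) * (x i * ev Q x))]
    refine (Finset.sum_le_sum (fun i _ => h2 i)).trans ?_
    rw [Finset.sum_add_distrib, ← Finset.mul_sum, ← Finset.mul_sum]
    have h3 : 8 * ((p : ℝ) + 2) ^ 2 * ev Q x ^ 2 * ∑ i, x i ^ 2 ≤ 8 * ((p : ℝ) + 2) ^ 2 * ev Q x ^ 2 * 1 :=
      mul_le_mul_of_nonneg_left hx2 (by positivity)
    linarith
  have h2 := bern (k := 2 * p + 3) (by omega) h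
  have h3 := lam_le (d := d) hn
  have h4 := J_step (m := 2 * p + 3) (by omega) (by omega) h
  have h5 := J_step (m := 2 * p + 2) (by omega) hn h
  push_cast at h3
  have hJ : 0 ≤ II (2 * p + 3) (Q * Q) := II_sq_nonneg (by omega) Q
  have h6 : II (2 * p + 4) (GG Q Q) ≤ 3 * (2 * (p : ℝ) + 3) ^ 2 * II (2 * p + 3) (Q * Q) :=
    h2.trans (mul_le_mul_of_nonneg_right h3 hJ)
  have h7 : 3 * (2 * (p : ℝ) + 3) ^ 2 ≤ 12 * ((p : ℝ) + 2) ^ 2 := by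
    have : (0 : ℝ) ≤ p := Nat.cast_nonneg p
    nlinarith
  have h8 := mul_le_mul_of_nonneg_right h7 hJ
  have h9 : (0 : ℝ) ≤ ((p : ℝ) + 2) ^ 2 := by positivity
  have h10 := mul_le_mul_of_nonneg_left h4 h9
  have h11 := mul_le_mul_of_nonneg_left h5 h9
  have e1 : 2 * p + 3 + 1 = 2 * p + 4 := by ring
  have e2 : 2 * p + 2 + 1 = 2 * p + 3 := by ring
  rw [e1] at h10
  rw [e2] at h11
  linarith

end rayleigh
end Talata

namespace Talata
open MvPolynomial MeasureTheory

section chain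
open scoped FourierTransform
variable {d : ℕ}

/-- complex-valued test function -/
noncomputable def FF (k : ℕ) (Q₁ Q₂ : MvPolynomial (Fin d) ℝ) (x : EuclideanSpace ℝ (Fin d)) : ℂ :=
  ((wp x ^ k * ev Q₁ x : ℝ) : ℂ) + ((wp x ^ k * ev Q₂ x : ℝ) : ℂ) * Complex.I

lemma continuous_FF (k : ℕ) (Q₁ Q₂ : MvPolynomial (Fin d) ℝ) : Continuous (FF k Q₁ Q₂) := by
  unfold FF
  have h1 := continuous_ev Q₁
  have h2 := continuous_ev Q₂
  have h3 := continuous_wp (d := d)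
  fun_prop

lemma FF_eq_zero {k : ℕ} (hk : 1 ≤ k) (Q₁ Q₂ : MvPolynomial (Fin d) ℝ)
    {x : EuclideanSpace ℝ (Fin d)} (hx : 1 ≤ ‖x‖) : FF k Q₁ Q₂ x = 0 := by
  unfold FF
  rw [wp_eq_zero hx, zero_pow (by omega)]
  simp

lemma integrable_FF {k : ℕ} (hk : 1 ≤ k) (Q₁ Q₂ : MvPolynomial (Fin d) ℝ) :
    Integrable (FF k Q₁ Q₂) :=
  (continuous_FF k Q₁ Q₂).integrable_of_hasCompactSupport
    (hasCompactSupport_of_ball (fun _ hx => FF_eq_zero hk Q₁ Q₂ hx))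

lemma normSq_FF (k : ℕ) (Q₁ Q₂ : MvPolynomial (Fin d) ℝ) (x : EuclideanSpace ℝ (Fin d)) :
    ‖FF k Q₁ Q₂ x‖ ^ 2 = wp x ^ (2 * k) * ev (Q₁ * Q₁) x + wp x ^ (2 * k) * ev (Q₂ * Q₂) x := by
  unfold FF
  rw [← Complex.normSq_eq_norm_sq, Complex.normSq_add_mul_I, ev_mul, ev_mul]
  ring

lemma integral_normSq_FF {k : ℕ} (hk : 1 ≤ k) (Q₁ Q₂ : MvPolynomial (Fin d) ℝ) :
    ∫ x, ‖FF k Q₁ Q₂ x‖ ^ 2 = II (2 * k) (Q₁ * Q₁) + II (2 * k) (Q₂ * Q₂) := by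
  simp_rw [normSq_FF]
  rw [integral_add (integrable_wev _ (by omega) _) (integrable_wev _ (by omega) _)]
  rfl

lemma hasFDerivAt_wev {k : ℕ} (hk : 1 ≤ k) (Q : MvPolynomial (Fin d) ℝ)
    (x : EuclideanSpace ℝ (Fin d)) :
    HasFDerivAt (fun x => wp x ^ (k + 1) * ev Q x)
      (∑ i, (wp x ^ k * ev (dQ (k + 1) i Q) x) •
        (EuclideanSpace.proj i : EuclideanSpace ℝ (Fin d) →L[ℝ] ℝ)) x := by
  have h := (hasFDerivAt_wp_pow k hk x).mul (hasFDerivAt_ev Q x)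
  refine h.congr_fderiv ?_
  ext e
  have hi : ⟪x, e⟫ = ∑ i, x i * e i := by
    rw [PiLp.inner_apply]
    apply Finset.sum_congr rfl
    intro i _
    simp [mul_comm]
  simp only [ContinuousLinearMap.add_apply, ContinuousLinearMap.smul_apply,
    ContinuousLinearMap.sum_apply, smul_eq_mul, innerSL_apply_apply, hi,
    EuclideanSpace.coe_proj, dQ, ev_sub, ev_mul, ev_WW, ev_C, ev_X]
  rw [Finset.mul_sum, Finset.mul_sum, Finset.mul_sum, ← Finset.sum_add_distrib]
  apply Finset.sum_congr rfl
  intro i _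
  rw [← wp_mul k hk]
  push_cast
  ring

/-- directional derivative polynomial -/
noncomputable def dU (k : ℕ) (u : EuclideanSpace ℝ (Fin d)) (Q : MvPolynomial (Fin d) ℝ) :
    MvPolynomial (Fin d) ℝ := ∑ i, C (u i) * dQ k i Q

lemma hasFDerivAt_FF {k : ℕ} (hk : 1 ≤ k) (Q₁ Q₂ : MvPolynomial (Fin d) ℝ)
    (x : EuclideanSpace ℝ (Fin d)) :
    HasFDerivAt (FF (k + 1) Q₁ Q₂)
      (∑ i, (EuclideanSpace.proj i : EuclideanSpace ℝ (Fin d) →L[ℝ] ℝ).smulRight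
        (FF k (dQ (k + 1) i Q₁) (dQ (k + 1) i Q₂) x)) x := by
  have h1 := Complex.ofRealCLM.hasFDerivAt.comp x (hasFDerivAt_wev hk Q₁ x)
  have h2 := Complex.ofRealCLM.hasFDerivAt.comp x (hasFDerivAt_wev hk Q₂ x)
  have h := h1.add (h2.mul_const Complex.I)
  refine h.congr_fderiv ?_
  ext e
  simp [FF, Finset.sum_add_distrib, Finset.sum_mul, Finset.mul_sum, mul_add]
  congr 1 <;>
  · apply Finset.sum_congr rfl
    intro i _
    ring

lemma fderiv_FF {k : ℕ} (hk : 1 ≤ k) (Q₁ Q₂ : MvPolynomial (Fin d) ℝ)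
    (x u : EuclideanSpace ℝ (Fin d)) :
    fderiv ℝ (FF (k + 1) Q₁ Q₂) x u = FF k (dU (k + 1) u Q₁) (dU (k + 1) u Q₂) x := by
  rw [(hasFDerivAt_FF hk Q₁ Q₂ x).fderiv]
  simp [FF, dU, ev_sum, ev_mul, ev_C, Finset.sum_add_distrib, Finset.sum_mul, Finset.mul_sum, mul_add]
  congr 1 <;>
  · apply Finset.sum_congr rfl
    intro i _
    ring

lemma fourier_dU {k : ℕ} (hk : 1 ≤ k) (Q₁ Q₂ : MvPolynomial (Fin d) ℝ)
    (u ξ : EuclideanSpace ℝ (Fin d)) :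
    𝓕 (FF k (dU (k + 1) u Q₁) (dU (k + 1) u Q₂)) ξ =
      (2 * Real.pi * ⟪u, ξ⟫ : ℝ) * Complex.I * 𝓕 (FF (k + 1) Q₁ Q₂) ξ := by
  have hInt : Integrable (fderiv ℝ (FF (k + 1) Q₁ Q₂)) := by
    apply Continuous.integrable_of_hasCompactSupport
    · have : fderiv ℝ (FF (k + 1) Q₁ Q₂) = fun x =>
        (∑ i, (EuclideanSpace.proj i : EuclideanSpace ℝ (Fin d) →L[ℝ] ℝ).smulRight
        (FF k (dQ (k + 1) i Q₁) (dQ (k + 1) i Q₂) x)) := by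
        ext1 x; exact (hasFDerivAt_FF hk Q₁ Q₂ x).fderiv
      rw [this]
      apply continuous_finset_sum
      intro i _
      have := continuous_FF k (dQ (k + 1) i Q₁) (dQ (k + 1) i Q₂)
      exact (ContinuousLinearMap.smulRightL ℝ (EuclideanSpace ℝ (Fin d)) ℂ
        (EuclideanSpace.proj i : EuclideanSpace ℝ (Fin d) →L[ℝ] ℝ)).continuous.comp this
    · exact (hasCompactSupport_of_ball (fun _ hx => FF_eq_zero (by omega) Q₁ Q₂ hx)).fderiv ℝ
  have h := Real.fourier_fderiv (integrable_FF (by omega) Q₁ Q₂)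
    (fun x => (hasFDerivAt_FF hk Q₁ Q₂ x).differentiableAt) hInt
  have h2 := congrArg (fun L => L u) (congrFun h ξ)
  simp only [Real.fourier_continuousLinearMap_apply hInt] at h2
  have e : (fun x => fderiv ℝ (FF (k + 1) Q₁ Q₂) x u) =
    FF k (dU (k + 1) u Q₁) (dU (k + 1) u Q₂) := by
    ext x; exact fderiv_FF hk Q₁ Q₂ x u
  rw [e] at h2
  rw [h2]
  simp [VectorFourier.fourierSMulRight_apply]
  have hinn : (innerSL ℝ) ξ u = ⟪u, ξ⟫ := by
    rw [innerSL_apply_apply]; exact real_inner_comm _ _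
  rw [hinn]
  ring

/-- the two polynomials after one step -/
noncomputable def st₁ (k : ℕ) (u : EuclideanSpace ℝ (Fin d)) (t : ℝ)
    (Q₁ Q₂ : MvPolynomial (Fin d) ℝ) : MvPolynomial (Fin d) ℝ :=
  dU k u Q₁ + C (2 * Real.pi * t) * (WW d * Q₂)
/-- the two polynomials after one step -/
noncomputable def st₂ (k : ℕ) (u : EuclideanSpace ℝ (Fin d)) (t : ℝ)
    (Q₁ Q₂ : MvPolynomial (Fin d) ℝ) : MvPolynomial (Fin d) ℝ :=
  dU k u Q₂ - C (2 * Real.pi * t) * (WW d * Q₁)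

lemma FF_st {k : ℕ} (hk : 1 ≤ k) (u : EuclideanSpace ℝ (Fin d)) (t : ℝ)
    (Q₁ Q₂ : MvPolynomial (Fin d) ℝ) :
    FF k (st₁ (k + 1) u t Q₁ Q₂) (st₂ (k + 1) u t Q₁ Q₂) =
      FF k (dU (k + 1) u Q₁) (dU (k + 1) u Q₂) +
        (-(2 * Real.pi * t : ℝ) * Complex.I) • FF (k + 1) Q₁ Q₂ := by
  ext x
  simp only [FF, st₁, st₂, ev_add, ev_sub, ev_mul, ev_C, ev_WW, Pi.add_apply, Pi.smul_apply,
    smul_eq_mul]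
  rw [← wp_mul k hk]
  push_cast
  linear_combination ((2 * Real.pi * t : ℂ) * ((wp x : ℂ) ^ k * (1 - (‖x‖ : ℂ) ^ 2) * ev Q₂ x)) * Complex.I_sq

lemma fourier_st {k : ℕ} (hk : 1 ≤ k) (u : EuclideanSpace ℝ (Fin d)) (t : ℝ)
    (Q₁ Q₂ : MvPolynomial (Fin d) ℝ) (ξ) :
    𝓕 (FF k (st₁ (k + 1) u t Q₁ Q₂) (st₂ (k + 1) u t Q₁ Q₂)) ξ =
      (2 * Real.pi * (⟪u, ξ⟫ - t) : ℝ) * Complex.I * 𝓕 (FF (k + 1) Q₁ Q₂) ξ := by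
  have h1 := integrable_FF hk (dU (k + 1) u Q₁) (dU (k + 1) u Q₂)
  have h2 := integrable_FF (by omega : 1 ≤ k + 1) Q₁ Q₂
  have e : 𝓕 (FF k (st₁ (k + 1) u t Q₁ Q₂) (st₂ (k + 1) u t Q₁ Q₂)) ξ =
      𝓕 (FF k (dU (k + 1) u Q₁) (dU (k + 1) u Q₂)) ξ +
        (-(2 * Real.pi * t : ℝ) * Complex.I) • 𝓕 (FF (k + 1) Q₁ Q₂) ξ := by
    rw [FF_st hk]
    simp only [Real.fourier_eq, ← integral_smul]
    rw [← integral_add]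
    · congr 1; ext x
      simp only [Pi.add_apply, Pi.smul_apply, smul_add]
      rw [smul_comm]
    · exact (Real.fourierIntegral_convergent_iff ξ).2 h1
    · exact ((Real.fourierIntegral_convergent_iff ξ).2 h2).smul (-(2 * Real.pi * t : ℝ) * Complex.I : ℂ)
  rw [e, fourier_dU hk]
  push_cast
  simp only [smul_eq_mul]
  ring

lemma degree_WW : (WW d).totalDegree ≤ 2 := by
  unfold WW
  refine (totalDegree_sub _ _).trans (max_le (by simp) ?_)
  refine (totalDegree_finsetSum _ _).trans ?_
  apply Finset.sup_le
  intro i _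
  refine (totalDegree_mul _ _).trans ?_
  simp

lemma degree_C_mul (a : ℝ) (Q : MvPolynomial (Fin d) ℝ) : (C a * Q).totalDegree ≤ Q.totalDegree := by
  refine (totalDegree_mul _ _).trans ?_
  simp

lemma degree_pderiv (i : Fin d) (Q : MvPolynomial (Fin d) ℝ) :
    (pderiv i Q).totalDegree ≤ Q.totalDegree := by
  conv_lhs => rw [Q.as_sum, map_sum]
  refine (totalDegree_finsetSum _ _).trans ?_
  apply Finset.sup_le
  intro s hs
  rw [pderiv_monomial]
  refine (totalDegree_monomial_le _ _).trans ?_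
  refine le_trans ?_ (le_totalDegree hs)
  apply Finsupp.degree_mono
  exact tsub_le_self

lemma degree_dQ {n : ℕ} (k : ℕ) (i : Fin d) {Q : MvPolynomial (Fin d) ℝ} (h : Q.totalDegree ≤ n) :
    (dQ k i Q).totalDegree ≤ n + 2 := by
  unfold dQ
  refine (totalDegree_sub _ _).trans (max_le ?_ ?_)
  · refine (totalDegree_mul _ _).trans ?_
    have h1 := degree_WW (d := d)
    have h2 : (pderiv i Q).totalDegree ≤ n := by
      exact (degree_pderiv i Q).trans h
    omega
  · refine (degree_C_mul _ _).trans ((totalDegree_mul _ _).trans ?_)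
    have : (X i : MvPolynomial (Fin d) ℝ).totalDegree = 1 := totalDegree_X i
    omega

lemma degree_dU {n : ℕ} (k : ℕ) (u) {Q : MvPolynomial (Fin d) ℝ} (h : Q.totalDegree ≤ n) :
    (dU k u Q).totalDegree ≤ n + 2 := by
  unfold dU
  refine (totalDegree_finsetSum _ _).trans ?_
  apply Finset.sup_le
  intro i _
  exact (degree_C_mul _ _).trans (degree_dQ k i h)

lemma degree_CWW {n : ℕ} (a : ℝ) {Q : MvPolynomial (Fin d) ℝ} (h : Q.totalDegree ≤ n) :
    (C a * (WW d * Q)).totalDegree ≤ n + 2 := by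
  refine (degree_C_mul _ _).trans ((totalDegree_mul _ _).trans ?_)
  have h1 := degree_WW (d := d)
  omega

lemma st_ne_zero {k : ℕ} (hk : 1 ≤ k) {u : EuclideanSpace ℝ (Fin d)} (hu : u ≠ 0) (t : ℝ)
    {Q₁ Q₂ : MvPolynomial (Fin d) ℝ} (h1 : st₁ (k + 1) u t Q₁ Q₂ = 0)
    (h2 : st₂ (k + 1) u t Q₁ Q₂ = 0) : Q₁ = 0 ∧ Q₂ = 0 := by
  have key : ∀ x : EuclideanSpace ℝ (Fin d), (wp x ^ (k + 1) * ev Q₁ x) ^ 2 +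
      (wp x ^ (k + 1) * ev Q₂ x) ^ 2 = 0 := by
    intro x
    let g : ℝ → ℝ := fun s => (wp (x + s • u) ^ (k + 1) * ev Q₁ (x + s • u)) ^ 2 +
      (wp (x + s • u) ^ (k + 1) * ev Q₂ (x + s • u)) ^ 2
    have hl : ∀ s : ℝ, HasDerivAt (fun s : ℝ => x + s • u) u s := by
      intro s
      simpa using ((hasDerivAt_id s).smul_const u).const_add x
    have hd : ∀ (Q : MvPolynomial (Fin d) ℝ) (s : ℝ),
        HasDerivAt (fun s : ℝ => wp (x + s • u) ^ (k + 1) * ev Q (x + s • u))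
          (wp (x + s • u) ^ k * ev (dU (k + 1) u Q) (x + s • u)) s := by
      intro Q s
      have := (hasFDerivAt_wev hk Q (x + s • u)).comp_hasDerivAt s (hl s)
      refine HasDerivAt.congr_deriv this ?_
      simp only [ContinuousLinearMap.sum_apply, ContinuousLinearMap.smul_apply, smul_eq_mul,
        EuclideanSpace.coe_proj, dU, ev_sum, ev_mul, ev_C, Finset.mul_sum]
      apply Finset.sum_congr rfl
      intro i _
      ring
    have hg : ∀ s, HasDerivAt g 0 s := by
      intro s
      have := ((hd Q₁ s).pow 2).add ((hd Q₂ s).pow 2)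
      refine HasDerivAt.congr_deriv this ?_
      have e1 : ev (dU (k + 1) u Q₁) (x + s • u) =
          - (2 * Real.pi * t * ((1 - ‖x + s • u‖ ^ 2) * ev Q₂ (x + s • u))) := by
        have := congrArg (fun P => ev P (x + s • u)) h1
        simp only [st₁, ev_add, ev_mul, ev_C, ev_WW] at this
        have h0 : ev (0 : MvPolynomial (Fin d) ℝ) (x + s • u) = 0 := by simp [ev]
        rw [h0] at this
        linarith
      have e2 : ev (dU (k + 1) u Q₂) (x + s • u) =
          (2 * Real.pi * t * ((1 - ‖x + s • u‖ ^ 2) * ev Q₁ (x + s • u))) := by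
        have := congrArg (fun P => ev P (x + s • u)) h2
        simp only [st₂, ev_sub, ev_mul, ev_C, ev_WW] at this
        have h0 : ev (0 : MvPolynomial (Fin d) ℝ) (x + s • u) = 0 := by simp [ev]
        rw [h0] at this
        linarith
      rw [e1, e2]
      push_cast
      ring
    have hconst := is_const_of_deriv_eq_zero (f := g) (fun s => (hg s).differentiableAt)
      (fun s => (hg s).deriv)
    have hu' : 0 < ‖u‖ := norm_pos_iff.2 hu
    have hfar : g ((1 + ‖x‖) / ‖u‖) = 0 := by
      have hn : 1 ≤ ‖x + ((1 + ‖x‖) / ‖u‖) • u‖ := by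
        have h3 : ‖((1 + ‖x‖) / ‖u‖) • u‖ = 1 + ‖x‖ := by
          rw [norm_smul, Real.norm_of_nonneg (by positivity)]
          field_simp
        have h4 := norm_sub_norm_le (((1 + ‖x‖) / ‖u‖) • u) (-x)
        rw [norm_neg, sub_neg_eq_add, h3, add_comm (_ • u)] at h4
        linarith
      simp only [g]
      rw [wp_eq_zero hn]
      simp
    have h0 := hconst 0 ((1 + ‖x‖) / ‖u‖)
    rw [hfar] at h0
    simpa [g] using h0
  constructor
  all_goals
    apply eq_zero_of_ev_ball
    intro x hx
    have h3 := key x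
    have h5 : 0 < wp x ^ (k + 1) := pow_pos (wp_pos hx) _
  · have h4 : wp x ^ (k + 1) * ev Q₁ x = 0 := by nlinarith [sq_nonneg (wp x ^ (k + 1) * ev Q₁ x), sq_nonneg (wp x ^ (k + 1) * ev Q₂ x)]
    exact (mul_eq_zero.1 h4).resolve_left h5.ne'
  · have h4 : wp x ^ (k + 1) * ev Q₂ x = 0 := by nlinarith [sq_nonneg (wp x ^ (k + 1) * ev Q₁ x), sq_nonneg (wp x ^ (k + 1) * ev Q₂ x)]
    exact (mul_eq_zero.1 h4).resolve_left h5.ne'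

lemma exists_chain (N : ℕ) : ∀ (k : ℕ) (_ : 1 ≤ k) (u : Fin N → EuclideanSpace ℝ (Fin d))
    (t : Fin N → ℝ) (_ : ∀ i, u i ≠ 0),
    ∃ Q₁ Q₂ : MvPolynomial (Fin d) ℝ, ¬ (Q₁ = 0 ∧ Q₂ = 0) ∧ Q₁.totalDegree ≤ 2 * N ∧
      Q₂.totalDegree ≤ 2 * N ∧ ∀ ξ, (∃ i, ⟪ξ, u i⟫ = t i) → 𝓕 (FF k Q₁ Q₂) ξ = 0 := by
  induction N with
  | zero =>
    intro k hk u t hu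
    refine ⟨1, 0, by simp, by simp, by simp, ?_⟩
    rintro ξ ⟨i, _⟩
    exact i.elim0
  | succ N ih =>
    intro k hk u t hu
    obtain ⟨Q₁, Q₂, hne, hd1, hd2, hz⟩ := ih (k + 1) (by omega) (fun i => u i.castSucc)
      (fun i => t i.castSucc) (fun i => hu _)
    refine ⟨st₁ (k + 1) (u (Fin.last N)) (t (Fin.last N)) Q₁ Q₂,
      st₂ (k + 1) (u (Fin.last N)) (t (Fin.last N)) Q₁ Q₂, ?_, ?_, ?_, ?_⟩
    · rintro ⟨h1, h2⟩
      exact hne (st_ne_zero hk (hu _) _ h1 h2)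
    · exact (totalDegree_add _ _).trans (max_le (degree_dU _ _ hd1) (degree_CWW _ hd2))
    · exact (totalDegree_sub _ _).trans (max_le (degree_dU _ _ hd2) (degree_CWW _ hd1))
    · rintro ξ ⟨i, hi⟩
      rw [fourier_st hk]
      induction i using Fin.lastCases with
      | last => rw [real_inner_comm] at hi; simp [hi]
      | cast i => rw [hz ξ ⟨i, hi⟩, mul_zero]

end chain
end Talata

namespace Talata
open MvPolynomial MeasureTheory

section unfold
variable {d : ℕ}

/-- half-open unit cube -/
def cube (d : ℕ) : Set (Fin d → ℝ) := {x | ∀ i, x i ∈ Set.Ioc (0 : ℝ) (0 + 1)}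

lemma measurableSet_cube : MeasurableSet (cube d) :=
  MeasurableSet.univ_pi' (fun _ => measurableSet_Ioc)

/-- integer vector as real vector -/
def iv (n : Fin d → ℤ) : Fin d → ℝ := fun i => (n i : ℝ)

lemma unfold_cube {E : Type*} [NormedAddCommGroup E] [NormedSpace ℝ E] [CompleteSpace E]
    {φ : (Fin d → ℝ) → E} (hφ : Integrable φ) (S : Finset (Fin d → ℤ))
    (hS : ∀ x ∈ cube d, ∀ n ∉ S, φ (x + iv n) = 0) :
    ∫ y, φ y = ∑ n ∈ S, ∫ x in cube d, φ (x + iv n) := by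
  let s : (Fin d → ℤ) → Set (Fin d → ℝ) := fun n => {y | ∀ i, y i ∈ Set.Ioc (n i : ℝ) (n i + 1)}
  have hsm : ∀ n, MeasurableSet (s n) := fun n => MeasurableSet.univ_pi' (fun _ => measurableSet_Ioc)
  have hsd : Pairwise (Function.onFun Disjoint s) := by
    intro m n hmn
    rw [Function.onFun, Set.disjoint_left]
    intro y hy hy'
    apply hmn
    ext i
    have h1 := hy i
    have h2 := hy' i
    have h3 : (m i : ℝ) < n i + 1 := h1.1.trans_le h2.2
    have h4 : (n i : ℝ) < m i + 1 := h2.1.trans_le h1.2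
    have h5 : m i < n i + 1 := by exact_mod_cast h3
    have h6 : n i < m i + 1 := by exact_mod_cast h4
    omega
  have hu : (⋃ n, s n) = Set.univ := by
    ext y
    simp only [Set.mem_iUnion, Set.mem_univ, iff_true]
    refine ⟨fun i => ⌈y i⌉ - 1, fun i => ?_⟩
    have h1 := Int.ceil_lt_add_one (y i)
    have h2 := Int.le_ceil (y i)
    push_cast
    constructor <;> linarith
  have hsum := hasSum_integral_iUnion (f := φ) hsm hsd hφ.integrableOn
  rw [hu, setIntegral_univ] at hsum
  have hshift : ∀ n, ∫ y in s n, φ y = ∫ x in cube d, φ (x + iv n) := by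
    intro n
    rw [← integral_indicator (hsm n), ← integral_indicator measurableSet_cube,
      ← integral_add_right_eq_self _ (iv n)]
    congr 1
    ext x
    have : (x + iv n ∈ s n) ↔ x ∈ cube d := by
      simp only [s, cube, iv, Set.mem_setOf_eq, Pi.add_apply, Set.mem_Ioc]
      refine forall_congr' fun i => ?_
      constructor <;> rintro ⟨h1, h2⟩ <;> constructor <;> linarith
    by_cases hx : x ∈ cube d
    · rw [Set.indicator_of_mem (this.2 hx), Set.indicator_of_mem hx]
    · rw [Set.indicator_of_notMem (fun h => hx (this.1 h)), Set.indicator_of_notMem hx]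
  have h0 : ∀ n ∉ S, ∫ y in s n, φ y = 0 := by
    intro n hn
    rw [hshift]
    apply setIntegral_eq_zero_of_forall_eq_zero
    intro x hx
    exact hS x hx n hn
  have := hsum.unique (hasSum_sum_of_ne_finset_zero h0)
  rw [this]
  exact Finset.sum_congr rfl (fun n _ => hshift n)

end unfold

section parseval
open UnitAddTorus
variable {d : ℕ}

/-- normalised measure -/
noncomputable local instance instMS : MeasureSpace UnitAddCircle := ⟨AddCircle.haarAddCircle⟩

local instance instHaar : Measure.IsAddHaarMeasure (volume : Measure UnitAddCircle) :=
  inferInstanceAs (Measure.IsAddHaarMeasure AddCircle.haarAddCircle)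

local instance instProb : IsProbabilityMeasure (volume : Measure UnitAddCircle) :=
  inferInstanceAs (IsProbabilityMeasure AddCircle.haarAddCircle)

/-- representative in the cube -/
noncomputable def rep (t : UnitAddTorus (Fin d)) : Fin d → ℝ :=
  (measurableEquivPiIoc (fun _ : Fin d => (0 : ℝ)) t).1

lemma measurable_rep : Measurable (rep (d := d)) :=
  measurable_subtype_coe.comp (measurableEquivPiIoc (fun _ : Fin d => (0 : ℝ))).measurable

lemma rep_coe {x : Fin d → ℝ} (hx : x ∈ cube d) :
    rep (fun i => (x i : UnitAddCircle)) = x := by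
  have := (measurableEquivPiIoc (fun _ : Fin d => (0 : ℝ))).apply_symm_apply ⟨x, hx⟩
  unfold rep
  exact congrArg Subtype.val this

/-- the additive character `exp (- 2 π i n·x)` -/
noncomputable def chi (n : Fin d → ℤ) (x : Fin d → ℝ) : ℂ :=
  Complex.exp (-(2 * Real.pi * (∑ i, (n i : ℝ) * x i) : ℝ) * Complex.I)

lemma mFourier_eq_chi (n : Fin d → ℤ) (x : Fin d → ℝ) :
    mFourier (-n) (fun i => (x i : UnitAddCircle)) = chi n x := by
  simp only [mFourier, ContinuousMap.coe_mk, fourier_coe_apply, chi]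
  rw [← Complex.exp_sum]
  congr 1
  push_cast
  rw [Finset.mul_sum, ← Finset.sum_neg_distrib, Finset.sum_mul]
  apply Finset.sum_congr rfl
  intro i _
  simp
  ring

lemma chi_add (n m : Fin d → ℤ) (x : Fin d → ℝ) : chi n (x + iv m) = chi n x := by
  unfold chi
  rw [Complex.exp_eq_exp_iff_exists_int]
  refine ⟨-∑ i, n i * m i, ?_⟩
  simp only [Pi.add_apply, iv, mul_add, Finset.sum_add_distrib]
  push_cast
  ring

lemma norm_chi (n : Fin d → ℤ) (x : Fin d → ℝ) : ‖chi n x‖ = 1 := by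
  unfold chi
  rw [← Complex.ofReal_neg]
  exact Complex.norm_exp_ofReal_mul_I _

lemma continuous_chi (n : Fin d → ℤ) : Continuous (chi n) := by
  unfold chi; fun_prop

lemma parseval_aux {g : (Fin d → ℝ) → ℂ} (hg : Continuous g) (hc : HasCompactSupport g)
    (hdis : ∀ y, ∀ n : Fin d → ℤ, n ≠ 0 → g y ≠ 0 → g (y + iv n) = 0) :
    HasSum (fun n : Fin d → ℤ => ‖∫ y, chi n y * g y‖ ^ 2) (∫ y, ‖g y‖ ^ 2) := by
  -- finite set of relevant translations
  obtain ⟨S, hS⟩ : ∃ S : Finset (Fin d → ℤ), ∀ x ∈ cube d, ∀ n ∉ S, g (x + iv n) = 0 := by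
    obtain ⟨R, hR⟩ := (hc.isCompact.isBounded).exists_norm_le
    refine ⟨Finset.Icc (fun _ => -(⌈R⌉ + 1)) (fun _ => ⌈R⌉ + 1), ?_⟩
    intro x hx n hn
    by_contra hne
    apply hn
    have h1 := hR _ (subset_tsupport _ hne)
    rw [Finset.mem_Icc]
    have h2 : ∀ i, |x i + n i| ≤ R := by
      intro i
      have := (norm_le_pi_norm (x + iv n) i).trans h1
      simpa [iv] using this
    have h3 := Int.le_ceil R
    constructor <;> intro i
    all_goals
      have h4 := abs_le.1 (h2 i)
      have h5 := hx i
      have h6 := h5.1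
      have h7 := h5.2
    · have : (-(⌈R⌉ + 1) : ℝ) ≤ n i := by linarith
      exact_mod_cast this
    · have : (n i : ℝ) ≤ ⌈R⌉ + 1 := by linarith
      exact_mod_cast this
  let f : UnitAddTorus (Fin d) → ℂ := fun t => ∑ n ∈ S, g (rep t + iv n)
  obtain ⟨M, hM⟩ := hc.exists_bound_of_continuous hg
  have hfm : Measurable f := by
    apply Finset.measurable_sum
    intro n _
    exact hg.measurable.comp (measurable_rep.add_const _)
  have hfL : MemLp f 2 volume := by
    apply MemLp.of_bound hfm.aestronglyMeasurable (S.card * M)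
    filter_upwards with t
    refine (norm_sum_le _ _).trans ?_
    refine (Finset.sum_le_sum (fun n _ => hM _)).trans ?_
    simp
  have h1 := hasSum_sq_mFourierCoeff (hfL.toLp f)
  have hcoe := hfL.coeFn_toLp
  have e1 : ∫ t, ‖(hfL.toLp f) t‖ ^ 2 = ∫ y, ‖g y‖ ^ 2 := by
    have : ∫ t, ‖(hfL.toLp f) t‖ ^ 2 = ∫ t, ‖f t‖ ^ 2 := by
      apply integral_congr_ae
      filter_upwards [hcoe] with t ht
      rw [ht]
    rw [this, integral_preimage (fun t => ‖f t‖ ^ 2) (fun _ => 0)]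
    rw [unfold_cube (φ := fun y => ‖g y‖ ^ 2) _ S]
    · rw [← integral_finsetSum]
      · apply setIntegral_congr_fun measurableSet_cube
        intro x hx
        have hx' : rep (fun i => (x i : UnitAddCircle)) = x := rep_coe hx
        simp only [f]
        rw [hx']
        by_cases hex : ∃ n ∈ S, g (x + iv n) ≠ 0
        · obtain ⟨n, hn, hne⟩ := hex
          have hz : ∀ m, m ≠ n → g (x + iv m) = 0 := by
            intro m hmn
            have := hdis _ (m - n) (sub_ne_zero.2 hmn) hne
            convert this using 2
            ext i; simp [iv]
          rw [Finset.sum_eq_single n (fun m _ h => hz m h) (fun h => absurd hn h),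
            Finset.sum_eq_single n (fun m _ h => by simp [hz m h]) (fun h => absurd hn h)]
        · push Not at hex
          rw [Finset.sum_eq_zero hex, Finset.sum_eq_zero (fun n hn => by simp [hex n hn])]
          simp
      · intro n _
        apply Integrable.integrableOn
        have : Integrable (fun y => ‖g y‖ ^ 2) := by
          apply Continuous.integrable_of_hasCompactSupport (by fun_prop)
          exact hc.comp_left (g := fun z : ℂ => ‖z‖ ^ 2) (by simp)
        exact this.comp_add_right _
    · intro x hx n hn
      simp [hS x hx n hn]
    · apply Continuous.integrable_of_hasCompactSupport (by fun_prop)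
      exact hc.comp_left (g := fun z : ℂ => ‖z‖ ^ 2) (by simp)
  have e2 : ∀ n : Fin d → ℤ, mFourierCoeff (hfL.toLp f) n = ∫ y, chi n y * g y := by
    intro n
    have hInt : Integrable (fun y => chi n y * g y) := by
      apply Continuous.integrable_of_hasCompactSupport ((continuous_chi n).mul hg)
      exact hc.mul_left
    have : mFourierCoeff (hfL.toLp f) n = mFourierCoeff f n := by
      apply integral_congr_ae
      filter_upwards [hcoe] with t ht
      rw [ht]
    rw [this, mFourierCoeff_eq_integral f n (fun _ => 0), unfold_cube hInt S]
    · rw [← integral_finsetSum]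
      · apply setIntegral_congr_fun measurableSet_cube
        intro x hx
        have hx' : rep (fun i => (x i : UnitAddCircle)) = x := rep_coe hx
        simp only [f]
        rw [hx', mFourier_eq_chi, smul_eq_mul, Finset.mul_sum]
        apply Finset.sum_congr rfl
        intro m _
        rw [chi_add]
      · intro m _
        exact (hInt.comp_add_right _).integrableOn
    · intro x hx m hm
      simp [hS x hx m hm]
  rw [e1] at h1
  simpa only [e2] using h1

end parseval
end Talata

namespace Talata
open MvPolynomial MeasureTheory

section core
open scoped FourierTransform
variable {d : ℕ}

/-- integer vector in Euclidean space -/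
noncomputable def zv (n : Fin d → ℤ) : EuclideanSpace ℝ (Fin d) := WithLp.toLp 2 (iv n)

lemma exists_kappa (B : EuclideanSpace ℝ (Fin d) ≃L[ℝ] EuclideanSpace ℝ (Fin d)) :
    ∃ κ : ℝ, 0 < κ ∧ ∀ {V : Type} [NormedAddCommGroup V] [NormedSpace ℝ V]
      (f : EuclideanSpace ℝ (Fin d) → V),
      ∫ y : Fin d → ℝ, f (B (WithLp.toLp 2 y)) = κ • ∫ x, f x := by
  have hdet : (B : EuclideanSpace ℝ (Fin d) →ₗ[ℝ] EuclideanSpace ℝ (Fin d)).det ≠ 0 :=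
    (LinearEquiv.isUnit_det' B.toLinearEquiv).ne_zero
  have hmap := Measure.map_linearMap_addHaar_eq_smul_addHaar
    (volume : Measure (EuclideanSpace ℝ (Fin d))) hdet
  refine ⟨|(LinearMap.det (B : EuclideanSpace ℝ (Fin d) →ₗ[ℝ] EuclideanSpace ℝ (Fin d)))⁻¹|,
    abs_pos.2 (inv_ne_zero hdet), ?_⟩
  intro V _ _ f
  have h1 : ∫ y : Fin d → ℝ, f (B (WithLp.toLp 2 y)) = ∫ x : EuclideanSpace ℝ (Fin d), f (B x) := by
    have := (PiLp.volume_preserving_toLp (Fin d)).integral_comp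
      (MeasurableEquiv.toLp 2 (Fin d → ℝ)).measurableEmbedding (fun x => f (B x))
    exact this
  rw [h1]
  have h2 := integral_map_equiv (μ := (volume : Measure (EuclideanSpace ℝ (Fin d))))
    B.toHomeomorph.toMeasurableEquiv f
  have h3 : Measure.map B.toHomeomorph.toMeasurableEquiv
    (volume : Measure (EuclideanSpace ℝ (Fin d))) = _ := hmap
  rw [h3, integral_smul_measure, ENNReal.toReal_ofReal (abs_nonneg _)] at h2
  exact h2.symm

/-- dual lattice sample point -/
noncomputable def XX (B : EuclideanSpace ℝ (Fin d) ≃L[ℝ] EuclideanSpace ℝ (Fin d))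
    (c : EuclideanSpace ℝ (Fin d)) (n : Fin d → ℤ) : EuclideanSpace ℝ (Fin d) :=
  ContinuousLinearMap.adjoint (B.symm : EuclideanSpace ℝ (Fin d) →L[ℝ] EuclideanSpace ℝ (Fin d))
    (zv n - c)

lemma parseval (B : EuclideanSpace ℝ (Fin d) ≃L[ℝ] EuclideanSpace ℝ (Fin d))
    (c : EuclideanSpace ℝ (Fin d)) (hB : ∀ n : Fin d → ℤ, n ≠ 0 → 2 ≤ ‖B (zv n)‖) :
    ∃ κ : ℝ, 0 < κ ∧ ∀ G : EuclideanSpace ℝ (Fin d) → ℂ, Continuous G →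
      (∀ x, 1 ≤ ‖x‖ → G x = 0) →
      HasSum (fun n => κ * ‖𝓕 G (XX B c n)‖ ^ 2) (∫ x, ‖G x‖ ^ 2) := by
  obtain ⟨κ, hκ, hInt⟩ := exists_kappa B
  refine ⟨κ, hκ, ?_⟩
  intro G hG hG0
  let E1 : (Fin d → ℝ) → ℂ := fun y =>
    Complex.exp ((2 * Real.pi * ⟪(WithLp.toLp 2 y : EuclideanSpace ℝ (Fin d)), c⟫ : ℝ) * Complex.I)
  have hE1n : ∀ y, ‖E1 y‖ = 1 := fun y => Complex.norm_exp_ofReal_mul_I _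
  let g : (Fin d → ℝ) → ℂ := fun y => E1 y * G (B (WithLp.toLp 2 y))
  have hcont : Continuous (fun y : Fin d → ℝ => B (WithLp.toLp 2 y)) :=
    B.continuous.comp (PiLp.continuous_toLp 2 _)
  have hg : Continuous g := by
    have : Continuous E1 := by
      have := PiLp.continuous_toLp 2 (fun _ : Fin d => ℝ)
      simp only [E1]
      fun_prop
    exact this.mul (hG.comp hcont)
  have hgc : HasCompactSupport g := by
    have h1 := hasCompactSupport_of_ball hG0
    have h2 : HasCompactSupport (fun y : Fin d → ℝ => G (B (WithLp.toLp 2 y))) :=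
      h1.comp_homeomorph ((PiLp.homeomorph 2 (fun _ : Fin d => ℝ)).symm.trans B.toHomeomorph)
    exact h2.mul_left
  have hdis : ∀ y, ∀ n : Fin d → ℤ, n ≠ 0 → g y ≠ 0 → g (y + iv n) = 0 := by
    intro y n hn hy
    have h1 : ‖B (WithLp.toLp 2 y)‖ < 1 := by
      by_contra h
      apply hy
      simp only [g]
      rw [hG0 _ (not_lt.1 h), mul_zero]
    have h2 : 1 ≤ ‖B (WithLp.toLp 2 (y + iv n))‖ := by
      rw [WithLp.toLp_add, map_add]
      have h3 := hB n hn
      have h4 := norm_sub_norm_le (B (zv n)) (-(B (WithLp.toLp 2 y)))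
      rw [norm_neg, sub_neg_eq_add, add_comm] at h4
      unfold zv at h3 h4
      linarith
    simp only [g]
    rw [hG0 _ h2, mul_zero]
  have hp := parseval_aux hg hgc hdis
  have e1 : ∫ y, ‖g y‖ ^ 2 = κ * ∫ x, ‖G x‖ ^ 2 := by
    rw [← smul_eq_mul, ← hInt]
    congr 1; ext y
    simp only [g]
    rw [norm_mul, hE1n, one_mul]
  have e2 : ∀ n : Fin d → ℤ, ∫ y, chi n y * g y = κ • 𝓕 G (XX B c n) := by
    intro n
    rw [Real.fourier_eq', ← hInt]
    congr 1; ext y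
    simp only [g, E1, chi, smul_eq_mul]
    rw [← mul_assoc, ← Complex.exp_add]
    congr 2
    rw [← add_mul]
    congr 1
    have h1 : ⟪B (WithLp.toLp 2 y), XX B c n⟫ =
        ⟪(WithLp.toLp 2 y : EuclideanSpace ℝ (Fin d)), zv n - c⟫ := by
      unfold XX
      rw [ContinuousLinearMap.adjoint_inner_right]
      simp
    have h2 : ⟪(WithLp.toLp 2 y : EuclideanSpace ℝ (Fin d)), zv n⟫ = ∑ i, (n i : ℝ) * y i := by
      rw [PiLp.inner_apply]
      simp [zv, iv]
    rw [h1, inner_sub_right, h2]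
    push_cast
    ring
  rw [e1] at hp
  simp only [e2] at hp
  have h3 := hp.mul_left κ⁻¹
  rw [inv_mul_cancel_left₀ hκ.ne'] at h3
  have e3 : (fun n => κ * ‖𝓕 G (XX B c n)‖ ^ 2) =
      fun n => κ⁻¹ * ‖κ • 𝓕 G (XX B c n)‖ ^ 2 := by
    ext n
    rw [norm_smul, Real.norm_of_nonneg hκ.le]
    field_simp
  rw [e3]
  exact h3

lemma dU_single (k : ℕ) (j : Fin d) (Q : MvPolynomial (Fin d) ℝ) :
    dU k (EuclideanSpace.single j (1 : ℝ)) Q = dQ k j Q := by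
  unfold dU
  rw [Finset.sum_eq_single j]
  · simp
  · intro i _ hij
    simp [hij]
  · simp

lemma core (hd : 1 ≤ d) (B : EuclideanSpace ℝ (Fin d) ≃L[ℝ] EuclideanSpace ℝ (Fin d))
    (c : EuclideanSpace ℝ (Fin d)) (hB : ∀ n : Fin d → ℤ, n ≠ 0 → 2 ≤ ‖B (zv n)‖)
    (r : ℝ) (hr : 0 ≤ r) (N : ℕ) (u : Fin N → EuclideanSpace ℝ (Fin d)) (t : Fin N → ℝ)
    (hu : ∀ i, u i ≠ 0)
    (hcov : ∀ n : Fin d → ℤ, ‖XX B c n‖ ≤ r → ∃ i, ⟪XX B c n, u i⟫ = t i) :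
    r ≤ 12 * ((N : ℝ) + d) := by
  obtain ⟨κ, hκ, hpar⟩ := parseval B c hB
  set p := N + d with hp
  obtain ⟨Q₁, Q₂, hne, hd1, hd2, hz⟩ := exists_chain N (p + 1 + 1) (by omega) u t hu
  set F := FF (p + 1 + 1) Q₁ Q₂ with hF
  have hA := hpar F (continuous_FF _ _ _) (fun x hx => FF_eq_zero (by omega) _ _ hx)
  have hD : ∀ j : Fin d, HasSum (fun n => κ * (4 * Real.pi ^ 2 * XX B c n j ^ 2 * ‖𝓕 F (XX B c n)‖ ^ 2))
      (II (2 * p + 2) (dQ (p + 2) j Q₁ * dQ (p + 2) j Q₁) +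
        II (2 * p + 2) (dQ (p + 2) j Q₂ * dQ (p + 2) j Q₂)) := by
    intro j
    have h1 := hpar (FF (p + 1) (dQ (p + 2) j Q₁) (dQ (p + 2) j Q₂)) (continuous_FF _ _ _)
      (fun x hx => FF_eq_zero (by omega) _ _ hx)
    rw [integral_normSq_FF (by omega)] at h1
    refine HasSum.congr_fun h1 (fun n => ?_)
    rw [← dU_single, ← dU_single, fourier_dU (by omega), norm_mul, norm_mul, Complex.norm_I,
      Complex.norm_real, mul_one, mul_pow, Real.norm_eq_abs, sq_abs]
    congr 1
    rw [EuclideanSpace.inner_single_left]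
    simp
    ring
  have hsum := hasSum_sum (fun j (_ : j ∈ Finset.univ) => hD j)
  rw [hF, integral_normSq_FF (by omega), ← hF] at hA
  have hle := hasSum_le (fun n => ?_) (hA.mul_left (4 * Real.pi ^ 2 * r ^ 2)) hsum
  · rw [Finset.sum_add_distrib] at hle
    have hn : 2 * N + d ≤ 2 * p + 3 := by omega
    have r1 := rayleigh hn hd1
    have r2 := rayleigh hn hd2
    have ee : 2 * (p + 1 + 1) = 2 * p + 4 := by ring
    rw [ee] at hle
    have n1 : 0 ≤ II (2 * p + 4) (Q₁ * Q₁) := II_sq_nonneg (by omega) _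
    have n2 : 0 ≤ II (2 * p + 4) (Q₂ * Q₂) := II_sq_nonneg (by omega) _
    set A := II (2 * p + 4) (Q₁ * Q₁) + II (2 * p + 4) (Q₂ * Q₂) with hAdef
    have hApos : 0 < A := by
      rcases (add_nonneg n1 n2).lt_or_eq with h | h
      · exact h
      · exfalso
        apply hne
        constructor
        · exact eq_zero_of_II (k := 2 * p + 4) (by omega) (by linarith)
        · exact eq_zero_of_II (k := 2 * p + 4) (by omega) (by linarith)
    have h1 : 4 * Real.pi ^ 2 * r ^ 2 * A ≤ 432 * ((p : ℝ) + 2) ^ 2 * A := by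
      rw [hAdef] at *
      linarith
    have h2 : 4 * Real.pi ^ 2 * r ^ 2 ≤ 432 * ((p : ℝ) + 2) ^ 2 := le_of_mul_le_mul_right h1 hApos
    have hpi := Real.pi_gt_three
    have h3 : 36 * r ^ 2 ≤ 4 * Real.pi ^ 2 * r ^ 2 := by
      apply mul_le_mul_of_nonneg_right _ (sq_nonneg r)
      nlinarith
    have h4 : r ^ 2 ≤ (4 * ((p : ℝ) + 2)) ^ 2 := by nlinarith [sq_nonneg ((p : ℝ) + 2)]
    have h5 : r ≤ 4 * ((p : ℝ) + 2) := by
      apply le_of_sq_le_sq h4 (by positivity)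
    have h6 : (1 : ℝ) ≤ d := by exact_mod_cast hd
    have h7 : (p : ℝ) = N + d := by rw [hp]; push_cast; ring
    have h8 : (0 : ℝ) ≤ N := Nat.cast_nonneg N
    rw [h7] at h5
    linarith
  · rw [← Finset.mul_sum, ← Finset.sum_mul, ← Finset.mul_sum]
    have hn : ‖XX B c n‖ ^ 2 = ∑ j, XX B c n j ^ 2 := by
      rw [EuclideanSpace.norm_sq_eq]; simp
    rw [← hn]
    by_cases hx : ‖XX B c n‖ ≤ r
    · rw [hz _ (hcov n hx)]
      simp
    · push Not at hx
      have h1 : r ^ 2 ≤ ‖XX B c n‖ ^ 2 := pow_le_pow_left₀ hr hx.le 2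
      have h2 : 0 ≤ κ * (4 * Real.pi ^ 2) * ‖𝓕 F (XX B c n)‖ ^ 2 := by positivity
      nlinarith

end core
end Talata

namespace Talata
open MeasureTheory

section john
variable {d : ℕ}

/-- stretching map along `e` -/
noncomputable def MM (b : ℝ) (e : EuclideanSpace ℝ (Fin d)) :
    EuclideanSpace ℝ (Fin d) →L[ℝ] EuclideanSpace ℝ (Fin d) :=
  b • ContinuousLinearMap.id ℝ _ + ((3 / 2 - b) • innerSL ℝ e).smulRight e

lemma MM_apply (b : ℝ) (e x : EuclideanSpace ℝ (Fin d)) :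
    MM b e x = b • x + ((3 / 2 - b) * ⟪e, x⟫) • e := by
  simp [MM]

lemma det_MM (hd : 1 ≤ d) {b : ℝ} (hb : 0 < b) {e : EuclideanSpace ℝ (Fin d)} (he : ‖e‖ = 1) :
    (MM b e).det = b ^ (d - 1) * (3 / 2) := by
  have h1 : (MM b e : EuclideanSpace ℝ (Fin d) →ₗ[ℝ] EuclideanSpace ℝ (Fin d)) =
      b • LinearMap.transvection
        (((3 / 2 - b) / b) • (innerSL ℝ e : EuclideanSpace ℝ (Fin d) →ₗ[ℝ] ℝ)) e := by
    ext1 x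
    show MM b e x = _
    rw [MM_apply]
    simp only [LinearMap.smul_apply, LinearMap.transvection.apply, smul_add, smul_smul]
    congr 2
    simp
    field_simp
  show LinearMap.det (MM b e : EuclideanSpace ℝ (Fin d) →ₗ[ℝ] EuclideanSpace ℝ (Fin d)) = _
  rw [h1, LinearMap.det_smul, LinearMap.transvection.det]
  have h2 : (((3 / 2 - b) / b) • (innerSL ℝ e : EuclideanSpace ℝ (Fin d) →ₗ[ℝ] ℝ)) e =
      (3 / 2 - b) / b := by
    simp [he]
  rw [h2, finrank_euclideanSpace, Fintype.card_fin]
  obtain ⟨m, rfl⟩ : ∃ m, d = m + 1 := ⟨d - 1, by omega⟩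
  rw [Nat.add_sub_cancel, pow_succ]
  field_simp
  ring

lemma MM_symm (b : ℝ) (e v x : EuclideanSpace ℝ (Fin d)) : ⟪v, MM b e x⟫ = ⟪MM b e v, x⟫ := by
  rw [MM_apply, MM_apply]
  simp only [inner_add_left, inner_add_right, inner_smul_left, inner_smul_right]
  rw [real_inner_comm v e]
  simp
  ring

lemma norm_MM (b : ℝ) {e : EuclideanSpace ℝ (Fin d)} (he : ‖e‖ = 1) (v) :
    ‖MM b e v‖ ^ 2 = b ^ 2 * ‖v‖ ^ 2 + (9 / 4 - b ^ 2) * ⟪e, v⟫ ^ 2 := by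
  rw [← real_inner_self_eq_norm_sq, MM_apply]
  simp only [inner_add_left, inner_add_right, inner_smul_left, inner_smul_right]
  rw [real_inner_self_eq_norm_sq, real_inner_self_eq_norm_sq, he, real_inner_comm e v]
  simp
  ring

lemma support_ineq {t b n α m : ℝ} (ht : 3 < t) (hb : b ^ 2 = 1 - 1 / (t - 1)) (hn : 0 ≤ n)
    (hα : |α| ≤ n) (hm : m ^ 2 = b ^ 2 * n ^ 2 + (9 / 4 - b ^ 2) * α ^ 2) :
    α / 2 + m ≤ max n (t * α) := by
  have h1 := (abs_le.1 hα)
  have ht1 : 0 < t - 1 := by linarith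
  rcases le_total n (t * α) with h | h
  · rw [max_eq_right h]
    have hα0 : 0 ≤ α := by
      by_contra hneg
      push Not at hneg
      nlinarith
    have h2 : m ^ 2 ≤ ((t - 1 / 2) * α) ^ 2 := by
      have h3 : n ^ 2 ≤ (t * α) ^ 2 := pow_le_pow_left₀ hn h 2
      have h4 : b ^ 2 * n ^ 2 ≤ b ^ 2 * (t * α) ^ 2 := mul_le_mul_of_nonneg_left h3 (sq_nonneg b)
      have h5 : b ^ 2 * (t ^ 2 - 1) = t ^ 2 - t - 2 := by
        rw [hb]; field_simp; ring
      have h6 : b ^ 2 * (t * α) ^ 2 + (9 / 4 - b ^ 2) * α ^ 2 = ((t - 1 / 2) * α) ^ 2 := by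
        linear_combination α ^ 2 * h5
      linarith
    have h7 : m ≤ (t - 1 / 2) * α :=
      le_of_sq_le_sq h2 (by apply mul_nonneg _ hα0; linarith)
    linarith
  · rw [max_eq_left h]
    have h2 : m ^ 2 ≤ (n - α / 2) ^ 2 := by
      have h3 : (n - α / 2) ^ 2 - m ^ 2 = (n + α) * ((n - t * α) / (t - 1)) := by
        rw [hm, hb]; field_simp; ring
      have h4 : 0 ≤ (n + α) * ((n - t * α) / (t - 1)) :=
        mul_nonneg (by linarith) (div_nonneg (by linarith) ht1.le)
      linarith
    have h7 : m ≤ n - α / 2 := le_of_sq_le_sq h2 (by linarith)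
    linarith

lemma det_gt {t b : ℝ} (hd : 1 ≤ d) (ht : 2 * (d : ℝ) + 1 < t) (hb0 : 0 < b)
    (hb : b ^ 2 = 1 - 1 / (t - 1)) : 1 < b ^ (d - 1) * (3 / 2) := by
  obtain ⟨m, rfl⟩ : ∃ m, d = m + 1 := ⟨d - 1, by omega⟩
  rw [Nat.add_sub_cancel]
  push_cast at ht
  have hm : (0 : ℝ) ≤ m := Nat.cast_nonneg m
  have ht1 : 0 < t - 1 := by linarith
  have h1 : 1 + (m : ℝ) * (-(1 / (t - 1))) ≤ (1 + -(1 / (t - 1))) ^ m := by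
    apply one_add_mul_le_pow
    have : 1 / (t - 1) ≤ 1 := by
      rw [div_le_one ht1]; linarith
    linarith
  have h2 : (m : ℝ) * (1 / (t - 1)) ≤ 1 / 2 := by
    rw [mul_one_div, div_le_div_iff₀ ht1 (by norm_num)]
    linarith
  have h3 : (1 + -(1 / (t - 1))) ^ m = (b ^ m) ^ 2 := by
    rw [← sub_eq_add_neg, ← hb, ← pow_mul, ← pow_mul, mul_comm]
  have h4 : 1 / 2 ≤ (b ^ m) ^ 2 := by rw [← h3]; linarith
  have h5 : 0 < b ^ m := pow_pos hb0 m
  nlinarith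

lemma john (hd : 1 ≤ d) {K : Set (EuclideanSpace ℝ (Fin d))} (hK : IsCompact K) (hc : Convex ℝ K)
    (hi : (interior K).Nonempty) :
    ∃ (A : EuclideanSpace ℝ (Fin d) ≃L[ℝ] EuclideanSpace ℝ (Fin d)) (c : EuclideanSpace ℝ (Fin d)),
      (∀ x, ‖x‖ ≤ 1 → c + A x ∈ K) ∧ ∀ p ∈ K, ‖A.symm (p - c)‖ ≤ 2 * d + 1 := by
  let S : Set ((EuclideanSpace ℝ (Fin d) →L[ℝ] EuclideanSpace ℝ (Fin d)) × EuclideanSpace ℝ (Fin d)) :=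
    {P | ∀ x, ‖x‖ ≤ 1 → P.2 + P.1 x ∈ K}
  have hSclosed : IsClosed S := by
    have : S = ⋂ x : {x : EuclideanSpace ℝ (Fin d) // ‖x‖ ≤ 1},
        (fun P : (EuclideanSpace ℝ (Fin d) →L[ℝ] EuclideanSpace ℝ (Fin d)) × EuclideanSpace ℝ (Fin d) =>
          P.2 + P.1 x.1) ⁻¹' K := by
      ext P
      simp [S]
    rw [this]
    apply isClosed_iInter
    intro x
    apply hK.isClosed.preimage
    fun_prop
  have hScompact : IsCompact S := by
    obtain ⟨R, hR⟩ := hK.isBounded.exists_norm_le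
    have hR0 : 0 ≤ R := by
      obtain ⟨x, hx⟩ := hi
      exact (norm_nonneg x).trans (hR x (interior_subset hx))
    haveI : ProperSpace (EuclideanSpace ℝ (Fin d) →L[ℝ] EuclideanSpace ℝ (Fin d)) :=
      FiniteDimensional.proper ℝ _
    apply Metric.isCompact_of_isClosed_isBounded hSclosed
    rw [isBounded_iff_forall_norm_le]
    refine ⟨2 * R, ?_⟩
    rintro ⟨A, c⟩ hP
    have hcK : ‖c‖ ≤ R := by
      have := hR _ (hP 0 (by simp))
      simpa using this
    rw [Prod.norm_def]
    apply max_le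
    · apply ContinuousLinearMap.opNorm_le_of_unit_norm (by positivity)
      intro x hx
      have h1 := hR _ (hP x hx.le)
      have h2 := norm_sub_norm_le (A x) (-c)
      rw [norm_neg, sub_neg_eq_add, add_comm] at h2
      simp only at h1 h2 ⊢
      linarith
    · simp only
      linarith
  have hdetcont : Continuous (fun P : (EuclideanSpace ℝ (Fin d) →L[ℝ] EuclideanSpace ℝ (Fin d)) ×
      EuclideanSpace ℝ (Fin d) => |P.1.det|) :=
    (ContinuousLinearMap.continuous_det.comp continuous_fst).abs
  -- a nondegenerate element
  obtain ⟨P₀, hP₀, hP₀det⟩ : ∃ P ∈ S, 0 < |P.1.det| := by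
    obtain ⟨c, hcK⟩ := hi
    obtain ⟨ε, hε, hball⟩ := Metric.isOpen_iff.1 isOpen_interior c hcK
    refine ⟨((ε / 2) • ContinuousLinearMap.id ℝ _, c), ?_, ?_⟩
    · intro x hx
      apply interior_subset
      apply hball
      simp only [Metric.mem_ball, dist_self_add_left]
      show ‖(ε / 2) • x‖ < ε
      rw [norm_smul, Real.norm_of_nonneg (by positivity)]
      nlinarith [norm_nonneg x]
    · rw [abs_pos]
      show LinearMap.det ((ε / 2) • LinearMap.id : EuclideanSpace ℝ (Fin d) →ₗ[ℝ] _) ≠ 0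
      rw [LinearMap.det_smul, LinearMap.det_id]
      positivity
  obtain ⟨⟨A, c⟩, hAS, hmax⟩ := hScompact.exists_isMaxOn ⟨P₀, hP₀⟩ hdetcont.continuousOn
  have hdetpos : 0 < |A.det| := hP₀det.trans_le (hmax hP₀)
  have hdet : A.det ≠ 0 := abs_pos.1 hdetpos
  refine ⟨A.toContinuousLinearEquivOfDetNeZero hdet, c, fun x hx => hAS x hx, ?_⟩
  intro p hp
  by_contra hbig
  push Not at hbig
  set q := (A.toContinuousLinearEquivOfDetNeZero hdet).symm (p - c) with hq
  have hAq : A q = p - c := (A.toContinuousLinearEquivOfDetNeZero hdet).apply_symm_apply (p - c)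
  set t := ‖q‖ with ht
  have hd' : (1 : ℝ) ≤ d := by exact_mod_cast hd
  have ht3 : 3 < t := by linarith
  have ht0 : 0 < t := by linarith
  let e := t⁻¹ • q
  have he : ‖e‖ = 1 := by
    simp only [e]
    rw [norm_smul, norm_inv, Real.norm_of_nonneg ht0.le, ← ht]
    field_simp
  have hqe : q = t • e := by
    simp only [e]
    rw [smul_smul, mul_inv_cancel₀ ht0.ne', one_smul]
  have hs : 0 < 1 - 1 / (t - 1) := by
    have : 1 / (t - 1) < 1 := by rw [div_lt_one (by linarith)]; linarith
    linarith
  let b := Real.sqrt (1 - 1 / (t - 1))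
  have hb0 : 0 < b := Real.sqrt_pos.2 hs
  have hb : b ^ 2 = 1 - 1 / (t - 1) := Real.sq_sqrt hs.le
  have hnew : (A.comp (MM b e), c + A ((1 / 2 : ℝ) • e)) ∈ S := by
    intro x hx
    by_contra hnot
    obtain ⟨f, s, hfs, hsf⟩ := geometric_hahn_banach_closed_point hc hK.isClosed hnot
    let v := (InnerProductSpace.toDual ℝ (EuclideanSpace ℝ (Fin d))).symm (f.comp A)
    have hv : ∀ y, f (A y) = ⟪v, y⟫ := by
      intro y
      simp only [v]
      rw [InnerProductSpace.toDual_symm_apply]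
      rfl
    have h1 : f c + ‖v‖ < s := by
      by_cases hv0 : v = 0
      · have := hfs _ (hAS 0 (by simp))
        simpa [hv0] using this
      · have hvp : 0 < ‖v‖ := norm_pos_iff.2 hv0
        have := hfs _ (hAS (‖v‖⁻¹ • v) (by rw [norm_smul, norm_inv, norm_norm, inv_mul_cancel₀ hvp.ne']))
        simp only at this
        rw [map_add, hv, inner_smul_right, real_inner_self_eq_norm_sq] at this
        have e1 : ‖v‖⁻¹ * ‖v‖ ^ 2 = ‖v‖ := by field_simp
        rw [e1] at this
        exact this
    have h2 : f c + t * ⟪e, v⟫ < s := by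
      have := hfs p hp
      have e1 : p = c + A q := by rw [hAq]; abel
      rw [e1, map_add, hv, hqe, inner_smul_right, real_inner_comm] at this
      exact this
    have h3 : f (c + A ((1 / 2 : ℝ) • e) + (A.comp (MM b e)) x) ≤ f c + (⟪e, v⟫ / 2 + ‖MM b e v‖) := by
      rw [map_add, map_add, hv]
      have e1 : f ((A.comp (MM b e)) x) = ⟪MM b e v, x⟫ := by
        rw [← MM_symm]; exact hv _
      rw [e1, inner_smul_right, real_inner_comm]
      have h4 : ⟪MM b e v, x⟫ ≤ ‖MM b e v‖ := by
        refine (real_inner_le_norm _ _).trans ?_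
        nlinarith [norm_nonneg (MM b e v)]
      linarith
    have h5 := support_ineq (m := ‖MM b e v‖) ht3 hb (norm_nonneg v)
      (by simpa [he] using abs_real_inner_le_norm e v) (norm_MM b he v)
    have h6 : max ‖v‖ (t * ⟪e, v⟫) < s - f c := max_lt (by linarith) (by linarith)
    simp only at hsf
    linarith
  have h7 := hmax hnew
  simp only [Set.mem_setOf_eq] at h7
  have h8 : (A.comp (MM b e)).det = A.det * (MM b e).det := by
    show LinearMap.det ((A : EuclideanSpace ℝ (Fin d) →ₗ[ℝ] EuclideanSpace ℝ (Fin d)) ∘ₗ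
      (MM b e : EuclideanSpace ℝ (Fin d) →ₗ[ℝ] EuclideanSpace ℝ (Fin d))) = _
    rw [LinearMap.det_comp]
  rw [h8, det_MM hd hb0 he, abs_mul] at h7
  have h9 := det_gt hd hbig hb0 hb
  rw [abs_of_pos (zero_lt_one.trans h9)] at h7
  nlinarith

end john
end Talata

namespace Talata
section
variable {d : ℕ}

lemma width_le {K : Set (EuclideanSpace ℝ (Fin d))} (hne : K.Nonempty) (hK : IsCompact K)
    {y : EuclideanSpace ℝ (Fin d)} (hy : y ≠ 0) (hyz : ∀ i, ∃ z : ℤ, y i = (z : ℝ))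
    {a m : ℝ} (h : ∀ p ∈ K, |⟪p, y⟫ - a| ≤ m) : latticeWidth K ≤ 2 * m := by
  have hcont : ∀ y : EuclideanSpace ℝ (Fin d), IsCompact ((fun x => ⟪x, y⟫) '' K) := fun y =>
    hK.image (by fun_prop)
  have hle : latticeWidth K ≤
      sSup ((fun x => ⟪x, y⟫) '' K) - sInf ((fun x => ⟪x, y⟫) '' K) := by
    apply csInf_le
    · refine ⟨0, ?_⟩
      rintro w ⟨y', -, -, rfl⟩
      have := Real.sInf_le_sSup _ (hcont y').bddBelow (hcont y').bddAbove
      linarith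
    · exact ⟨y, hy, hyz, rfl⟩
  have h1 : sSup ((fun x => ⟪x, y⟫) '' K) ≤ a + m := by
    apply csSup_le (hne.image _)
    rintro _ ⟨p, hp, rfl⟩
    have := (abs_le.1 (h p hp)).2
    simp only
    linarith
  have h2 : a - m ≤ sInf ((fun x => ⟪x, y⟫) '' K) := by
    apply le_csInf (hne.image _)
    rintro _ ⟨p, hp, rfl⟩
    have := (abs_le.1 (h p hp)).1
    simp only
    linarith
  linarith

lemma adj_equiv (A : EuclideanSpace ℝ (Fin d) ≃L[ℝ] EuclideanSpace ℝ (Fin d)) {r : ℝ}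
    (hr : 0 < r) :
    ∃ B : EuclideanSpace ℝ (Fin d) ≃L[ℝ] EuclideanSpace ℝ (Fin d),
      (∀ x, B x = r⁻¹ • ContinuousLinearMap.adjoint
        (A : EuclideanSpace ℝ (Fin d) →L[ℝ] EuclideanSpace ℝ (Fin d)) x) ∧
      ∀ x, ContinuousLinearMap.adjoint
        (B.symm : EuclideanSpace ℝ (Fin d) →L[ℝ] EuclideanSpace ℝ (Fin d)) x = r • A.symm x := by
  have e1 : ∀ x y, ⟪A x, y⟫ = ⟪x, ContinuousLinearMap.adjoint
        (A : EuclideanSpace ℝ (Fin d) →L[ℝ] EuclideanSpace ℝ (Fin d)) y⟫ := fun x y => by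
    rw [ContinuousLinearMap.adjoint_inner_right]; rfl
  have e2 : ∀ x y, ⟪A.symm x, y⟫ = ⟪x, ContinuousLinearMap.adjoint
        (A.symm : EuclideanSpace ℝ (Fin d) →L[ℝ] EuclideanSpace ℝ (Fin d)) y⟫ := fun x y => by
    rw [ContinuousLinearMap.adjoint_inner_right]; rfl
  set A' := ContinuousLinearMap.adjoint
        (A : EuclideanSpace ℝ (Fin d) →L[ℝ] EuclideanSpace ℝ (Fin d))
  set A'' := ContinuousLinearMap.adjoint
        (A.symm : EuclideanSpace ℝ (Fin d) →L[ℝ] EuclideanSpace ℝ (Fin d)) with hA''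
  have l1 : ∀ x, A'' (A' x) = x := fun x => by
    apply ext_inner_left ℝ
    intro z
    rw [← e2, ← e1, A.apply_symm_apply]
  have l2 : ∀ x, A' (A'' x) = x := fun x => by
    apply ext_inner_left ℝ
    intro z
    rw [← e1, ← e2, A.symm_apply_apply]
  refine ⟨ContinuousLinearEquiv.equivOfInverse (r⁻¹ • A') (r • A'') ?_ ?_, ?_, ?_⟩
  · intro x
    simp [l1, smul_smul, hr.ne']
  · intro x
    simp [l2, smul_smul, hr.ne']
  · intro x
    rfl
  · intro x
    apply ext_inner_left ℝ
    intro z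
    rw [ContinuousLinearMap.adjoint_inner_right]
    show ⟪r • A'' z, x⟫ = _
    rw [real_inner_smul_left, real_inner_smul_right, real_inner_comm, ← e2, real_inner_comm]

lemma final (hd : 1 ≤ d) {K : Set (EuclideanSpace ℝ (Fin d))}
    (hK : IsCompact K) (hc : Convex ℝ K) (hi : (interior K).Nonempty)
    (N : ℕ) (v : Fin N → EuclideanSpace ℝ (Fin d)) (t : Fin N → ℝ) (hv : ∀ i, v i ≠ 0)
    (hcov : ∀ x ∈ K, (∀ j, ∃ z : ℤ, x j = (z : ℝ)) → ∃ i, ⟪x, v i⟫ = t i) :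
    1 / 144 * latticeWidth K / d - d ≤ (N : ℝ) := by
  have hd' : (1 : ℝ) ≤ d := by exact_mod_cast hd
  have hN : (0 : ℝ) ≤ N := Nat.cast_nonneg N
  rcases le_or_gt (latticeWidth K) 0 with hw | hw
  · have : 1 / 144 * latticeWidth K / d ≤ 0 :=
      div_nonpos_of_nonpos_of_nonneg (by linarith) (by linarith)
    linarith
  obtain ⟨A, c, hin, hout⟩ := john hd hK hc hi
  set w := latticeWidth K with hwdef
  set r := w / (8 * d + 4) with hrdef
  have hr : 0 < r := by positivity
  have hwr : w = r * (8 * d + 4) := by rw [hrdef]; field_simp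
  obtain ⟨B, hB1, hB2⟩ := adj_equiv A hr
  have e1 : ∀ x y, ⟪A x, y⟫ = r * ⟪x, B y⟫ := fun x y => by
    rw [hB1, real_inner_smul_right, ContinuousLinearMap.adjoint_inner_right]
    field_simp
    rfl
  have hzint : ∀ n : Fin d → ℤ, ∀ j, ∃ z : ℤ, zv n j = (z : ℝ) := fun n j => ⟨n j, rfl⟩
  have hzne : ∀ n : Fin d → ℤ, n ≠ 0 → zv n ≠ 0 := by
    intro n hn h0
    apply hn
    funext j
    have : (zv n) j = 0 := by rw [h0]; rfl
    have h2 : ((n j : ℤ) : ℝ) = 0 := this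
    exact_mod_cast h2
  have hBn : ∀ n : Fin d → ℤ, n ≠ 0 → 2 ≤ ‖B (zv n)‖ := by
    intro n hn
    have := width_le (hi.mono interior_subset) hK (hzne n hn) (hzint n) (a := ⟪c, zv n⟫)
      (m := r * ((2 * d + 1) * ‖B (zv n)‖)) (by
        intro p hp
        rw [← inner_sub_left]
        have h1 : p - c = A (A.symm (p - c)) := (A.apply_symm_apply _).symm
        rw [h1, e1, abs_mul, abs_of_pos hr]
        apply mul_le_mul_of_nonneg_left _ hr.le
        exact (abs_real_inner_le_norm _ _).trans
          (mul_le_mul_of_nonneg_right (hout p hp) (norm_nonneg _)))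
    rw [← hwdef, hwr] at this
    have h3 : (r * (4 * d + 2)) * 2 ≤ (r * (4 * d + 2)) * ‖B (zv n)‖ := by nlinarith
    exact le_of_mul_le_mul_left h3 (by positivity)
  have hXX : ∀ n, XX B c n = r • A.symm (zv n - c) := fun n => hB2 _
  have hcore := core hd B c hBn r hr.le N (fun i => B (v i)) (fun i => t i - ⟪c, v i⟫)
    (fun i h => hv i (by simpa using h)) (by
      intro n hn
      rw [hXX, norm_smul, Real.norm_of_nonneg hr.le] at hn
      have h1 : ‖A.symm (zv n - c)‖ ≤ 1 := by
        by_contra h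
        push Not at h
        nlinarith
      have h2 := hin _ h1
      rw [A.apply_symm_apply, add_sub_cancel] at h2
      obtain ⟨i, hi⟩ := hcov _ h2 (hzint n)
      refine ⟨i, ?_⟩
      rw [hXX, real_inner_smul_left, ← e1, A.apply_symm_apply, inner_sub_left, hi])
  have h5 : w ≤ 12 * (N + d) * (12 * d) := by
    rw [hwr]
    apply mul_le_mul hcore (by linarith) (by positivity) (by positivity)
  have h6 : 1 / 144 * w / d ≤ N + d := by
    rw [div_le_iff₀ (by linarith)]
    linarith
  linarith

end
end Talata

/-- **Talata's theorem.** There is an absolute constant `c > 0` such that whenever the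
integer points of a convex body `K ⊆ ℝ^d` are covered by `N` hyperplanes
`{x | ⟪x, v i⟫ = t i}`, one has `N ≥ c · w(K, ℤ^d)/d − d`. -/
theorem talata_lattice_points_hyperplanes :
    ∃ c : ℝ, 0 < c ∧ ∀ (d : ℕ), 1 ≤ d →
      ∀ (K : Set (EuclideanSpace ℝ (Fin d))),
        IsCompact K → Convex ℝ K → (interior K).Nonempty →
      ∀ (N : ℕ) (v : Fin N → EuclideanSpace ℝ (Fin d)) (t : Fin N → ℝ),
        (∀ i, v i ≠ 0) →
        (∀ x ∈ K, (∀ j, ∃ z : ℤ, x j = (z : ℝ)) → ∃ i, ⟪x, v i⟫ = t i) →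
        c * latticeWidth K / d - d ≤ (N : ℝ) := by
  refine ⟨1 / 144, by norm_num, ?_⟩
  intro d hd K hK hc hi N v t hv hcov
  exact Talata.final hd hK hc hi N v t hv hcov
end

section
/- Let d ≥ 2 and let B^d be the closed unit ball centered at the origin in E^d. Let P_1 and P_2 be planks of widths w_1 > 0 and w_2 > 0 with w_1 + w_2 < 2, and let P be any plank of width w_1 + w_2 having the origin as a center of symmetry (i.e., P = {x : |⟨x,u⟩| ≤ (w_1+w_2)/2} for some unit vector u). Then vol_d((P_1 ∪ P_2) ∩ B^d) ≤ vol_d(P ∩ B^d), with equality only if P_1 ∪ P_2 is itself a plank of width w_1 + w_2 with the origin as a center of symmetry. -/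
open MeasureTheory
open scoped RealInnerProductSpace

/-- `P` is a plank of width `w`: the set of points between two parallel hyperplanes
at distance `w`. -/
def IsPlank {d : ℕ} (P : Set (EuclideanSpace ℝ (Fin d))) (w : ℝ) : Prop :=
  0 < w ∧ ∃ (u c : EuclideanSpace ℝ (Fin d)), ‖u‖ = 1 ∧
    P = {x | |⟪x - c, u⟫| ≤ w / 2}

open scoped ENNReal

/-- `t ↦ t^{-1/2}` extended by zero -/
noncomputable def hk (t : ℝ) : ℝ≥0∞ := ENNReal.ofReal (√t)⁻¹

lemma hk_meas : Measurable hk := by unfold hk; fun_prop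

lemma hk_zero {t : ℝ} (ht : t ≤ 0) : hk t = 0 := by
  simp [hk, Real.sqrt_eq_zero_of_nonpos ht]

lemma hk_pos {t : ℝ} (ht : 0 < t) : 0 < hk t := by
  simp [hk, ht]

lemma hk_mul {a b : ℝ} (ha : 0 ≤ a) : hk (a * b) = hk a * hk b := by
  unfold hk
  rw [Real.sqrt_mul ha, mul_inv, ENNReal.ofReal_mul (by positivity)]

lemma J_pos {ρ : ℝ} (hρ : 0 < ρ) : ∫⁻ y, hk (ρ ^ 2 - y ^ 2) = ENNReal.ofReal Real.pi := by
  have hle : -ρ ≤ ρ := by linarith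
  have hcont : ContinuousOn (fun y => Real.arcsin (y / ρ)) (Set.Icc (-ρ) ρ) := by
    apply Continuous.continuousOn; fun_prop
  have hder : ∀ y ∈ Set.Ioo (-ρ) ρ,
      HasDerivAt (fun y => Real.arcsin (y / ρ)) (√(ρ ^ 2 - y ^ 2))⁻¹ y := by
    intro y hy
    have h1 : y / ρ < 1 := by rw [div_lt_one hρ]; exact hy.2
    have h2 : -1 < y / ρ := by rw [lt_div_iff₀ hρ]; linarith [hy.1]
    have := (Real.hasDerivAt_arcsin h2.ne' h1.ne).comp y ((hasDerivAt_id y).div_const ρ)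
    refine this.congr_deriv ?_
    have : ρ ^ 2 - y ^ 2 = ρ ^ 2 * (1 - (y / ρ) ^ 2) := by field_simp
    rw [this, Real.sqrt_mul (by positivity), Real.sqrt_sq hρ.le]
    simp [mul_inv, mul_comm]
  have hint : IntegrableOn (fun y => (√(ρ ^ 2 - y ^ 2))⁻¹) (Set.Ioc (-ρ) ρ) :=
    intervalIntegral.integrableOn_deriv_of_nonneg hcont hder (fun y _ => by positivity)
  have hI := intervalIntegral.integral_eq_sub_of_hasDerivAt_of_le hle hcont hder
    ((intervalIntegrable_iff_integrableOn_Ioc_of_le hle).2 hint)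
  rw [intervalIntegral.integral_of_le hle] at hI
  have e1 : ρ / ρ = 1 := by field_simp
  have e2 : -ρ / ρ = -1 := by field_simp
  have hI2 : ∫ y in Set.Ioc (-ρ) ρ, (√(ρ ^ 2 - y ^ 2))⁻¹ = Real.pi := by
    rw [hI, e1, e2]; simp
  rw [← hI2, ofReal_integral_eq_lintegral_ofReal hint (Filter.Eventually.of_forall fun y => by positivity),
    ← lintegral_indicator measurableSet_Ioc]
  apply lintegral_congr
  intro y
  by_cases hy : y ∈ Set.Ioc (-ρ) ρ
  · simp [hy, hk]
  · rw [Set.indicator_of_notMem hy, hk_zero]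
    by_contra hc
    push Not at hc
    have := abs_lt_of_sq_lt_sq (a := y) (b := ρ) (by linarith) hρ.le
    exact hy ⟨by linarith [abs_lt.1 this], by linarith [abs_lt.1 this]⟩

lemma J_eq (c : ℝ) : ∫⁻ y, hk (c - y ^ 2) = if 0 < c then ENNReal.ofReal Real.pi else 0 := by
  split_ifs with h
  · rw [← J_pos (Real.sqrt_pos.2 h), Real.sq_sqrt h.le]
  · have : ∀ y : ℝ, hk (c - y ^ 2) = 0 := fun y => hk_zero (by nlinarith [sq_nonneg y])
    simp [this]

lemma K_eq (a b : ℝ) : ∫⁻ t, hk (b - t) * hk (t - a) =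
    if a < b then ENNReal.ofReal Real.pi else 0 := by
  split_ifs with h
  · rw [← J_pos (ρ := (b - a) / 2) (by linarith),
      ← lintegral_sub_right_eq_self (fun y => hk (((b - a) / 2) ^ 2 - y ^ 2)) ((a + b) / 2)]
    apply lintegral_congr
    intro t
    have : ((b - a) / 2) ^ 2 - (t - (a + b) / 2) ^ 2 = (b - t) * (t - a) := by ring
    rw [this]
    by_cases hb : 0 ≤ b - t
    · rw [hk_mul hb]
    · push Not at hb
      rw [hk_zero hb.le, zero_mul, hk_zero (by nlinarith)]
  · have : ∀ t : ℝ, hk (b - t) * hk (t - a) = 0 := fun t => by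
      rcases le_total (b - t) 0 with h1 | h1
      · simp [hk_zero h1]
      · rw [hk_zero (t := t - a) (by linarith)]; simp
    simp [this]

/-- the measure with density `(t-|p|^2)^{-1/2}` -/
noncomputable def dm (t : ℝ) (A : Set (ℝ × ℝ)) : ℝ≥0∞ :=
  ∫⁻ p in A, hk (t - (p.1 ^ 2 + p.2 ^ 2))

lemma dm_strip (t : ℝ) (I : Set ℝ) (hI : MeasurableSet I) :
    dm t {p | p.1 ∈ I} = ENNReal.ofReal Real.pi * volume (I ∩ {x | x ^ 2 < t}) := by
  have hm := hk_meas
  have hS : MeasurableSet {x : ℝ | x ^ 2 < t} := measurableSet_lt (by fun_prop) (by fun_prop)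
  unfold dm
  have : {p : ℝ × ℝ | p.1 ∈ I} = I ×ˢ Set.univ := by ext; simp
  rw [this, Measure.volume_eq_prod, ← Measure.prod_restrict, lintegral_prod _ (by fun_prop)]
  simp only [← sub_sub, Measure.restrict_univ, J_eq, sub_pos]
  have : ∀ x : ℝ, (if x ^ 2 < t then ENNReal.ofReal Real.pi else 0) =
    Set.indicator {x : ℝ | x ^ 2 < t} (fun _ => ENNReal.ofReal Real.pi) x := by
    intro x; simp [Set.indicator_apply]
  simp only [this]
  rw [lintegral_indicator hS, lintegral_const, Measure.restrict_restrict hS, Measure.restrict_apply .univ,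
    Set.univ_inter, Set.inter_comm]

lemma rot_mp {c s : ℝ} (h : c ^ 2 + s ^ 2 = 1) :
    MeasurePreserving (fun p : ℝ × ℝ => (c * p.1 + s * p.2, -s * p.1 + c * p.2)) volume volume := by
  let M : Matrix (Fin 2) (Fin 2) ℝ := !![c, s; -s, c]
  let f : ℝ × ℝ →ₗ[ℝ] ℝ × ℝ := Matrix.toLin (Module.Basis.finTwoProd ℝ) (Module.Basis.finTwoProd ℝ) M
  have hdet : LinearMap.det f = 1 := by
    rw [LinearMap.det_toLin]; simp [M, Matrix.det_fin_two]; nlinarith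
  have hf : (f : ℝ × ℝ → ℝ × ℝ) = fun p : ℝ × ℝ => (c * p.1 + s * p.2, -s * p.1 + c * p.2) := by
    funext p
    simp [f, M, Matrix.toLin_finTwoProd_apply]
  refine ⟨by fun_prop, ?_⟩
  rw [← hf, Measure.map_linearMap_addHaar_eq_smul_addHaar _ (by rw [hdet]; simp), hdet]
  simp

lemma dm_strip_rot (t : ℝ) (I : Set ℝ) (hI : MeasurableSet I) {c s : ℝ} (h : c ^ 2 + s ^ 2 = 1) :
    dm t {p | c * p.1 + s * p.2 ∈ I} = dm t {p | p.1 ∈ I} := by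
  have hm := hk_meas
  unfold dm
  rw [← (rot_mp h).setLIntegral_comp_preimage (s := {p : ℝ × ℝ | p.1 ∈ I}) (hI.preimage measurable_fst) (by fun_prop)]
  have : ∀ p : ℝ × ℝ, (c * p.1 + s * p.2) ^ 2 + (-s * p.1 + c * p.2) ^ 2 = p.1 ^ 2 + p.2 ^ 2 := by
    intro p
    linear_combination (p.1 ^ 2 + p.2 ^ 2) * h
  simp only [this]
  rfl

lemma dm_mono (t : ℝ) {A B : Set (ℝ × ℝ)} (h : A ⊆ B) : dm t A ≤ dm t B :=
  lintegral_mono_set h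

lemma dm_disc (t : ℝ) {A : Set (ℝ × ℝ)} (h : ∀ p : ℝ × ℝ, p.1 ^ 2 + p.2 ^ 2 < t → p ∈ A) (hA : MeasurableSet A) :
    dm t A = dm t Set.univ := by
  unfold dm
  rw [← lintegral_indicator hA, setLIntegral_univ]
  apply lintegral_congr
  intro p
  by_cases hp : p ∈ A
  · simp [hp]
  · rw [Set.indicator_of_notMem hp, hk_zero]
    by_contra hc
    exact hp (h p (by linarith))

lemma dm_univ_lt (t : ℝ) : dm t Set.univ < ⊤ := by
  have h := dm_strip t Set.univ .univ
  simp only [Set.mem_univ, Set.setOf_true, Set.univ_inter] at h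
  rw [h]
  refine ENNReal.mul_lt_top (by simp) ?_
  refine lt_of_le_of_lt (measure_mono (t := Set.Icc (-(|t|+1)) (|t|+1)) ?_) (by simp)
  intro x hx
  have : x ^ 2 < t := hx
  have h2 : |x| < |t| + 1 := abs_lt_of_sq_lt_sq (by nlinarith [le_abs_self t, abs_nonneg t]) (by positivity)
  exact ⟨by linarith [abs_lt.1 h2], by linarith [abs_lt.1 h2]⟩

lemma dm_pos (t : ℝ) {O : Set (ℝ × ℝ)} (hO : IsOpen O) {p : ℝ × ℝ} (hp : p ∈ O)
    (hpt : p.1 ^ 2 + p.2 ^ 2 < t) : dm t O ≠ 0 := by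
  have hm := hk_meas
  intro h0
  unfold dm at h0
  rw [lintegral_eq_zero_iff (by fun_prop), Filter.EventuallyEq, ae_restrict_iff' hO.measurableSet, ae_iff] at h0
  have hU : IsOpen (O ∩ {p : ℝ × ℝ | p.1 ^ 2 + p.2 ^ 2 < t}) :=
    hO.inter (isOpen_lt (by fun_prop) (by fun_prop))
  refine (hU.measure_pos volume ⟨p, hp, hpt⟩).ne' (measure_mono_null ?_ h0)
  rintro q ⟨hq, hq2⟩
  simp only [Set.mem_setOf_eq, Pi.zero_apply, Classical.not_imp]
  have hq2 : q.1 ^ 2 + q.2 ^ 2 < t := hq2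
  exact ⟨hq, (hk_pos (by linarith)).ne'⟩

lemma dm_meas {A : Set (ℝ × ℝ)} : Measurable (fun t => dm t A) := by
  have hm := hk_meas
  unfold dm
  have : Measurable (fun q : ℝ × (ℝ × ℝ) => hk (q.1 - (q.2.1 ^ 2 + q.2.2 ^ 2))) := by fun_prop
  exact this.lintegral_prod_right'

noncomputable def kk (n : ℕ) (t : ℝ) : ℝ≥0∞ := ∫⁻ z : Fin n → ℝ, hk (1 - ∑ i, z i ^ 2 - t)

lemma kk_meas (n : ℕ) : Measurable (kk n) := by
  have hm := hk_meas
  unfold kk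
  have : Measurable (fun q : ℝ × (Fin n → ℝ) => hk (1 - ∑ i, q.2 i ^ 2 - q.1)) := by fun_prop
  exact this.lintegral_prod_right'

lemma kk_pos (n : ℕ) {t : ℝ} (ht : t < 1) : kk n t ≠ 0 := by
  have hm := hk_meas
  intro h0
  unfold kk at h0
  rw [lintegral_eq_zero_iff (by fun_prop), Filter.EventuallyEq, ae_iff] at h0
  have hU : IsOpen {z : Fin n → ℝ | ∑ i, z i ^ 2 < 1 - t} := isOpen_lt (by fun_prop) (by fun_prop)
  refine (hU.measure_pos volume ⟨0, by simp [ht]⟩).ne' (measure_mono_null ?_ h0)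
  intro z hz
  have hz : ∑ i, z i ^ 2 < 1 - t := hz
  exact (hk_pos (by linarith)).ne'

open Classical in
lemma vol_formula (n : ℕ) {A : Set (ℝ × ℝ)} (hA : MeasurableSet A) :
    ENNReal.ofReal Real.pi *
      volume {q : (ℝ × ℝ) × (Fin n → ℝ) | q.1 ∈ A ∧ q.1.1 ^ 2 + q.1.2 ^ 2 + ∑ i, q.2 i ^ 2 < 1}
      = ∫⁻ t, kk n t * dm t A := by
  have hm := hk_meas
  set S := {q : (ℝ × ℝ) × (Fin n → ℝ) | q.1 ∈ A ∧ q.1.1 ^ 2 + q.1.2 ^ 2 + ∑ i, q.2 i ^ 2 < 1} with hSdef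
  have hS2 : MeasurableSet
      {q : (ℝ × ℝ) × (Fin n → ℝ) | q.1.1 ^ 2 + q.1.2 ^ 2 + ∑ i, q.2 i ^ 2 < 1} :=
    measurableSet_lt (by fun_prop) (by fun_prop)
  have hS : MeasurableSet S := (hA.preimage measurable_fst).inter hS2
  have hind : Measurable (A.indicator (1 : ℝ × ℝ → ℝ≥0∞)) := measurable_one.indicator hA
  rw [← lintegral_indicator_one hS, ← lintegral_const_mul _ (measurable_one.indicator hS)]
  have key : ∀ q : (ℝ × ℝ) × (Fin n → ℝ), ENNReal.ofReal Real.pi * S.indicator 1 q =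
      ∫⁻ t, (A.indicator 1 q.1 * hk (t - (q.1.1 ^ 2 + q.1.2 ^ 2))) * hk (1 - ∑ i, q.2 i ^ 2 - t) := by
    intro q
    by_cases hq : q.1 ∈ A
    · simp only [Set.indicator_of_mem hq, Pi.one_apply, one_mul]
      simp_rw [mul_comm (hk (_ - (q.1.1 ^ 2 + q.1.2 ^ 2)))]
      rw [K_eq, Set.indicator_apply]
      have : q ∈ S ↔ q.1.1 ^ 2 + q.1.2 ^ 2 < 1 - ∑ i, q.2 i ^ 2 := by
        constructor
        · rintro ⟨_, h⟩; linarith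
        · intro h; exact ⟨hq, by linarith⟩
      simp [this]
    · have : q ∉ S := fun h => hq h.1
      simp [hq, this]
  simp_rw [key]
  rw [lintegral_lintegral_swap (by fun_prop)]
  apply lintegral_congr
  intro t
  rw [Measure.volume_eq_prod, lintegral_prod_mul (f := fun p : ℝ × ℝ => A.indicator 1 p * hk (t - (p.1 ^ 2 + p.2 ^ 2)))
    (g := fun z : Fin n → ℝ => hk (1 - ∑ i, z i ^ 2 - t))
    (Measurable.aemeasurable (by fun_prop)) (Measurable.aemeasurable (by fun_prop)), mul_comm]
  unfold kk dm
  congr 1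
  rw [← lintegral_indicator hA]
  apply lintegral_congr
  intro p
  by_cases hp : p ∈ A <;> simp [hp]

section plane
variable {α β w₁ w₂ c s : ℝ}

lemma meas_A1 (α w : ℝ) : MeasurableSet {p : ℝ × ℝ | |p.1 - α| ≤ w / 2} :=
  (isClosed_le (by fun_prop) (by fun_prop)).measurableSet

lemma meas_A2 (β w c s : ℝ) : MeasurableSet {p : ℝ × ℝ | |c * p.1 + s * p.2 - β| ≤ w / 2} :=
  (isClosed_le (by fun_prop) (by fun_prop)).measurableSet

lemma vol_I (α w : ℝ) : volume {x : ℝ | |x - α| ≤ w / 2} = ENNReal.ofReal w := by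
  have : {x : ℝ | |x - α| ≤ w / 2} = Set.Icc (α - w / 2) (α + w / 2) := by
    ext x; simp only [Set.mem_setOf_eq, abs_le, Set.mem_Icc]
    constructor <;> rintro ⟨h1, h2⟩ <;> constructor <;> linarith
  rw [this, Real.volume_Icc]; congr 1; ring

lemma meas_I (α w : ℝ) : MeasurableSet {x : ℝ | |x - α| ≤ w / 2} :=
  (isClosed_le (by fun_prop) (by fun_prop)).measurableSet

lemma dm_A2_le (t β w : ℝ) (h : c ^ 2 + s ^ 2 = 1) :
    dm t {p : ℝ × ℝ | |c * p.1 + s * p.2 - β| ≤ w / 2} ≤ ENNReal.ofReal Real.pi * ENNReal.ofReal w := by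
  have := dm_strip_rot t {x : ℝ | |x - β| ≤ w / 2} (meas_I β w) h
  simp only [Set.mem_setOf_eq] at this
  rw [this]
  have := dm_strip t {x : ℝ | |x - β| ≤ w / 2} (meas_I β w)
  simp only [Set.mem_setOf_eq] at this
  rw [this, ← vol_I β w]
  gcongr
  exact Set.inter_subset_left

lemma dm_A1_le (t α w : ℝ) :
    dm t {p : ℝ × ℝ | |p.1 - α| ≤ w / 2} ≤ ENNReal.ofReal Real.pi * ENNReal.ofReal w := by
  have := dm_A2_le (c := 1) (s := 0) t α w (by norm_num)
  simpa using this

lemma dm_A_eq {t r : ℝ} (hr : 0 < r) (ht : r ^ 2 < t) :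
    dm t {p : ℝ × ℝ | |p.1| ≤ r} = ENNReal.ofReal Real.pi * ENNReal.ofReal (2 * r) := by
  have hI : MeasurableSet {x : ℝ | |x| ≤ r} := (isClosed_le (by fun_prop) (by fun_prop)).measurableSet
  have := dm_strip t {x : ℝ | |x| ≤ r} hI
  simp only [Set.mem_setOf_eq] at this
  have h2 := vol_I 0 (2 * r)
  simp only [sub_zero, mul_div_cancel_left₀ r (two_ne_zero)] at h2
  rw [this, ← h2]
  congr 2
  ext x
  simp only [Set.mem_inter_iff, Set.mem_setOf_eq, and_iff_left_iff_imp]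
  intro hx
  have : x ^ 2 ≤ r ^ 2 := sq_le_sq' (by linarith [abs_le.1 hx]) (abs_le.1 hx).2
  linarith

lemma dm_A_small {t r : ℝ} (hr : 0 < r) (ht : t ≤ r ^ 2) :
    dm t {p : ℝ × ℝ | |p.1| ≤ r} = dm t Set.univ := by
  apply dm_disc _ _ (isClosed_le (by fun_prop) (by fun_prop)).measurableSet
  intro p hp
  exact abs_le_of_sq_le_sq (by nlinarith [sq_nonneg p.2]) hr.le

lemma dm_le (t : ℝ) (h1 : 0 < w₁) (h2 : 0 < w₂) (h : c ^ 2 + s ^ 2 = 1) :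
    dm t ({p : ℝ × ℝ | |p.1 - α| ≤ w₁ / 2} ∪ {p : ℝ × ℝ | |c * p.1 + s * p.2 - β| ≤ w₂ / 2})
      ≤ dm t {p : ℝ × ℝ | |p.1| ≤ (w₁ + w₂) / 2} := by
  rcases le_or_gt t (((w₁ + w₂) / 2) ^ 2) with ht | ht
  · rw [dm_A_small (by linarith) ht]
    exact dm_mono _ (Set.subset_univ _)
  · rw [dm_A_eq (by linarith) ht, mul_div_cancel₀ _ (two_ne_zero), ENNReal.ofReal_add h1.le h2.le, mul_add]
    exact (lintegral_union_le _ _ _).trans (add_le_add (dm_A1_le _ _ _) (dm_A2_le _ _ _ h))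

/-- the equality analysis in the plane: covering -/
lemma cover_of_eq (h1 : 0 < w₁) (h2 : 0 < w₂) (hw : w₁ + w₂ < 2)
    (hae : ∀ᵐ t : ℝ, t < 1 →
      dm t ({p : ℝ × ℝ | |p.1 - α| ≤ w₁ / 2} ∪ {p : ℝ × ℝ | |c * p.1 + s * p.2 - β| ≤ w₂ / 2})
      = dm t {p : ℝ × ℝ | |p.1| ≤ (w₁ + w₂) / 2}) (p : ℝ × ℝ)
    (hp : p.1 ^ 2 + p.2 ^ 2 < ((w₁ + w₂) / 2) ^ 2) :
    |p.1 - α| ≤ w₁ / 2 ∨ |c * p.1 + s * p.2 - β| ≤ w₂ / 2 := by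
  by_contra hcon
  have hex : ∃ t ∈ Set.Ioo (p.1 ^ 2 + p.2 ^ 2) (((w₁ + w₂) / 2) ^ 2), t < 1 →
      dm t ({p : ℝ × ℝ | |p.1 - α| ≤ w₁ / 2} ∪ {p : ℝ × ℝ | |c * p.1 + s * p.2 - β| ≤ w₂ / 2})
      = dm t {p : ℝ × ℝ | |p.1| ≤ (w₁ + w₂) / 2} := by
    by_contra hno
    push Not at hno
    refine (isOpen_Ioo.measure_pos volume (Set.nonempty_Ioo.2 hp)).ne' (measure_mono_null ?_ (ae_iff.1 hae))
    intro t ht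
    simp only [Set.mem_setOf_eq, Classical.not_imp]
    exact hno t ht
  obtain ⟨t, ⟨ht1, ht2⟩, ht⟩ := hex
  have ht := ht (by nlinarith)
  rw [dm_A_small (by linarith) ht2.le] at ht
  set U := {p : ℝ × ℝ | |p.1 - α| ≤ w₁ / 2} ∪ {p : ℝ × ℝ | |c * p.1 + s * p.2 - β| ≤ w₂ / 2} with hU
  have hUc : IsClosed U := (isClosed_le (by fun_prop) (by fun_prop)).union (isClosed_le (by fun_prop) (by fun_prop))
  have hadd : dm t U + dm t Uᶜ = dm t Set.univ := by
    unfold dm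
    rw [lintegral_add_compl _ hUc.measurableSet, setLIntegral_univ]
  have hne : dm t Uᶜ = 0 := by
    rw [← ht] at hadd
    have hfin : dm t U ≠ ⊤ := by rw [ht]; exact (dm_univ_lt t).ne
    exact (ENNReal.add_right_inj hfin).1 (by rw [hadd, add_zero])
  exact dm_pos t hUc.isOpen_compl (p := p) hcon ht1 hne

/-- the equality analysis in the plane: disjoint interiors -/
lemma disj_of_eq (h1 : 0 < w₁) (h2 : 0 < w₂) (hw : w₁ + w₂ < 2) (h : c ^ 2 + s ^ 2 = 1)
    (hae : ∀ᵐ t : ℝ, t < 1 →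
      dm t ({p : ℝ × ℝ | |p.1 - α| ≤ w₁ / 2} ∪ {p : ℝ × ℝ | |c * p.1 + s * p.2 - β| ≤ w₂ / 2})
      = dm t {p : ℝ × ℝ | |p.1| ≤ (w₁ + w₂) / 2}) (p : ℝ × ℝ)
    (hp : p.1 ^ 2 + p.2 ^ 2 < 1) :
    ¬ (|p.1 - α| < w₁ / 2 ∧ |c * p.1 + s * p.2 - β| < w₂ / 2) := by
  intro hcon
  have hr1 : ((w₁ + w₂) / 2) ^ 2 < 1 := by nlinarith
  have hex : ∃ t ∈ Set.Ioo (max (((w₁ + w₂) / 2) ^ 2) (p.1 ^ 2 + p.2 ^ 2)) 1, t < 1 →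
      dm t ({p : ℝ × ℝ | |p.1 - α| ≤ w₁ / 2} ∪ {p : ℝ × ℝ | |c * p.1 + s * p.2 - β| ≤ w₂ / 2})
      = dm t {p : ℝ × ℝ | |p.1| ≤ (w₁ + w₂) / 2} := by
    by_contra hno
    push Not at hno
    refine (isOpen_Ioo.measure_pos volume (Set.nonempty_Ioo.2 (max_lt hr1 hp))).ne' (measure_mono_null ?_ (ae_iff.1 hae))
    intro t ht
    simp only [Set.mem_setOf_eq, Classical.not_imp]
    exact hno t ht
  obtain ⟨t, ⟨ht1, ht2⟩, ht⟩ := hex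
  have ht := ht ht2
  obtain ⟨ht3, ht4⟩ := max_lt_iff.1 ht1
  rw [dm_A_eq (by linarith) ht3, mul_div_cancel₀ _ (two_ne_zero), ENNReal.ofReal_add h1.le h2.le, mul_add] at ht
  have hb1 := dm_A1_le t α w₁
  have hb2 := dm_A2_le t β w₂ h
  have hm2 := meas_A2 β w₂ c s
  set A1 := {p : ℝ × ℝ | |p.1 - α| ≤ w₁ / 2}
  set A2 := {p : ℝ × ℝ | |c * p.1 + s * p.2 - β| ≤ w₂ / 2}
  have hadd : dm t (A1 ∪ A2) + dm t (A1 ∩ A2) = dm t A1 + dm t A2 := by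
    have e : ∀ X : Set (ℝ × ℝ), MeasurableSet X → dm t X =
        (volume.withDensity (fun p : ℝ × ℝ => hk (t - (p.1 ^ 2 + p.2 ^ 2)))) X := fun X hX => by
      rw [withDensity_apply _ hX]; rfl
    have hm1 := meas_A1 α w₁
    rw [e _ (hm1.union hm2), e _ (hm1.inter hm2), e _ hm1, e _ hm2, measure_union_add_inter _ hm2]
  have hne : dm t (A1 ∩ A2) = 0 := by
    have hle : dm t (A1 ∪ A2) + dm t (A1 ∩ A2) ≤ dm t (A1 ∪ A2) + 0 := by
      rw [hadd, ht, add_zero]; exact add_le_add hb1 hb2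
    have hfin : dm t (A1 ∪ A2) ≠ ⊤ := ((dm_mono t (Set.subset_univ _)).trans_lt (dm_univ_lt t)).ne
    simpa using (ENNReal.add_le_add_iff_left hfin).1 hle
  have hO : IsOpen {p : ℝ × ℝ | |p.1 - α| < w₁ / 2 ∧ |c * p.1 + s * p.2 - β| < w₂ / 2} :=
    (isOpen_lt (f := fun p : ℝ × ℝ => |p.1 - α|) (g := fun _ => w₁ / 2)
      (by fun_prop) (by fun_prop)).inter
    (isOpen_lt (f := fun p : ℝ × ℝ => |c * p.1 + s * p.2 - β|) (g := fun _ => w₂ / 2)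
      (by fun_prop) (by fun_prop))
  refine dm_pos t hO hcon ht4 (le_antisymm ((dm_mono t ?_).trans hne.le) bot_le)
  rintro q ⟨hq1, hq2⟩
  exact ⟨hq1.le, hq2.le⟩

end plane

lemma edge_eq {α β w₁ w₂ c s r e σ y : ℝ} (h1 : 0 < w₁)
    (hr1 : r < 1) (hr0 : 0 < r) (hσ : σ = 1 ∨ σ = -1) (he : e = α + σ * (w₁ / 2))
    (hcov : ∀ x y : ℝ, x ^ 2 + y ^ 2 < r ^ 2 → |x - α| ≤ w₁ / 2 ∨ |c * x + s * y - β| ≤ w₂ / 2)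
    (hdis : ∀ x y : ℝ, x ^ 2 + y ^ 2 < 1 → ¬ (|x - α| < w₁ / 2 ∧ |c * x + s * y - β| < w₂ / 2))
    (hy : e ^ 2 + y ^ 2 < r ^ 2) : |c * e + s * y - β| = w₂ / 2 := by
  have hev : ∀ k : ℝ, ∀ᶠ ε in nhdsWithin (0 : ℝ) (Set.Ioi 0), (e + k * ε) ^ 2 + y ^ 2 < r ^ 2 := by
    intro k
    apply Filter.Eventually.filter_mono nhdsWithin_le_nhds
    have : ContinuousAt (fun ε : ℝ => (e + k * ε) ^ 2 + y ^ 2) 0 := by fun_prop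
    exact this.eventually_lt (by fun_prop) (by simpa using hy)
  have hposε : ∀ᶠ ε in nhdsWithin (0 : ℝ) (Set.Ioi 0), (0 : ℝ) < ε := self_mem_nhdsWithin
  apply le_antisymm
  · by_contra hc
    push Not at hc
    have h2 : ∀ᶠ ε in nhdsWithin (0 : ℝ) (Set.Ioi 0), w₂ / 2 < |c * (e + σ * ε) + s * y - β| := by
      apply Filter.Eventually.filter_mono nhdsWithin_le_nhds
      have : ContinuousAt (fun ε : ℝ => |c * (e + σ * ε) + s * y - β|) 0 := by fun_prop
      exact ContinuousAt.eventually_lt (by fun_prop) this (by simpa using hc)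
    obtain ⟨ε, ha, hb, hε⟩ := ((hev σ).and (h2.and hposε)).exists
    rcases hcov _ _ ha with h | h
    · rw [abs_le] at h
      rcases hσ with rfl | rfl <;> linarith
    · linarith
  · by_contra hc
    push Not at hc
    have h2 : ∀ᶠ ε in nhdsWithin (0 : ℝ) (Set.Ioi 0), |c * (e + -σ * ε) + s * y - β| < w₂ / 2 := by
      apply Filter.Eventually.filter_mono nhdsWithin_le_nhds
      have : ContinuousAt (fun ε : ℝ => |c * (e + -σ * ε) + s * y - β|) 0 := by fun_prop
      exact ContinuousAt.eventually_lt this (by fun_prop) (by simpa using hc)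
    have h3 : ∀ᶠ ε in nhdsWithin (0 : ℝ) (Set.Ioi 0), ε < w₁ :=
      Filter.Eventually.filter_mono nhdsWithin_le_nhds (eventually_lt_nhds h1)
    obtain ⟨ε, ha, hb, hε, h3⟩ := ((hev (-σ)).and (h2.and (hposε.and h3))).exists
    refine hdis (e + -σ * ε) y (by nlinarith) ⟨?_, hb⟩
    rw [abs_lt]
    rcases hσ with rfl | rfl <;> constructor <;> linarith

lemma slope_zero {α β w₁ w₂ c s : ℝ} (h1 : 0 < w₁) (h2 : 0 < w₂) (hw : w₁ + w₂ < 2)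
    (h : c ^ 2 + s ^ 2 = 1)
    (hcov : ∀ x y : ℝ, x ^ 2 + y ^ 2 < ((w₁ + w₂) / 2) ^ 2 →
      |x - α| ≤ w₁ / 2 ∨ |c * x + s * y - β| ≤ w₂ / 2)
    (hdis : ∀ x y : ℝ, x ^ 2 + y ^ 2 < 1 → ¬ (|x - α| < w₁ / 2 ∧ |c * x + s * y - β| < w₂ / 2)) :
    s = 0 := by
  obtain ⟨r, hr⟩ : ∃ r, r = (w₁ + w₂) / 2 := ⟨_, rfl⟩
  rw [← hr] at hcov
  have hedge : ∃ σ e : ℝ, (σ = 1 ∨ σ = -1) ∧ e = α + σ * (w₁ / 2) ∧ -r < e ∧ e < r := by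
    by_contra hno
    push Not at hno
    have ha := hno 1 _ (Or.inl rfl) rfl
    have hb := hno (-1) _ (Or.inr rfl) rfl
    have hmiss : ∀ x, -r < x → x < r → ¬ |x - α| ≤ w₁ / 2 := by
      intro x hx1 hx2 hx
      rw [abs_le] at hx
      by_cases hb1 : -r < α + -1 * (w₁ / 2)
      · have := hb hb1; linarith
      · have := ha (by linarith)
        linarith
    have hP2 : ∀ τ, -r < τ → τ < r → |τ - β| ≤ w₂ / 2 := by
      intro τ hτ1 hτ2
      have hτ : τ ^ 2 < r ^ 2 := sq_lt_sq' hτ1 hτ2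
      have e1 : (τ * c) ^ 2 + (τ * s) ^ 2 = τ ^ 2 := by linear_combination τ ^ 2 * h
      have hl := abs_lt_of_sq_lt_sq (a := τ * c) (b := r) (by nlinarith [sq_nonneg (τ * s)]) (by linarith)
      rw [abs_lt] at hl
      rcases hcov (τ * c) (τ * s) (by linarith) with h' | h'
      · exact absurd h' (hmiss _ hl.1 hl.2)
      · have : c * (τ * c) + s * (τ * s) - β = τ - β := by linear_combination τ * h
        rwa [this] at h'
    have q1 := hP2 ((w₂ / 2 + r) / 2) (by linarith) (by linarith)
    have q2 := hP2 (-((w₂ / 2 + r) / 2)) (by linarith) (by linarith)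
    rw [abs_le] at q1 q2
    linarith
  obtain ⟨σ, e, hσ, he, he1, he2⟩ := hedge
  have heq := fun y hy => edge_eq (y := y) h1 (by linarith : r < 1) (by linarith) hσ he hcov hdis hy
  have hlt : e ^ 2 < r ^ 2 := sq_lt_sq' he1 he2
  obtain ⟨δ, hδ, hδ2⟩ : ∃ δ : ℝ, 0 < δ ∧ δ ^ 2 = (r ^ 2 - e ^ 2) / 2 :=
    ⟨√((r ^ 2 - e ^ 2) / 2), Real.sqrt_pos.2 (by linarith), Real.sq_sqrt (by linarith)⟩
  have g0 := heq 0 (by linarith)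
  have g1 := heq δ (by linarith)
  have g2 := heq (-δ) (by nlinarith)
  have g0' := congrArg (· ^ 2) g0
  have g1' := congrArg (· ^ 2) g1
  have g2' := congrArg (· ^ 2) g2
  simp only [sq_abs] at g0' g1' g2'
  have : (s * δ) ^ 2 = 0 := by linear_combination (g1' + g2') / 2 - g0'
  have := pow_eq_zero_iff (two_ne_zero) |>.1 this
  exact (mul_eq_zero.1 this).resolve_right hδ.ne'

lemma interval_aux {a₁ b₁ a₂ b₂ r : ℝ} (h1 : a₁ < b₁) (h2 : a₂ < b₂) (hr : (b₁ - a₁) + (b₂ - a₂) = 2 * r)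
    (h12 : a₁ ≤ a₂)
    (hcov : ∀ x, -r < x → x < r → (a₁ ≤ x ∧ x ≤ b₁) ∨ (a₂ ≤ x ∧ x ≤ b₂)) (x : ℝ) :
    ((a₁ ≤ x ∧ x ≤ b₁) ∨ (a₂ ≤ x ∧ x ≤ b₂)) ↔ -r ≤ x ∧ x ≤ r := by
  have c1 : a₁ ≤ -r := by
    by_contra hc
    have m1 := min_le_left a₁ r
    have m2 := min_le_right a₁ r
    have m3 : -r < min a₁ r := lt_min (by linarith) (by linarith)
    rcases hcov ((-r + min a₁ r) / 2) (by linarith) (by linarith) with h | h <;> linarith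
  have c2 : b₁ < r := by linarith
  have c3 : r ≤ b₂ := by
    by_contra hc
    have m1 := le_max_left (max b₁ b₂) (-r)
    have m2 := le_max_right (max b₁ b₂) (-r)
    have m4 := le_max_left b₁ b₂
    have m5 := le_max_right b₁ b₂
    have m3 : max (max b₁ b₂) (-r) < r := max_lt (max_lt (by linarith) (by linarith)) (by linarith)
    rcases hcov ((r + max (max b₁ b₂) (-r)) / 2) (by linarith) (by linarith) with h | h <;> linarith
  have c4 : -r < a₂ := by linarith
  have c5 : a₂ ≤ b₁ := by
    by_contra hc
    have m1 := le_max_left b₁ (-r)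
    have m2 := le_max_right b₁ (-r)
    have m3 := min_le_left a₂ r
    have m4 := min_le_right a₂ r
    have m5 : max b₁ (-r) < min a₂ r := max_lt (lt_min (by linarith) c2) (lt_min c4 (by linarith))
    rcases hcov ((max b₁ (-r) + min a₂ r) / 2) (by linarith) (by linarith) with h | h <;> linarith
  constructor
  · rintro (h | h) <;> constructor <;> linarith
  · rintro ⟨h, h'⟩
    rcases le_total x b₁ with hx | hx
    · left; constructor <;> linarith
    · right; constructor <;> linarith

lemma interval_lem {α β w₁ w₂ : ℝ} (h1 : 0 < w₁) (h2 : 0 < w₂)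
    (hcov : ∀ x, |x| < (w₁ + w₂) / 2 → |x - α| ≤ w₁ / 2 ∨ |x - β| ≤ w₂ / 2) (x : ℝ) :
    (|x - α| ≤ w₁ / 2 ∨ |x - β| ≤ w₂ / 2) ↔ |x| ≤ (w₁ + w₂) / 2 := by
  have e : ∀ α w x : ℝ, |x - α| ≤ w / 2 ↔ α - w / 2 ≤ x ∧ x ≤ α + w / 2 := by
    intro α w x
    rw [abs_le]
    constructor <;> rintro ⟨h, h'⟩ <;> constructor <;> linarith
  simp only [e, abs_lt, and_imp] at hcov ⊢
  rw [abs_le]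
  rcases le_total (α - w₁ / 2) (β - w₂ / 2) with h | h
  · exact interval_aux (by linarith) (by linarith) (by ring) h hcov x
  · rw [or_comm]
    exact interval_aux (by linarith) (by linarith) (by ring) h (fun x h h' => (hcov x h h').symm) x

lemma plane_concl {α β w₁ w₂ c s : ℝ} (h1 : 0 < w₁) (h2 : 0 < w₂) (hw : w₁ + w₂ < 2)
    (h : c ^ 2 + s ^ 2 = 1)
    (hae : ∀ᵐ t : ℝ, t < 1 →
      dm t ({p : ℝ × ℝ | |p.1 - α| ≤ w₁ / 2} ∪ {p : ℝ × ℝ | |c * p.1 + s * p.2 - β| ≤ w₂ / 2})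
      = dm t {p : ℝ × ℝ | |p.1| ≤ (w₁ + w₂) / 2}) (x y : ℝ) :
    (|x - α| ≤ w₁ / 2 ∨ |c * x + s * y - β| ≤ w₂ / 2) ↔ |x| ≤ (w₁ + w₂) / 2 := by
  have hcov := fun x y => cover_of_eq h1 h2 hw hae (x, y)
  have hdis := fun x y => disj_of_eq h1 h2 hw h hae (x, y)
  simp only at hcov hdis
  obtain rfl := slope_zero h1 h2 hw h hcov hdis
  have hc : |c| = 1 := by
    rw [← sq_eq_sq₀ (abs_nonneg c) zero_le_one, sq_abs]; linarith
  have e : ∀ x y : ℝ, |c * x + 0 * y - β| = |x - c * β| := by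
    intro x y
    have : c * x + 0 * y - β = c * (x - c * β) := by linear_combination (β) * h
    rw [this, abs_mul, hc, one_mul]
  simp only [e] at hcov ⊢
  exact interval_lem h1 h2 (fun x hx => hcov x 0 (by
    rw [← sq_abs x]; nlinarith [abs_nonneg x])) x

lemma integral_concl (n : ℕ) {A B : Set (ℝ × ℝ)}
    (hle : ∀ t, dm t A ≤ dm t B) (hfin : ∫⁻ t, kk n t * dm t B ≠ ⊤)
    (heq : ∫⁻ t, kk n t * dm t A = ∫⁻ t, kk n t * dm t B) :
    ∀ᵐ t : ℝ, t < 1 → dm t A = dm t B := by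
  have hmB : Measurable fun t => kk n t * dm t B := (kk_meas n).mul dm_meas
  have h1 := ae_eq_of_ae_le_of_lintegral_le (μ := volume) (f := fun t => kk n t * dm t A)
    (g := fun t => kk n t * dm t B) (Filter.Eventually.of_forall fun t => mul_le_mul_right (hle t) _)
    (by rw [heq]; exact hfin) hmB.aemeasurable heq.ge
  filter_upwards [h1, ae_lt_top hmB hfin] with t ht ht2 ht1
  by_cases hk : kk n t = ⊤
  · have hB : dm t B = 0 := by
      by_contra hB
      simp [hk, ENNReal.top_mul hB] at ht2
    exact le_antisymm (hle t) (by simp [hB])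
  · exact (ENNReal.mul_right_inj (kk_pos n ht1) hk).1 ht

lemma exists_basis (n : ℕ) (u₁ u₂ : EuclideanSpace ℝ (Fin (n + 2))) (h1 : ‖u₁‖ = 1) (h2 : ‖u₂‖ = 1) :
    ∃ (b : OrthonormalBasis (Fin 2 ⊕ Fin n) ℝ (EuclideanSpace ℝ (Fin (n + 2)))) (c s : ℝ),
      c ^ 2 + s ^ 2 = 1 ∧ u₁ = b (Sum.inl 0) ∧ u₂ = c • b (Sum.inl 0) + s • b (Sum.inl 1) := by
  have hcard : Module.finrank ℝ (EuclideanSpace ℝ (Fin (n + 2))) = Fintype.card (Fin 2 ⊕ Fin n) := by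
    simp [add_comm]
  suffices H : ∃ (b : OrthonormalBasis (Fin 2 ⊕ Fin n) ℝ (EuclideanSpace ℝ (Fin (n + 2)))) (c s : ℝ),
      u₁ = b (Sum.inl 0) ∧ u₂ = c • b (Sum.inl 0) + s • b (Sum.inl 1) by
    obtain ⟨b, c, s, e1, e2⟩ := H
    refine ⟨b, c, s, ?_, e1, e2⟩
    have h00 : ⟪b (Sum.inl 0), b (Sum.inl 0)⟫ = 1 := by simp
    have h11 : ⟪b (Sum.inl 1), b (Sum.inl 1)⟫ = 1 := by simp
    have h01 : ⟪b (Sum.inl 0), b (Sum.inl 1)⟫ = 0 := by simp [b.inner_eq_ite]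
    have h10 : ⟪b (Sum.inl 1), b (Sum.inl 0)⟫ = 0 := by simp [b.inner_eq_ite]
    have : ⟪u₂, u₂⟫ = 1 := by rw [real_inner_self_eq_norm_sq, h2]; norm_num
    rw [e2] at this
    simp only [inner_add_left, inner_add_right, inner_smul_left, inner_smul_right, h00, h11, h01, h10] at this
    simp at this
    linarith
  have h11 : ⟪u₁, u₁⟫ = 1 := by rw [real_inner_self_eq_norm_sq, h1]; norm_num
  by_cases hv : u₂ - ⟪u₁, u₂⟫ • u₁ = 0
  · obtain ⟨b, hb⟩ := Orthonormal.exists_orthonormalBasis_extension_of_card_eq hcard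
      (v := fun _ => u₁) (s := {Sum.inl 0}) (by
        rw [orthonormal_iff_ite]
        rintro ⟨i, hi⟩ ⟨j, hj⟩
        obtain rfl : i = Sum.inl 0 := hi
        obtain rfl : j = Sum.inl 0 := hj
        simp [h11, h1])
    have e1 := hb (Sum.inl 0) rfl
    refine ⟨b, ⟪u₁, u₂⟫, 0, e1.symm, ?_⟩
    rw [e1, zero_smul, add_zero]
    exact sub_eq_zero.1 hv
  · set v := u₂ - ⟪u₁, u₂⟫ • u₁ with hvdef
    have hn : ‖v‖ ≠ 0 := norm_ne_zero_iff.2 hv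
    set e := ‖v‖⁻¹ • v with hedef
    have he1 : ‖e‖ = 1 := by rw [hedef, norm_smul, norm_inv, norm_norm, inv_mul_cancel₀ hn]
    have hee : ⟪e, e⟫ = 1 := by rw [real_inner_self_eq_norm_sq, he1]; norm_num
    have hue : ⟪u₁, e⟫ = 0 := by
      rw [hedef, inner_smul_right, hvdef, inner_sub_right, inner_smul_right, h11]; ring
    have heu : ⟪e, u₁⟫ = 0 := by rw [real_inner_comm, hue]
    obtain ⟨b, hb⟩ := Orthonormal.exists_orthonormalBasis_extension_of_card_eq hcard
      (v := Sum.elim ![u₁, e] (fun _ => 0)) (s := {Sum.inl 0, Sum.inl 1}) (by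
        rw [orthonormal_iff_ite]
        rintro ⟨i, hi⟩ ⟨j, hj⟩
        have hi : i = Sum.inl 0 ∨ i = Sum.inl 1 := hi
        have hj : j = Sum.inl 0 ∨ j = Sum.inl 1 := hj
        rcases hi with rfl | rfl <;> rcases hj with rfl | rfl <;> simp [h1, he1, hue, heu])
    have e1 : b (Sum.inl 0) = u₁ := hb (Sum.inl 0) (by simp)
    have e2 : b (Sum.inl 1) = e := hb (Sum.inl 1) (by simp)
    refine ⟨b, ⟪u₁, u₂⟫, ‖v‖, e1.symm, ?_⟩
    rw [e1, e2, hedef, smul_smul, mul_inv_cancel₀ hn, one_smul, hvdef]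
    abel

/-- coordinates -/
noncomputable def coor {n : ℕ} (b : OrthonormalBasis (Fin 2 ⊕ Fin n) ℝ (EuclideanSpace ℝ (Fin (n + 2))))
    (x : EuclideanSpace ℝ (Fin (n + 2))) : (ℝ × ℝ) × (Fin n → ℝ) :=
  ((⟪b (Sum.inl 0), x⟫, ⟪b (Sum.inl 1), x⟫), fun i => ⟪b (Sum.inr i), x⟫)

lemma coor_mp {n : ℕ} (b : OrthonormalBasis (Fin 2 ⊕ Fin n) ℝ (EuclideanSpace ℝ (Fin (n + 2)))) :
    MeasurePreserving (coor b) volume volume := by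
  have m1 := b.measurePreserving_repr
  have m2 := PiLp.volume_preserving_ofLp (Fin 2 ⊕ Fin n)
  have m3 := volume_measurePreserving_sumPiEquivProdPi (fun _ : Fin 2 ⊕ Fin n => ℝ)
  have m4 := (volume_preserving_finTwoArrow ℝ).prod (MeasurePreserving.id (volume : Measure (Fin n → ℝ)))
  have := m4.comp (m3.comp (m2.comp m1))
  have hfun : coor b = Prod.map (MeasurableEquiv.finTwoArrow) id ∘
      (MeasurableEquiv.sumPiEquivProdPi fun _ : Fin 2 ⊕ Fin n => ℝ) ∘ WithLp.ofLp ∘ b.repr := by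
    funext x
    simp [coor, MeasurableEquiv.sumPiEquivProdPi, Equiv.sumPiEquivProdPi, MeasurableEquiv.finTwoArrow,
      MeasurableEquiv.piFinTwo, OrthonormalBasis.repr_apply_apply]
  rw [hfun]
  exact this

lemma coor_norm {n : ℕ} (b : OrthonormalBasis (Fin 2 ⊕ Fin n) ℝ (EuclideanSpace ℝ (Fin (n + 2))))
    (x : EuclideanSpace ℝ (Fin (n + 2))) :
    ‖x‖ ^ 2 = (coor b x).1.1 ^ 2 + (coor b x).1.2 ^ 2 + ∑ i, (coor b x).2 i ^ 2 := by
  rw [← b.repr.norm_map x, EuclideanSpace.real_norm_sq_eq]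
  simp [coor, OrthonormalBasis.repr_apply_apply]

lemma vol_coor {n : ℕ} (b : OrthonormalBasis (Fin 2 ⊕ Fin n) ℝ (EuclideanSpace ℝ (Fin (n + 2))))
    {A : Set (ℝ × ℝ)} (hA : MeasurableSet A) (Q : Set (EuclideanSpace ℝ (Fin (n + 2))))
    (hQ : ∀ x, x ∈ Q ↔ (coor b x).1 ∈ A) :
    ENNReal.ofReal Real.pi * volume (Q ∩ Metric.closedBall 0 1) = ∫⁻ t, kk n t * dm t A := by
  rw [← vol_formula n hA]
  congr 1
  have hS2 : MeasurableSet
      {q : (ℝ × ℝ) × (Fin n → ℝ) | q.1.1 ^ 2 + q.1.2 ^ 2 + ∑ i, q.2 i ^ 2 < 1} :=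
    measurableSet_lt (by fun_prop) (by fun_prop)
  have hS : MeasurableSet {q : (ℝ × ℝ) × (Fin n → ℝ) |
    q.1 ∈ A ∧ q.1.1 ^ 2 + q.1.2 ^ 2 + ∑ i, q.2 i ^ 2 < 1} := (hA.preimage measurable_fst).inter hS2
  rw [← (coor_mp b).measure_preimage hS.nullMeasurableSet]
  have : coor b ⁻¹' {q : (ℝ × ℝ) × (Fin n → ℝ) |
      q.1 ∈ A ∧ q.1.1 ^ 2 + q.1.2 ^ 2 + ∑ i, q.2 i ^ 2 < 1} = Q ∩ Metric.ball 0 1 := by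
    ext x
    simp only [Set.mem_preimage, Set.mem_setOf_eq, Set.mem_inter_iff, ← coor_norm, hQ, mem_ball_zero_iff]
    rw [sq_lt_one_iff₀ (norm_nonneg x)]
  rw [this]
  apply le_antisymm
  · have hsub : Q ∩ Metric.closedBall 0 1 ⊆ (Q ∩ Metric.ball 0 1) ∪ Metric.sphere 0 1 := by
      rintro x ⟨hx, hx1⟩
      rw [← Metric.ball_union_sphere] at hx1
      rcases hx1 with h | h
      · exact Or.inl ⟨hx, h⟩
      · exact Or.inr h
    refine (measure_mono hsub).trans ((measure_union_le _ _).trans ?_)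
    rw [Measure.addHaar_sphere, add_zero]
  · exact measure_mono (Set.inter_subset_inter_right _ Metric.ball_subset_closedBall)

lemma vol_rotate {d : ℕ} (u v : EuclideanSpace ℝ (Fin d)) (h : ‖u‖ = ‖v‖) (r : ℝ) :
    volume ({x | |⟪x, u⟫| ≤ r} ∩ Metric.closedBall 0 1) =
    volume ({x | |⟪x, v⟫| ≤ r} ∩ Metric.closedBall 0 1) := by
  set R := (ℝ ∙ (u - v))ᗮ.reflection with hR
  have hRu : R u = v := Submodule.reflection_sub h
  have hm : MeasurableSet ({x : EuclideanSpace ℝ (Fin d) | |⟪x, v⟫| ≤ r} ∩ Metric.closedBall 0 1) :=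
    ((isClosed_le (by fun_prop) (by fun_prop)).inter Metric.isClosed_closedBall).measurableSet
  rw [← R.measurePreserving.measure_preimage hm.nullMeasurableSet]
  congr 1
  ext x
  have : ⟪R x, v⟫ = ⟪x, u⟫ := by rw [← hRu, R.inner_map_map]
  simp [this]

/-- **Two planks covering part of a ball.** For planks `P₁, P₂` of widths `w₁, w₂` with
`w₁ + w₂ < 2`, the volume of `(P₁ ∪ P₂) ∩ B^d` is at most that of `P ∩ B^d` for a plank
`P` of width `w₁ + w₂` centred at the origin; equality holds only if `P₁ ∪ P₂` is itself
such a plank. -/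
theorem two_planks_in_ball {d : ℕ} (hd : 2 ≤ d)
    (P₁ P₂ : Set (EuclideanSpace ℝ (Fin d))) (w₁ w₂ : ℝ)
    (h₁ : IsPlank P₁ w₁) (h₂ : IsPlank P₂ w₂) (hw : w₁ + w₂ < 2)
    (P : Set (EuclideanSpace ℝ (Fin d)))
    (u : EuclideanSpace ℝ (Fin d)) (hu : ‖u‖ = 1)
    (hP : P = {x | |⟪x, u⟫| ≤ (w₁ + w₂) / 2}) :
    volume ((P₁ ∪ P₂) ∩ Metric.closedBall 0 1) ≤ volume (P ∩ Metric.closedBall 0 1) ∧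
    (volume ((P₁ ∪ P₂) ∩ Metric.closedBall 0 1) = volume (P ∩ Metric.closedBall 0 1) →
      ∃ u' : EuclideanSpace ℝ (Fin d), ‖u'‖ = 1 ∧
        P₁ ∪ P₂ = {x | |⟪x, u'⟫| ≤ (w₁ + w₂) / 2}) := by
  obtain ⟨n, rfl⟩ : ∃ n, d = n + 2 := ⟨d - 2, by omega⟩
  obtain ⟨hw1, u₁, c₁, hu1, hP1⟩ := h₁
  obtain ⟨hw2, u₂, c₂, hu2, hP2⟩ := h₂
  obtain ⟨b, c, s, hcs, e1, e2⟩ := exists_basis n u₁ u₂ hu1 hu2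
  set α := ⟪c₁, u₁⟫ with hα
  set β := ⟪c₂, u₂⟫ with hβ
  have i1 : ∀ x, ⟪x, u₁⟫ = (coor b x).1.1 := fun x => by
    rw [e1, real_inner_comm]; rfl
  have i2 : ∀ x, ⟪x, u₂⟫ = c * (coor b x).1.1 + s * (coor b x).1.2 := fun x => by
    rw [e2, real_inner_comm, inner_add_left, inner_smul_left, inner_smul_left]; rfl
  have hQ : ∀ x, x ∈ P₁ ∪ P₂ ↔ (coor b x).1 ∈ ({p : ℝ × ℝ | |p.1 - α| ≤ w₁ / 2} ∪
      {p : ℝ × ℝ | |c * p.1 + s * p.2 - β| ≤ w₂ / 2}) := fun x => by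
    rw [hP1, hP2]
    simp only [Set.mem_union, Set.mem_setOf_eq, inner_sub_left, i2 x, i1 x, ← hα, ← hβ]
  have f1 := vol_coor b ((meas_A1 α w₁).union (meas_A2 β w₂ c s)) _ hQ
  have hA : MeasurableSet {p : ℝ × ℝ | |p.1| ≤ (w₁ + w₂) / 2} :=
    (isClosed_le (by fun_prop) (by fun_prop)).measurableSet
  have f2 := vol_coor b hA {x | |⟪x, u₁⟫| ≤ (w₁ + w₂) / 2} (fun x => by
    simp only [Set.mem_setOf_eq, i1 x])
  have hPv : volume (P ∩ Metric.closedBall 0 1) =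
      volume ({x | |⟪x, u₁⟫| ≤ (w₁ + w₂) / 2} ∩ Metric.closedBall 0 1) := by
    rw [hP]; exact vol_rotate u u₁ (by rw [hu, hu1]) _
  rw [hPv]
  have hle := fun t => dm_le (α := α) (β := β) t hw1 hw2 hcs
  have hpi0 : ENNReal.ofReal Real.pi ≠ 0 := by simp [Real.pi_pos]
  have hpit : ENNReal.ofReal Real.pi ≠ ⊤ := ENNReal.ofReal_ne_top
  constructor
  · rw [← ENNReal.mul_le_mul_iff_right hpi0 hpit, f1, f2]
    exact lintegral_mono fun t => mul_le_mul_right (hle t) _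
  · intro heq
    rw [← heq, f1] at f2
    have hfin : ∫⁻ t, kk n t * dm t {p : ℝ × ℝ | |p.1| ≤ (w₁ + w₂) / 2} ≠ ⊤ := by
      rw [← f2, ← f1]
      refine ENNReal.mul_ne_top hpit (ne_top_of_le_ne_top ?_ (measure_mono Set.inter_subset_right))
      exact measure_closedBall_lt_top.ne
    have hae := integral_concl n hle hfin f2
    refine ⟨u₁, hu1, ?_⟩
    ext x
    rw [hQ]
    simp only [Set.mem_union, Set.mem_setOf_eq, i1 x]
    exact plane_concl hw1 hw2 hw hcs hae _ _
end

section
/- Let d ≥ 3 and let B^d be the closed unit ball centered at the origin in E^d. Let P_1, P_2, P_3 be planks of widths w_1, w_2, w_3 > 0 with w_1 + w_2 + w_3 < 2, and let P be any plank of width w_1 + w_2 + w_3 having the origin as a center of symmetry (i.e., P = {x : |⟨x,u⟩| ≤ (w_1+w_2+w_3)/2} for some unit vector u). Then vol_d((P_1 ∪ P_2 ∪ P_3) ∩ B^d) ≤ vol_d(P ∩ B^d). -/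
open MeasureTheory
open scoped RealInnerProductSpace

/-- Coordinates. -/
noncomputable def cmap {n : ℕ} {E : Type*} [NormedAddCommGroup E] [InnerProductSpace ℝ E]
    (b : OrthonormalBasis (Unit ⊕ (Fin 2 ⊕ Fin n)) ℝ E) (x : E) :
    ℝ × (EuclideanSpace ℝ (Fin 2) × (Fin n → ℝ)) :=
  (⟪b (Sum.inl ()), x⟫, WithLp.toLp 2 (fun i => ⟪b (Sum.inr (Sum.inl i)), x⟫),
    fun j => ⟪b (Sum.inr (Sum.inr j)), x⟫)

lemma cmap_mp {n : ℕ} {E : Type*} [NormedAddCommGroup E] [InnerProductSpace ℝ E]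
    [FiniteDimensional ℝ E] [MeasurableSpace E] [BorelSpace E]
    (b : OrthonormalBasis (Unit ⊕ (Fin 2 ⊕ Fin n)) ℝ E) :
    MeasurePreserving (cmap b) volume volume := by
  have h1 := b.measurePreserving_repr
  have h2 := PiLp.volume_preserving_ofLp (Unit ⊕ (Fin 2 ⊕ Fin n))
  have h3 := volume_measurePreserving_sumPiEquivProdPi (fun _ : (Unit ⊕ (Fin 2 ⊕ Fin n)) => ℝ)
  have h4 := volume_measurePreserving_sumPiEquivProdPi (fun _ : (Fin 2 ⊕ Fin n) => ℝ)
  have h5 := volume_preserving_piUnique (fun _ : Unit => ℝ)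
  have h6 := PiLp.volume_preserving_toLp (Fin 2)
  have h7 := (h6.prod (MeasurePreserving.id (volume : Measure (Fin n → ℝ)))).comp h4
  have h8 := (h5.prod h7).comp (h3.comp (h2.comp h1))
  refine (congrArg (fun f => MeasurePreserving f volume volume) ?_).mpr h8
  funext x
  simp only [cmap, Function.comp, ← b.repr_apply_apply]
  rfl

lemma cmap_norm {n : ℕ} {E : Type*} [NormedAddCommGroup E] [InnerProductSpace ℝ E]
    (b : OrthonormalBasis (Unit ⊕ (Fin 2 ⊕ Fin n)) ℝ E) (x : E) :
    ‖x‖ ^ 2 = (cmap b x).1 ^ 2 + ‖(cmap b x).2.1‖ ^ 2 + ∑ j, (cmap b x).2.2 j ^ 2 := by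
  rw [← b.sum_sq_norm_inner_right x]
  simp [cmap, EuclideanSpace.norm_sq_eq, Fintype.sum_sum_type]
  ring

lemma annulus (α β : ℝ) :
    volume {y : EuclideanSpace ℝ (Fin 2) | α < ‖y‖ ^ 2 ∧ ‖y‖ ^ 2 ≤ β} =
      ENNReal.ofReal (Real.pi * (max β 0 - max α 0)) := by
  have hpi := Real.pi_pos
  have hball : ∀ γ : ℝ, 0 ≤ γ → volume {y : EuclideanSpace ℝ (Fin 2) | ‖y‖ ^ 2 ≤ γ} =
      ENNReal.ofReal (Real.pi * γ) ∧ MeasurableSet {y : EuclideanSpace ℝ (Fin 2) | ‖y‖ ^ 2 ≤ γ} := by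
    intro γ hγ
    have : {y : EuclideanSpace ℝ (Fin 2) | ‖y‖ ^ 2 ≤ γ} = Metric.closedBall 0 (√γ) := by
      ext y
      simp [Real.le_sqrt (norm_nonneg y) hγ]
    rw [this]
    refine ⟨?_, measurableSet_closedBall⟩
    rw [EuclideanSpace.volume_closedBall_fin_two, ← ENNReal.ofReal_pow (Real.sqrt_nonneg _),
      Real.sq_sqrt hγ, ← ENNReal.ofReal_mul hγ, mul_comm]
  rcases le_total β α with h | h
  · have : {y : EuclideanSpace ℝ (Fin 2) | α < ‖y‖ ^ 2 ∧ ‖y‖ ^ 2 ≤ β} = ∅ := by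
      ext y; simp; intro h1; linarith
    rw [this, measure_empty, ENNReal.ofReal_of_nonpos]
    have : max β 0 ≤ max α 0 := max_le_max_right _ h
    nlinarith
  rcases lt_or_ge β 0 with hb | hb
  · have : {y : EuclideanSpace ℝ (Fin 2) | α < ‖y‖ ^ 2 ∧ ‖y‖ ^ 2 ≤ β} = ∅ := by
      ext y; simp; intro h1; nlinarith [sq_nonneg ‖y‖]
    rw [this, measure_empty, max_eq_right hb.le, max_eq_right (by linarith)]
    simp
  rw [max_eq_left hb]
  rcases lt_or_ge α 0 with ha | ha
  · have : {y : EuclideanSpace ℝ (Fin 2) | α < ‖y‖ ^ 2 ∧ ‖y‖ ^ 2 ≤ β} = {y | ‖y‖ ^ 2 ≤ β} := by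
      ext y; simp; intro h1; nlinarith [sq_nonneg ‖y‖]
    rw [this, (hball β hb).1, max_eq_right ha.le, sub_zero]
  · have : {y : EuclideanSpace ℝ (Fin 2) | α < ‖y‖ ^ 2 ∧ ‖y‖ ^ 2 ≤ β} =
        {y | ‖y‖ ^ 2 ≤ β} \ {y | ‖y‖ ^ 2 ≤ α} := by
      ext y; simp [and_comm]
    rw [this, measure_sdiff (Set.ofPred_subset_ofPred.2 fun y hy => le_trans hy h) (hball α ha).2.nullMeasurableSet
      (by rw [(hball α ha).1]; exact ENNReal.ofReal_ne_top), (hball β hb).1, (hball α ha).1,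
      max_eq_left ha, ← ENNReal.ofReal_sub _ (by positivity), mul_sub]

/-- The outer part of a slab. -/
def slab (n : ℕ) (h a b : ℝ) : Set (ℝ × (EuclideanSpace ℝ (Fin 2) × (Fin n → ℝ))) :=
  {p | (a ≤ p.1 ∧ p.1 ≤ b) ∧ h ^ 2 < p.1 ^ 2 + ‖p.2.1‖ ^ 2 ∧
    p.1 ^ 2 + ‖p.2.1‖ ^ 2 + ∑ j, p.2.2 j ^ 2 ≤ 1}

/-- The inner part. -/
def core (n : ℕ) (h : ℝ) : Set (ℝ × (EuclideanSpace ℝ (Fin 2) × (Fin n → ℝ))) :=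
  {p | p.1 ^ 2 + ‖p.2.1‖ ^ 2 ≤ h ^ 2 ∧ p.1 ^ 2 + ‖p.2.1‖ ^ 2 + ∑ j, p.2.2 j ^ 2 ≤ 1}

/-- The constant. -/
noncomputable def cst (n : ℕ) (h : ℝ) : ENNReal :=
  ∫⁻ z : Fin n → ℝ, ENNReal.ofReal (Real.pi * max (1 - ∑ j, z j ^ 2 - h ^ 2) 0)

lemma slab_meas (n : ℕ) (h a b : ℝ) : MeasurableSet (slab n h a b) := by
  simp only [slab, Set.ofPred_and]
  refine ((measurableSet_le ?_ ?_).inter (measurableSet_le ?_ ?_)).inter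
    ((measurableSet_lt ?_ ?_).inter (measurableSet_le ?_ ?_)) <;> fun_prop

lemma core_meas (n : ℕ) (h : ℝ) : MeasurableSet (core n h) := by
  simp only [core, Set.ofPred_and]
  refine (measurableSet_le ?_ ?_).inter (measurableSet_le ?_ ?_) <;> fun_prop

/-- slices -/
def slice (n : ℕ) (h t : ℝ) : Set (EuclideanSpace ℝ (Fin 2) × (Fin n → ℝ)) :=
  {p | h ^ 2 < t ^ 2 + ‖p.1‖ ^ 2 ∧ t ^ 2 + ‖p.1‖ ^ 2 + ∑ j, p.2 j ^ 2 ≤ 1}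

lemma slice_vol (n : ℕ) (h t : ℝ) : volume (slice n h t) =
    ∫⁻ z : Fin n → ℝ, ENNReal.ofReal
      (Real.pi * (max (1 - ∑ j, z j ^ 2 - t ^ 2) 0 - max (h ^ 2 - t ^ 2) 0)) := by
  have hm : MeasurableSet (slice n h t) := by
    simp only [slice, Set.ofPred_and]
    refine (measurableSet_lt ?_ ?_).inter (measurableSet_le ?_ ?_) <;> fun_prop
  rw [Measure.volume_eq_prod, Measure.prod_apply_symm hm]
  refine lintegral_congr fun z => ?_
  rw [← annulus]
  congr 1
  ext y
  simp only [slice, Set.mem_preimage, Set.mem_ofPred_eq]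
  constructor <;> rintro ⟨h1, h2⟩ <;> constructor <;> linarith

lemma slice_le (n : ℕ) (h t : ℝ) : volume (slice n h t) ≤ cst n h := by
  rw [slice_vol, cst]
  refine lintegral_mono fun z => ENNReal.ofReal_le_ofReal ?_
  refine mul_le_mul_of_nonneg_left ?_ Real.pi_pos.le
  grind

lemma slice_eq (n : ℕ) (h t : ℝ) (ht : t ^ 2 ≤ h ^ 2) : volume (slice n h t) = cst n h := by
  rw [slice_vol, cst]
  refine lintegral_congr fun z => ?_
  rcases le_total (h ^ 2) (1 - ∑ j, z j ^ 2) with h1 | h1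
  · congr 2
    grind
  · rw [ENNReal.ofReal_of_nonpos, ENNReal.ofReal_of_nonpos]
    · rw [max_eq_right (by linarith)]; simp
    · have : max (1 - ∑ j, z j ^ 2 - t ^ 2) 0 - max (h ^ 2 - t ^ 2) 0 ≤ 0 := by grind
      nlinarith [Real.pi_pos]

lemma slab_vol (n : ℕ) (h a b : ℝ) :
    volume (slab n h a b) = ∫⁻ t in Set.Icc a b, volume (slice n h t) := by
  rw [Measure.volume_eq_prod, Measure.prod_apply (slab_meas n h a b),
    ← lintegral_indicator measurableSet_Icc]
  refine lintegral_congr fun t => ?_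
  by_cases ht : t ∈ Set.Icc a b
  · rw [Set.indicator_of_mem ht]
    congr 1
    ext p
    simp only [slab, slice, Set.mem_preimage, Set.mem_ofPred_eq]
    exact ⟨fun h => h.2, fun h => ⟨ht, h⟩⟩
  · rw [Set.indicator_of_notMem ht]
    convert measure_empty (μ := volume)
    ext p
    simp only [slab, Set.mem_preimage, Set.mem_ofPred_eq, Set.mem_empty_iff_false, iff_false]
    exact fun h => ht h.1

lemma slab_le (n : ℕ) (h a b : ℝ) :
    volume (slab n h a b) ≤ cst n h * ENNReal.ofReal (b - a) := by
  rw [slab_vol]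
  refine (lintegral_mono fun t => slice_le n h t).trans ?_
  simp

lemma slab_eq (n : ℕ) (h : ℝ) :
    volume (slab n h (-h) h) = cst n h * ENNReal.ofReal (2 * h) := by
  rw [slab_vol, setLIntegral_congr_fun measurableSet_Icc
    (g := fun _ => cst n h) (fun t ht => slice_eq n h t (sq_le_sq' ht.1 ht.2))]
  simp [two_mul]

lemma exists_L {n : ℕ} {E : Type*} [NormedAddCommGroup E] [InnerProductSpace ℝ E]
    [FiniteDimensional ℝ E] (hE : Module.finrank ℝ E = n + 3) (u : Fin 3 → E) :
    ∃ L : Submodule ℝ E, Module.finrank ℝ L = 3 ∧ ∀ i, u i ∈ L := by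
  let f : Fin (n + 3) → E := fun i => if h : i.1 < 3 then u ⟨i.1, h⟩ else 0
  let b := InnerProductSpace.gramSchmidtOrthonormalBasis (𝕜 := ℝ) (by simp [hE]) f
  let c : Fin 3 → E := fun i => b (Fin.castLE (by omega) i)
  have hc : LinearIndependent ℝ c :=
    b.orthonormal.linearIndependent.comp _ (Fin.castLE_injective _)
  refine ⟨Submodule.span ℝ (Set.range c), by simpa using finrank_span_eq_card hc, fun i => ?_⟩
  rw [← b.sum_repr' (u i)]
  refine Submodule.sum_mem _ fun j _ => ?_
  by_cases hj : j.1 < 3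
  · exact Submodule.smul_mem _ _ (Submodule.subset_span ⟨⟨j.1, hj⟩, rfl⟩)
  · have hf : f (Fin.castLE (by omega) i) = u i := by simp [f]
    have : ⟪b j, u i⟫ = 0 := by
      rw [← hf]
      refine InnerProductSpace.gramSchmidtOrthonormalBasis_inv_triangular _ _ ?_
      rw [Fin.lt_def]; simp; omega
    rw [this, zero_smul]; exact Submodule.zero_mem _

lemma exists_frame {n : ℕ} {E : Type*} [NormedAddCommGroup E] [InnerProductSpace ℝ E]
    [FiniteDimensional ℝ E] (hE : Module.finrank ℝ E = n + 3) (L : Submodule ℝ E)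
    (hL : Module.finrank ℝ L = 3) (v : E) (hv : ‖v‖ = 1) (hvL : v ∈ L) :
    ∃ b : OrthonormalBasis (Unit ⊕ (Fin 2 ⊕ Fin n)) ℝ E, b (Sum.inl ()) = v ∧
      ∀ x, (cmap b x).1 ^ 2 + ‖(cmap b x).2.1‖ ^ 2 = ‖L.orthogonalProjectionOnto x‖ ^ 2 := by
  obtain ⟨c, hc⟩ := Orthonormal.exists_orthonormalBasis_extension_of_card_eq (𝕜 := ℝ)
    (E := L) (ι := Unit ⊕ Fin 2) (by simp [hL]) (v := fun _ => ⟨v, hvL⟩) (s := {Sum.inl ()}) (by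
      refine ⟨fun i => by simpa using hv, fun i j hij => (hij (Subsingleton.elim _ _)).elim⟩)
  let g : Unit ⊕ (Fin 2 ⊕ Fin n) → E := fun i => match i with
    | Sum.inl _ => c (Sum.inl ())
    | Sum.inr (Sum.inl i) => c (Sum.inr i)
    | Sum.inr (Sum.inr _) => 0
  let e : Unit ⊕ Fin 2 → Unit ⊕ (Fin 2 ⊕ Fin n) := Sum.map id Sum.inl
  have hge : ∀ i, g (e i) = c i := by rintro (i | i) <;> rfl
  have hcE : Orthonormal ℝ (fun i => (c i : E)) := c.orthonormal.comp_linearIsometry L.subtypeₗᵢ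
  have hg : Orthonormal ℝ ((Set.range e).domRestrict g) := by
    constructor
    · rintro ⟨_, i, rfl⟩
      simpa [hge] using hcE.1 i
    · rintro ⟨_, i, rfl⟩ ⟨_, j, rfl⟩ hij
      simpa [hge] using hcE.2 (i := i) (j := j) (fun h => hij (by rw [h]))
  obtain ⟨b, hb⟩ := Orthonormal.exists_orthonormalBasis_extension_of_card_eq (𝕜 := ℝ)
    (by simp [hE]; omega) hg
  have hbe : ∀ i, b (e i) = c i := fun i => (hb _ ⟨i, rfl⟩).trans (hge i)
  have hb0 : b (Sum.inl ()) = c (Sum.inl ()) := hbe (Sum.inl ())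
  have hb1 : ∀ i, b (Sum.inr (Sum.inl i)) = c (Sum.inr i) := fun i => hbe (Sum.inr i)
  refine ⟨b, ?_, fun x => ?_⟩
  · rw [hb0, hc _ rfl]
  · rw [← c.sum_sq_norm_inner_right]
    have : ∀ i, ⟪c i, L.orthogonalProjectionOnto x⟫ = ⟪(c i : E), x⟫ := by
      intro i
      simp
    simp [cmap, EuclideanSpace.norm_sq_eq, Fintype.sum_sum_type, this, hb0, hb1]

theorem three_planks_in_ball {d : ℕ} (hd : 3 ≤ d)
    (P₁ P₂ P₃ : Set (EuclideanSpace ℝ (Fin d))) (w₁ w₂ w₃ : ℝ)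
    (h₁ : IsPlank P₁ w₁) (h₂ : IsPlank P₂ w₂) (h₃ : IsPlank P₃ w₃)
    (hw : w₁ + w₂ + w₃ < 2)
    (P : Set (EuclideanSpace ℝ (Fin d)))
    (u : EuclideanSpace ℝ (Fin d)) (hu : ‖u‖ = 1)
    (hP : P = {x | |⟪x, u⟫| ≤ (w₁ + w₂ + w₃) / 2}) :
    volume ((P₁ ∪ P₂ ∪ P₃) ∩ Metric.closedBall 0 1) ≤
      volume (P ∩ Metric.closedBall 0 1) := by
  obtain ⟨n, rfl⟩ : ∃ n, d = n + 3 := ⟨d - 3, by omega⟩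
  obtain ⟨hw1, u₁, c₁, hu1, rfl⟩ := h₁
  obtain ⟨hw2, u₂, c₂, hu2, rfl⟩ := h₂
  obtain ⟨hw3, u₃, c₃, hu3, rfl⟩ := h₃
  set h : ℝ := (w₁ + w₂ + w₃) / 2 with hh
  have hh0 : 0 < h := by positivity
  have hE : Module.finrank ℝ (EuclideanSpace ℝ (Fin (n + 3))) = n + 3 := by simp
  obtain ⟨L, hL, hLu⟩ := exists_L hE ![u₁, u₂, u₃]
  obtain ⟨L', hL', hLu'⟩ := exists_L hE ![u, u, u]
  obtain ⟨b, hb, -⟩ := exists_frame hE L' hL' u hu (hLu' 0)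
  obtain ⟨b₁, hb1, hn1⟩ := exists_frame hE L hL u₁ hu1 (hLu 0)
  obtain ⟨b₂, hb2, hn2⟩ := exists_frame hE L hL u₂ hu2 (hLu 1)
  obtain ⟨b₃, hb3, hn3⟩ := exists_frame hE L hL u₃ hu3 (hLu 2)
  have key : ∀ (v c x : EuclideanSpace ℝ (Fin (n + 3))) (w : ℝ)
      (f : OrthonormalBasis (Unit ⊕ (Fin 2 ⊕ Fin n)) ℝ (EuclideanSpace ℝ (Fin (n + 3)))),
      f (Sum.inl ()) = v →
      (∀ x, (cmap f x).1 ^ 2 + ‖(cmap f x).2.1‖ ^ 2 = ‖L.orthogonalProjectionOnto x‖ ^ 2) →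
      |⟪x - c, v⟫| ≤ w / 2 → ‖x‖ ≤ 1 →
      x ∈ cmap b₁ ⁻¹' core n h ∪
        cmap f ⁻¹' slab n h (⟪v, c⟫ - w / 2) (⟪v, c⟫ + w / 2) := by
    intro v c x w f hf hn hx hx1
    have hx2 : ‖x‖ ^ 2 ≤ 1 := by nlinarith [norm_nonneg x]
    rw [real_inner_comm, inner_sub_right, abs_le] at hx
    rcases le_or_gt (‖L.orthogonalProjectionOnto x‖ ^ 2) (h ^ 2) with hq | hq
    · left
      refine ⟨by rw [hn1]; exact hq, ?_⟩
      rw [← cmap_norm]; exact hx2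
    · right
      refine ⟨?_, by rw [hn]; exact hq, ?_⟩
      · simp only [cmap, hf]
        constructor <;> linarith [hx.1, hx.2]
      · rw [← cmap_norm]; exact hx2
  have sub1 : (({x | |⟪x - c₁, u₁⟫| ≤ w₁ / 2} ∪ {x | |⟪x - c₂, u₂⟫| ≤ w₂ / 2} ∪
      {x | |⟪x - c₃, u₃⟫| ≤ w₃ / 2}) ∩ Metric.closedBall 0 1) ⊆
      cmap b₁ ⁻¹' core n h ∪
      (cmap b₁ ⁻¹' slab n h (⟪u₁, c₁⟫ - w₁ / 2) (⟪u₁, c₁⟫ + w₁ / 2) ∪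
      (cmap b₂ ⁻¹' slab n h (⟪u₂, c₂⟫ - w₂ / 2) (⟪u₂, c₂⟫ + w₂ / 2) ∪
      cmap b₃ ⁻¹' slab n h (⟪u₃, c₃⟫ - w₃ / 2) (⟪u₃, c₃⟫ + w₃ / 2))) := by
    rintro x ⟨(hx | hx) | hx, hx1⟩
    · rcases key _ _ x _ b₁ hb1 hn1 hx (by simpa using hx1) with h | h
      · exact Or.inl h
      · exact Or.inr (Or.inl h)
    · rcases key _ _ x _ b₂ hb2 hn2 hx (by simpa using hx1) with h | h
      · exact Or.inl h
      · exact Or.inr (Or.inr (Or.inl h))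
    · rcases key _ _ x _ b₃ hb3 hn3 hx (by simpa using hx1) with h | h
      · exact Or.inl h
      · exact Or.inr (Or.inr (Or.inr h))
  have sub2 : cmap b ⁻¹' (core n h ∪ slab n h (-h) h) ⊆ P ∩ Metric.closedBall 0 1 := by
    intro x hx
    have hx1 : (cmap b x).1 = ⟪x, u⟫ := by simp only [cmap, hb]; exact real_inner_comm _ _
    have hnx := cmap_norm b x
    rw [hP]
    refine ⟨?_, ?_⟩
    · change |⟪x, u⟫| ≤ h
      rw [← hx1]
      rcases hx with hx | hx
      · exact abs_le_of_sq_le_sq (by nlinarith [hx.1, sq_nonneg ‖(cmap b x).2.1‖]) hh0.le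
      · exact abs_le.2 hx.1
    · have : ‖x‖ ^ 2 ≤ 1 := by
        rw [hnx]
        rcases hx with hx | hx
        · exact hx.2
        · exact hx.2.2
      simpa using (sq_le_one_iff₀ (norm_nonneg x)).1 this
  have hdisj : Disjoint (core n h) (slab n h (-h) h) := by
    rw [Set.disjoint_left]
    intro p h1 h2
    exact absurd h1.1 (not_le.2 h2.2.1)
  have hsl : ∀ (f : OrthonormalBasis (Unit ⊕ (Fin 2 ⊕ Fin n)) ℝ (EuclideanSpace ℝ (Fin (n + 3))))
      (m w : ℝ), volume (cmap f ⁻¹' slab n h (m - w / 2) (m + w / 2)) ≤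
        cst n h * ENNReal.ofReal w := by
    intro f m w
    rw [(cmap_mp f).measure_preimage (slab_meas _ _ _ _).nullMeasurableSet]
    refine (slab_le n h _ _).trans_eq ?_
    congr 2; ring
  calc _ ≤ _ := measure_mono sub1
    _ ≤ volume (core n h) + (cst n h * ENNReal.ofReal w₁ + (cst n h * ENNReal.ofReal w₂ +
        cst n h * ENNReal.ofReal w₃)) := by
      refine (measure_union_le _ _).trans (add_le_add ?_ ((measure_union_le _ _).trans
        (add_le_add (hsl _ _ _) ((measure_union_le _ _).trans
          (add_le_add (hsl _ _ _) (hsl _ _ _))))))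
      rw [(cmap_mp b₁).measure_preimage (core_meas _ _).nullMeasurableSet]
    _ = volume (core n h) + cst n h * ENNReal.ofReal (2 * h) := by
      rw [← mul_add, ← mul_add, ← ENNReal.ofReal_add hw2.le hw3.le,
        ← ENNReal.ofReal_add hw1.le (by positivity)]
      congr 3
      rw [hh]; ring
    _ = volume (cmap b ⁻¹' (core n h ∪ slab n h (-h) h)) := by
      rw [(cmap_mp b).measure_preimage
        ((core_meas _ _).union (slab_meas _ _ _ _)).nullMeasurableSet,
        measure_union hdisj (slab_meas _ _ _ _), slab_eq]
    _ ≤ _ := measure_mono sub2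
end
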